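/- arXiv:1009.6023 — 3 statements merged into one kernel-verified Lean document; each statement's English description precedes it below -/
import Mathlib

section
/- Let $d \geq 1$ and let $1 \leq i_1 \leq i_2 \leq i_3 \leq d$ be integers. There exists an integral polytope $\mathcal{P} \subset \mathbb{R}^d$ of dimension $d$ whose $\delta$-polynomial equals $1 + t^{i_1} + t^{i_2} + t^{i_3}$ if and only if $(i_1,i_2,i_3)$ satisfies $i_3 \leq i_1 + i_2$, $i_1 + i_3 \leq d+1$, $i_2 \leq \lfloor (d+1)/2 \rfloor$, and additionally ($2i_2 \leq i_1 + i_3$ or $i_2 + i_3 \leq d+1$). Moreover, in the affirmative case the polytope can be chosen to be an integral simplex. -/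
open Set Pointwise

/-- The number of lattice points in the `n`-th dilation of `P ⊆ ℝ^N`. -/
noncomputable def ehr {N : ℕ} (P : Set (Fin N → ℝ)) (n : ℕ) : ℕ :=
  Set.ncard {x : Fin N → ℤ | (fun i => (x i : ℝ)) ∈ (n : ℝ) • P}

/-- The `i`-th coefficient of `(1-λ)^(d+1) * (1 + ∑_{n ≥ 1} i(P,n) λ^n)`,
i.e. the `i`-th entry of the δ-vector of a `d`-dimensional integral polytope. -/
noncomputable def deltaVec {N : ℕ} (P : Set (Fin N → ℝ)) (d i : ℕ) : ℤ :=
  ∑ j ∈ Finset.range (i + 1),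
    (-1 : ℤ) ^ (i - j) * (Nat.choose (d + 1) (i - j) : ℤ) * (ehr P j : ℤ)

/-- `P ⊆ ℝ^N` is an integral polytope of dimension `d`. -/
def IsIntegralPolytope {N : ℕ} (P : Set (Fin N → ℝ)) (d : ℕ) : Prop :=
  ∃ V : Finset (Fin N → ℤ), V.Nonempty ∧
    P = convexHull ℝ ((fun v i => ((v i : ℝ))) '' (V : Set (Fin N → ℤ))) ∧
    Module.finrank ℝ (vectorSpan ℝ P) = d

/-- The coefficient of `t ^ n` in `t ^ h / (1 - t) ^ (d + 1)`. -/
def binomCount (d h n : ℕ) : ℕ := if h ≤ n then (n - h + d).choose d else 0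

section HalfOpen

variable {E κ : Type*} [AddCommGroup E] [Module ℝ E] [Fintype κ]

/-- The points of a simplicial cone, with the facets outside `s` removed. -/
def halfOpenCone (b : Module.Basis κ ℝ E) (s : Set κ) : Set E :=
  {x | ∀ i, (i ∈ s → 0 ≤ b.repr x i) ∧ (i ∉ s → 0 < b.repr x i)}

/-- The lattice points of the half-open parallelepiped of a basis. -/
def halfOpenBox (Λ : AddSubgroup E) (b : Module.Basis κ ℝ E) (s : Set κ) : Set E :=
  {x | x ∈ Λ ∧ ∀ i, (i ∈ s → 0 ≤ b.repr x i ∧ b.repr x i < 1) ∧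
    (i ∉ s → 0 < b.repr x i ∧ b.repr x i ≤ 1)}

theorem linearMap_eq_sum_repr (b : Module.Basis κ ℝ E) {l : E →ₗ[ℝ] ℝ} (hl : ∀ i, l (b i) = 1)
    (x : E) : l x = ∑ i, b.repr x i := by
  conv_lhs => rw [← b.sum_repr x, map_sum]
  simp only [map_smul, hl, smul_eq_mul, mul_one]

theorem exists_nat_halfOpen (p : Prop) (r : ℝ) (h : (p → 0 ≤ r) ∧ (¬p → 0 < r)) :
    ∃ m : ℕ, (p → 0 ≤ r - m ∧ r - m < 1) ∧ (¬p → 0 < r - m ∧ r - m ≤ 1) := by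
  by_cases hp : p
  · refine ⟨⌊r⌋₊, fun _ => ⟨?_, ?_⟩, fun h => absurd hp h⟩
    · linarith [Nat.floor_le (h.1 hp)]
    · linarith [Nat.lt_floor_add_one r]
  · have h0 := h.2 hp
    have hc : 0 < ⌈r⌉₊ := Nat.ceil_pos.2 h0
    obtain ⟨m, hm⟩ : ∃ m, ⌈r⌉₊ = m + 1 := ⟨⌈r⌉₊ - 1, by omega⟩
    have h1 := Nat.le_ceil r
    have h2 := Nat.ceil_lt_add_one h0.le
    rw [hm] at h1 h2
    push_cast at h1 h2
    exact ⟨m, fun h => absurd h hp, fun _ => ⟨by linarith, by linarith⟩⟩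

theorem nat_eq_of_halfOpen (p : Prop) (r r' : ℝ) (m m' : ℕ)
    (h : (p → 0 ≤ r ∧ r < 1) ∧ (¬p → 0 < r ∧ r ≤ 1))
    (h' : (p → 0 ≤ r' ∧ r' < 1) ∧ (¬p → 0 < r' ∧ r' ≤ 1)) (he : r + m = r' + m') : m = m' := by
  have key : |(m : ℝ) - m'| < 1 := by
    rw [abs_lt]
    by_cases hp : p
    · have := h.1 hp; have := h'.1 hp; constructor <;> linarith
    · have := h.2 hp; have := h'.2 hp; constructor <;> linarith
  have : |(m : ℤ) - m'| < 1 := by exact_mod_cast key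
  rw [Int.abs_lt_one_iff] at this
  omega

theorem card_piAntidiag_univ [DecidableEq κ] {d : ℕ} (hκ : Fintype.card κ = d + 1) (m : ℕ) :
    (Finset.piAntidiag (Finset.univ : Finset κ) m).card = (m + d).choose d := by
  rw [← Finset.map_sym_eq_piAntidiag, Finset.card_map, Finset.sym_univ,
    Finset.card_univ, Sym.card_sym_eq_choose, hκ, show d + 1 + m - 1 = m + d by omega,
    Nat.choose_symm_add]

theorem floor_linearMap {Λ : AddSubgroup E} {l : E →ₗ[ℝ] ℝ}
    (hint : ∀ x ∈ Λ, ∃ m : ℤ, l x = m) {x : E} (hx : x ∈ Λ) (h0 : 0 ≤ l x) : (⌊l x⌋₊ : ℝ) = l x := by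
  obtain ⟨m, hm⟩ := hint x hx
  rw [hm] at h0 ⊢
  have : 0 ≤ m := by exact_mod_cast h0
  lift m to ℕ using this
  simp

theorem ncard_halfOpenCone {Λ : AddSubgroup E} {l : E →ₗ[ℝ] ℝ} (b : Module.Basis κ ℝ E)
    (hb : ∀ i, b i ∈ Λ) (hl : ∀ i, l (b i) = 1) (hint : ∀ x ∈ Λ, ∃ m : ℤ, l x = m)
    {d : ℕ} (hκ : Fintype.card κ = d + 1) (s : Set κ) (hfin : (halfOpenBox Λ b s).Finite) (n : ℕ) :
    {x | x ∈ Λ ∧ l x = n ∧ x ∈ halfOpenCone b s}.ncard =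
      ∑ β ∈ hfin.toFinset, binomCount d ⌊l β⌋₊ n := by
  classical
  let F : E → Finset (κ → ℕ) := fun β =>
    if ⌊l β⌋₊ ≤ n then Finset.piAntidiag Finset.univ (n - ⌊l β⌋₊) else ∅
  have hF : ∀ β, (F β).card = binomCount d ⌊l β⌋₊ n := by
    intro β
    simp only [F, binomCount]
    split_ifs
    · exact card_piAntidiag_univ hκ _
    · rfl
  let φ : (Σ _ : E, κ → ℕ) → E := fun p => p.1 + ∑ i, (p.2 i : ℝ) • b i
  have hφ : ∀ p i, b.repr (φ p) i = b.repr p.1 i + p.2 i := by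
    intro p i
    simp [φ, Finsupp.single_apply]
  have hbox0 : ∀ β ∈ halfOpenBox Λ b s, 0 ≤ l β := by
    intro β hβ
    rw [linearMap_eq_sum_repr b hl]
    refine Finset.sum_nonneg fun i _ => ?_
    by_cases hi : i ∈ s
    · exact ((hβ.2 i).1 hi).1
    · exact ((hβ.2 i).2 hi).1.le
  have himg : {x | x ∈ Λ ∧ l x = n ∧ x ∈ halfOpenCone b s} =
      φ '' (hfin.toFinset.sigma F : Finset (Σ _ : E, κ → ℕ)) := by
    ext x
    constructor
    · rintro ⟨hx, hn, hc⟩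
      choose f hf using fun i => exists_nat_halfOpen (i ∈ s) (b.repr x i) (hc i)
      have hmem : x - ∑ i, (f i : ℝ) • b i ∈ halfOpenBox Λ b s := by
        refine ⟨sub_mem hx (sum_mem fun i _ => ?_), fun i => ?_⟩
        · rw [Nat.cast_smul_eq_nsmul]; exact nsmul_mem (hb i) _
        · have : b.repr (x - ∑ i, (f i : ℝ) • b i) i = b.repr x i - f i := by
            simp [Finsupp.single_apply]
          rw [this]
          exact hf i
      have hfl := floor_linearMap hint hmem.1 (hbox0 _ hmem)
      have hl' : l (x - ∑ i, (f i : ℝ) • b i) = n - ∑ i, (f i : ℝ) := by simp [hl, hn]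
      refine ⟨⟨x - ∑ i, (f i : ℝ) • b i, f⟩, ?_, by simp [φ]⟩
      have hsum : ⌊l (x - ∑ i, (f i : ℝ) • b i)⌋₊ + ∑ i, f i = n := by
        have : ((⌊l (x - ∑ i, (f i : ℝ) • b i)⌋₊ + ∑ i, f i : ℕ) : ℝ) = n := by
          push_cast
          rw [hfl, hl']
          ring
        exact_mod_cast this
      simp only [Finset.coe_sigma, Set.mem_sigma_iff, Finset.mem_coe, Set.Finite.mem_toFinset]
      refine ⟨hmem, ?_⟩
      simp only [F]
      rw [if_pos (by omega)]
      simp only [Finset.mem_piAntidiag, Finset.mem_univ, implies_true, and_true]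
      show ∑ i, f i = _
      omega
    · rintro ⟨p, hp, rfl⟩
      simp only [Finset.coe_sigma, Set.mem_sigma_iff, Finset.mem_coe, Set.Finite.mem_toFinset] at hp
      obtain ⟨hp1, hp2⟩ := hp
      simp only [F] at hp2
      split_ifs at hp2 with hle
      · simp only [Finset.mem_piAntidiag, Finset.mem_univ, implies_true, and_true] at hp2
        replace hp2 : ∑ i, p.2 i = n - ⌊l p.1⌋₊ := hp2
        refine ⟨add_mem hp1.1 (sum_mem fun i _ => ?_), ?_, fun i => ?_⟩
        · rw [Nat.cast_smul_eq_nsmul]; exact nsmul_mem (hb i) _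
        · simp only [φ, map_add, map_sum, map_smul, hl, smul_eq_mul, mul_one]
          rw [← floor_linearMap hint hp1.1 (hbox0 _ hp1)]
          have : ⌊l p.1⌋₊ + ∑ i, p.2 i = n := by omega
          exact_mod_cast this
        · rw [hφ]
          have : (0 : ℝ) ≤ p.2 i := by positivity
          exact ⟨fun hi => by linarith [((hp1.2 i).1 hi).1],
            fun hi => by linarith [((hp1.2 i).2 hi).1]⟩
      · simp at hp2
  rw [himg, Set.InjOn.ncard_image, Set.ncard_coe_finset, Finset.card_sigma]
  · exact Finset.sum_congr rfl fun β _ => hF β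
  · rintro ⟨β, f⟩ hp ⟨β', f'⟩ hp' he
    simp only [Finset.coe_sigma, Set.mem_sigma_iff, Finset.mem_coe, Set.Finite.mem_toFinset]
      at hp hp'
    have hff : f = f' := by
      funext i
      refine nat_eq_of_halfOpen (i ∈ s) _ _ _ _ (hp.1.2 i) (hp'.1.2 i) ?_
      have := congrArg (fun x => b.repr x i) he
      simpa only [hφ] using this
    subst hff
    have : β = β' := by simpa [φ] using he
    subst this
    rfl

end HalfOpen

section LexNonneg

/-- The vector `c` is zero or its first nonzero entry is positive. -/
def LexNonneg {N : ℕ} (c : Fin N → ℝ) : Prop := c = 0 ∨ ∃ i, 0 < c i ∧ ∀ j < i, c j = 0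

theorem LexNonneg.eq_zero {N : ℕ} {c : Fin N → ℝ} (h : LexNonneg c) (h' : LexNonneg (-c)) :
    c = 0 := by
  rcases h with h | ⟨i, hi, hij⟩
  · exact h
  rcases h' with h' | ⟨k, hk, hkj⟩
  · simpa using h'
  simp only [Pi.neg_apply, neg_eq_zero, Left.neg_pos_iff] at hk hkj
  rcases lt_trichotomy i k with h | h | h
  · exact absurd (hkj i h) hi.ne'
  · subst h; linarith
  · exact absurd (hij k h) hk.ne

theorem LexNonneg.of_smul {N : ℕ} {c : Fin N → ℝ} {r : ℝ} (hr : 0 < r) (h : LexNonneg (r • c)) :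
    LexNonneg c := by
  rcases h with h | ⟨i, hi, hij⟩
  · exact Or.inl ((smul_eq_zero.1 h).resolve_left hr.ne')
  · refine Or.inr ⟨i, ?_, fun j hj => ?_⟩
    · exact pos_of_mul_pos_right (by simpa using hi) hr.le
    · have := hij j hj
      simp only [Pi.smul_apply, smul_eq_mul, mul_eq_zero] at this
      exact this.resolve_left hr.ne'

theorem IsCompact.exists_lexMin {N : ℕ} {K : Set (Fin N → ℝ)} (hK : IsCompact K)
    (hne : K.Nonempty) : ∃ c ∈ K, ∀ c' ∈ K, LexNonneg (c' - c) := by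
  have key : ∀ m ≤ N, ∃ K' ⊆ K, IsCompact K' ∧ K'.Nonempty ∧
      (∀ c ∈ K', ∀ c' ∈ K', ∀ i : Fin N, i.1 < m → c i = c' i) ∧
      (∀ c ∈ K', ∀ c' ∈ K, c' ∈ K' ∨ LexNonneg (c' - c)) := by
    intro m
    induction m with
    | zero => exact fun _ => ⟨K, subset_rfl, hK, hne, by simp, fun c _ c' h => Or.inl h⟩
    | succ m ih =>
      intro hm
      obtain ⟨K', hsub, hcomp, hne', heq, hlex⟩ := ih (by omega)
      have hcont : Continuous fun c : Fin N → ℝ => c ⟨m, hm⟩ := continuous_apply _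
      obtain ⟨a, ha, hmin⟩ := hcomp.exists_isMinOn hne' hcont.continuousOn
      refine ⟨K' ∩ {c | c ⟨m, hm⟩ = a ⟨m, hm⟩}, fun x hx => hsub hx.1,
        hcomp.inter_right (isClosed_eq hcont continuous_const), ⟨a, ha, rfl⟩, ?_, ?_⟩
      · intro c hc c' hc' i hi
        rcases Nat.lt_succ_iff_lt_or_eq.1 hi with h | h
        · exact heq c hc.1 c' hc'.1 i h
        · have : i = ⟨m, hm⟩ := Fin.ext h
          rw [this]
          exact hc.2.trans hc'.2.symm
      · intro c hc c' hc'
        rcases hlex c hc.1 c' hc' with h | h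
        · by_cases he : c' ⟨m, hm⟩ = a ⟨m, hm⟩
          · exact Or.inl ⟨h, he⟩
          · refine Or.inr (Or.inr ⟨⟨m, hm⟩, ?_, fun j hj => ?_⟩)
            · have h1 : a ⟨m, hm⟩ ≤ c' ⟨m, hm⟩ := hmin h
              have h2 : c ⟨m, hm⟩ = a ⟨m, hm⟩ := hc.2
              simp only [Pi.sub_apply, h2]
              exact sub_pos.2 (lt_of_le_of_ne h1 (Ne.symm he))
            · simp [heq c' h c hc.1 j hj]
        · exact Or.inr h
  obtain ⟨K', hsub, -, ⟨c, hc⟩, heq, hlex⟩ := key N le_rfl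
  refine ⟨c, hsub hc, fun c' hc' => (hlex c hc c' hc').elim (fun h => Or.inl ?_) id⟩
  funext i
  simp [heq c' h c hc i i.2]

end LexNonneg

section Triangulation

variable {E : Type*} [AddCommGroup E] [Module ℝ E] {N : ℕ}

/-- The convex cone generated by a finite family. -/
def coneOf {ι : Type*} [Fintype ι] (v : ι → E) : Set E :=
  {x | ∃ c : ι → ℝ, (∀ i, 0 ≤ c i) ∧ ∑ i, c i • v i = x}

theorem add_mem_coneOf {ι : Type*} [Fintype ι] {v : ι → E} {x y : E} (hx : x ∈ coneOf v)
    (hy : y ∈ coneOf v) : x + y ∈ coneOf v := by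
  obtain ⟨c, hc, rfl⟩ := hx
  obtain ⟨c', hc', rfl⟩ := hy
  exact ⟨c + c', fun i => add_nonneg (hc i) (hc' i), by simp [add_smul, Finset.sum_add_distrib]⟩

theorem smul_mem_coneOf {ι : Type*} [Fintype ι] {v : ι → E} {x : E} (hx : x ∈ coneOf v) {r : ℝ}
    (hr : 0 ≤ r) : r • x ∈ coneOf v := by
  obtain ⟨c, hc, rfl⟩ := hx
  exact ⟨r • c, fun i => mul_nonneg hr (hc i), by simp [Finset.smul_sum, smul_smul]⟩

theorem self_mem_coneOf {ι : Type*} [Fintype ι] (v : ι → E) (i : ι) : v i ∈ coneOf v := by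
  classical
  refine ⟨Pi.single i 1, fun j => ?_, by simp [Pi.single_apply]⟩
  by_cases h : j = i
  · subst h; simp
  · simp [h]

theorem linearMap_sum_smul {ι : Type*} [Fintype ι] {v : ι → E} {l : E →ₗ[ℝ] ℝ}
    (hl : ∀ i, l (v i) = 1) (c : ι → ℝ) : l (∑ i, c i • v i) = ∑ i, c i := by
  simp [hl]

theorem linearMap_nonneg_of_mem_coneOf {ι : Type*} [Fintype ι] {v : ι → E} {l : E →ₗ[ℝ] ℝ}
    (hl : ∀ i, l (v i) = 1) {x : E} (hx : x ∈ coneOf v) : 0 ≤ l x := by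
  obtain ⟨c, hc, rfl⟩ := hx
  rw [linearMap_sum_smul hl]
  exact Finset.sum_nonneg fun i _ => hc i

/-- The members of `v` indexed by `σ` form a basis. -/
def IsBasisIndex (v : Fin N → E) (σ : Finset (Fin N)) : Prop :=
  LinearIndependent ℝ (fun i : σ => v i) ∧ ⊤ ≤ Submodule.span ℝ (Set.range fun i : σ => v i)

/-- The basis picked out by an index set. -/
noncomputable def IsBasisIndex.basis {v : Fin N → E} {σ : Finset (Fin N)} (h : IsBasisIndex v σ) :
    Module.Basis σ ℝ E := Module.Basis.mk h.1 h.2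

theorem IsBasisIndex.basis_apply {v : Fin N → E} {σ : Finset (Fin N)} (h : IsBasisIndex v σ)
    (i : σ) : h.basis i = v i := by simp [IsBasisIndex.basis]

/-- The maximal cones of the lexicographic triangulation of the cone over `v`. -/
def LexTriangulation (v : Fin N → E) : Type :=
  {σ : Finset (Fin N) // IsBasisIndex v σ ∧
    ∀ c : Fin N → ℝ, ∑ i, c i • v i = 0 → (∀ i ∉ σ, 0 ≤ c i) → LexNonneg c}

noncomputable instance (v : Fin N → E) : Fintype (LexTriangulation v) := by
  classical
  unfold LexTriangulation
  infer_instance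

/-- The basis of a maximal cone. -/
noncomputable def LexTriangulation.basis {v : Fin N → E} (σ : LexTriangulation v) :
    Module.Basis σ.1 ℝ E := σ.2.1.basis

theorem LexTriangulation.basis_apply {v : Fin N → E} (σ : LexTriangulation v)
    (i : σ.1) : σ.basis i = v i := σ.2.1.basis_apply i

/-- All coordinates of `y` with respect to all bases contained in `v` are nonzero. -/
def IsGenericFor (v : Fin N → E) (y : E) : Prop :=
  ∀ σ (h : IsBasisIndex v σ) i, h.basis.repr y i ≠ 0

theorem sum_extend_smul (v : Fin N → E) (σ : Finset (Fin N)) (c : σ → ℝ) :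
    ∑ i, (if h : i ∈ σ then c ⟨i, h⟩ else 0) • v i = ∑ i : σ, c i • v i := by
  classical
  rw [← Finset.sum_subset (Finset.subset_univ σ), ← Finset.sum_attach σ]
  · simp
  · intro i _ hi
    simp [hi]

theorem LexTriangulation.ext_of_pos {v : Fin N → E} (σ τ : LexTriangulation v) {y : E}
    (hσ : ∀ i, 0 < σ.basis.repr y i) (hτ : ∀ i, 0 < τ.basis.repr y i) : σ = τ := by
  classical
  have hs : ∀ ρ : LexTriangulation v,
      ∑ i, (if h : i ∈ ρ.1 then ρ.basis.repr y ⟨i, h⟩ else 0) • v i = y := by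
    intro ρ
    rw [sum_extend_smul]
    simpa only [ρ.basis_apply] using ρ.basis.sum_repr y
  let f : LexTriangulation v → Fin N → ℝ :=
    fun ρ i => if h : i ∈ ρ.1 then ρ.basis.repr y ⟨i, h⟩ else 0
  have hf : ∀ ρ, ∑ i, f ρ i • v i = y := hs
  have hmem : ∀ ρ : LexTriangulation v, (∀ i, 0 < ρ.basis.repr y i) → ∀ i, 0 < f ρ i ↔ i ∈ ρ.1 := by
    intro ρ hρ i
    by_cases h : i ∈ ρ.1
    · simp [f, h, hρ]
    · simp [f, h]
  have hnn : ∀ ρ : LexTriangulation v, (∀ i, 0 < ρ.basis.repr y i) → ∀ i, 0 ≤ f ρ i := by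
    intro ρ hρ i
    by_cases h : i ∈ ρ.1
    · exact ((hmem ρ hρ i).2 h).le
    · simp [f, h]
  have hz : ∀ ρ : LexTriangulation v, ∀ i ∉ ρ.1, f ρ i = 0 := by
    intro ρ i hi
    simp [f, hi]
  have h1 : LexNonneg (f τ - f σ) := σ.2.2 _ (by simp [sub_smul, hf]) fun i hi => by
    simp [hz σ i hi, hnn τ hτ i]
  have h2 : LexNonneg (-(f τ - f σ)) := τ.2.2 _ (by simp [sub_smul, hf]) fun i hi => by
    simp [hz τ i hi, hnn σ hσ i]
  have h3 : f τ = f σ := sub_eq_zero.1 (h1.eq_zero h2)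
  apply Subtype.ext
  ext i
  rw [← hmem σ hσ, ← hmem τ hτ, h3]

theorem isCompact_representations {v : Fin N → E} {l : E →ₗ[ℝ] ℝ}
    (hl : ∀ i, l (v i) = 1) (y : E) :
    IsCompact {c : Fin N → ℝ | (∀ i, 0 ≤ c i) ∧ ∑ i, c i • v i = y} := by
  rcases Set.eq_empty_or_nonempty {c : Fin N → ℝ | (∀ i, 0 ≤ c i) ∧ ∑ i, c i • v i = y} with
    he | ⟨c₀, hc₀⟩
  · rw [he]; exact isCompact_empty
  let L : (Fin N → ℝ) →ₗ[ℝ] E := Fintype.linearCombination ℝ v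
  have hL : ∀ c, L c = ∑ i, c i • v i := fun c => rfl
  have hker : ∀ c, c - c₀ ∈ LinearMap.ker L ↔ ∑ i, c i • v i = y := fun c => by
    rw [LinearMap.mem_ker, map_sub, hL, hL, hc₀.2, sub_eq_zero]
  have hset : {c : Fin N → ℝ | (∀ i, 0 ≤ c i) ∧ ∑ i, c i • v i = y} =
      Set.Icc 0 (fun _ => l y) ∩ (fun c => c - c₀) ⁻¹' (LinearMap.ker L : Set (Fin N → ℝ)) := by
    ext c
    simp only [Set.mem_ofPred_eq, Set.mem_inter_iff, Set.mem_Icc, Set.mem_preimage,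
      SetLike.mem_coe, hker]
    constructor
    · rintro ⟨h1, h2⟩
      refine ⟨⟨h1, fun i => ?_⟩, h2⟩
      rw [← h2, linearMap_sum_smul hl]
      exact Finset.single_le_sum (fun i _ => h1 i) (Finset.mem_univ i)
    · rintro ⟨h1, h2⟩
      exact ⟨h1.1, h2⟩
  rw [hset]
  exact isCompact_Icc.inter_right
    ((Submodule.closed_of_finiteDimensional _).preimage (by fun_prop))

theorem exists_small_nonneg {ι : Type*} [Finite ι] (c k : ι → ℝ) (hc : ∀ i, 0 ≤ c i)
    (hk : ∀ i, c i = 0 → 0 ≤ k i) : ∃ r : ℝ, 0 < r ∧ ∀ i, 0 ≤ c i + r * k i := by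
  have h : ∀ i, ∀ᶠ r : ℝ in nhdsWithin 0 (Set.Ioi 0), 0 ≤ c i + r * k i := by
    intro i
    rcases (hc i).eq_or_lt with h0 | h0
    · filter_upwards [self_mem_nhdsWithin] with r hr
      rw [← h0, zero_add]
      exact mul_nonneg (le_of_lt hr) (hk i h0.symm)
    · have : Filter.Tendsto (fun r : ℝ => c i + r * k i) (nhds 0) (nhds (c i + 0 * k i)) :=
        Continuous.tendsto (by fun_prop) 0
      rw [zero_mul, add_zero] at this
      exact ((this.eventually (lt_mem_nhds h0)).filter_mono nhdsWithin_le_nhds).mono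
        fun r hr => hr.le
  obtain ⟨r, h1, h2⟩ := ((Filter.eventually_all.2 h).and self_mem_nhdsWithin).exists
  exact ⟨r, h2, h1⟩

theorem IsGenericFor.exists_pos {v : Fin N → E} {l : E →ₗ[ℝ] ℝ} (hl : ∀ i, l (v i) = 1)
    (hspan : ⊤ ≤ Submodule.span ℝ (Set.range v)) {y : E} (hgen : IsGenericFor v y)
    (hy : y ∈ coneOf v) : ∃ σ : LexTriangulation v, ∀ i, 0 < σ.basis.repr y i := by
  classical
  obtain ⟨c, ⟨hc0, hcy⟩, hmin⟩ := (isCompact_representations hl y).exists_lexMin hy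
  have hlex : ∀ k : Fin N → ℝ, ∑ i, k i • v i = 0 → (∀ i, c i = 0 → 0 ≤ k i) → LexNonneg k := by
    intro k hk hk0
    obtain ⟨r, hr, hrk⟩ := exists_small_nonneg c k hc0 hk0
    refine LexNonneg.of_smul hr ?_
    have := hmin (c + r • k) ⟨fun i => by simpa using hrk i, by
      simp [add_smul, Finset.sum_add_distrib, hcy, mul_smul, ← Finset.smul_sum, hk]⟩
    simpa using this
  let τ : Finset (Fin N) := Finset.univ.filter fun i => c i ≠ 0
  have hτ : LinearIndepOn ℝ v (τ : Set (Fin N)) := by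
    rw [linearIndepOn_finset_iff]
    intro f hf i hi
    let k : Fin N → ℝ := fun i => if i ∈ τ then f i else 0
    have hk : ∑ i, k i • v i = 0 := by
      simpa [k, Finset.sum_ite_mem, ite_smul] using hf
    have hz : ∀ i, c i = 0 → k i = 0 := fun i hi => by simp [k, τ, hi]
    have h1 := hlex k hk fun i hi => (hz i hi).ge
    have h2 := hlex (-k) (by simp [hk]) fun i hi => by simp [hz i hi]
    have := congrFun (h1.eq_zero h2) i
    simpa [k, hi] using this
  obtain ⟨b, -, hτb, hbs, hbi⟩ := exists_linearIndepOn_extension hτ (Set.subset_univ _)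
  let σ : Finset (Fin N) := b.toFinset
  have hσb : (σ : Set (Fin N)) = b := Set.coe_toFinset b
  have hσ : IsBasisIndex v σ := by
    rw [← hσb] at hbs hbi
    refine ⟨hbi, hspan.trans (Submodule.span_le.2 ?_)⟩
    rw [Set.image_univ] at hbs
    refine hbs.trans ?_
    rw [Set.image_eq_range]
    exact subset_rfl
  have hsupp : ∀ i, i ∉ σ → c i = 0 := by
    intro i hi
    by_contra h
    exact hi (by rw [← Finset.mem_coe, hσb]; exact hτb (by simp [τ, h]))
  have hrepr : ∀ i : σ, hσ.basis.repr y i = c i := by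
    intro i
    have : y = ∑ j : σ, c j • hσ.basis j := by
      rw [← hcy, ← Finset.sum_subset (Finset.subset_univ σ), ← Finset.sum_attach σ]
      · exact Finset.sum_congr rfl fun j _ => by rw [hσ.basis_apply]
      · intro j _ hj
        simp [hsupp j hj]
    rw [this, hσ.basis.repr_sum_self]
  have hpos : ∀ i : σ, 0 < c i := fun i =>
    lt_of_le_of_ne (hc0 i) (by rw [← hrepr]; exact (hgen σ hσ i).symm)
  refine ⟨⟨σ, hσ, fun k hk hk0 => hlex k hk fun i hi => hk0 i fun h => ?_⟩, fun i => ?_⟩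
  · exact (hpos ⟨i, h⟩).ne' hi
  · exact (hpos i).trans_eq (hrepr i).symm

theorem eventually_add_mul_pos {a z : ℝ} (h : (0 < z → 0 ≤ a) ∧ (¬0 < z → 0 < a)) :
    ∀ᶠ r : ℝ in nhdsWithin 0 (Set.Ioi 0), 0 < a + r * z := by
  by_cases hz : 0 < z
  · filter_upwards [self_mem_nhdsWithin] with r hr
    have := mul_pos (show (0 : ℝ) < r from hr) hz
    linarith [h.1 hz]
  · have : Filter.Tendsto (fun r : ℝ => a + r * z) (nhds 0) (nhds (a + 0 * z)) :=
      Continuous.tendsto (by fun_prop) 0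
    rw [zero_mul, add_zero] at this
    exact (this.eventually (lt_mem_nhds (h.2 hz))).filter_mono nhdsWithin_le_nhds

theorem eventually_add_mul_neg {a z : ℝ} (hz : z ≠ 0)
    (h : ¬((0 < z → 0 ≤ a) ∧ (¬0 < z → 0 < a))) :
    ∀ᶠ r : ℝ in nhdsWithin 0 (Set.Ioi 0), a + r * z < 0 := by
  have := eventually_add_mul_pos (a := -a) (z := -z) ⟨fun h' => by
    by_contra hn; exact h ⟨fun h'' => by linarith, fun _ => by linarith⟩, fun h' => by
    have hz' : 0 < z := lt_of_le_of_ne (by linarith) hz.symm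
    by_contra hn; exact h ⟨fun _ => by linarith, fun h'' => absurd hz' h''⟩⟩
  filter_upwards [this] with r hr
  linarith

/-- The half-open version of a maximal cone determined by a generic direction. -/
def LexTriangulation.halfOpen {v : Fin N → E} (σ : LexTriangulation v) (z : E) : Set E :=
  halfOpenCone σ.basis {i | 0 < σ.basis.repr z i}

theorem LexTriangulation.eventually_pos {v : Fin N → E} (σ : LexTriangulation v) {x z : E}
    (h : x ∈ σ.halfOpen z) :
    ∀ᶠ r : ℝ in nhdsWithin 0 (Set.Ioi 0), ∀ i, 0 < σ.basis.repr (x + r • z) i := by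
  rw [Filter.eventually_all]
  intro i
  simpa using eventually_add_mul_pos (h i)

theorem LexTriangulation.mem_coneOf_of_repr {v : Fin N → E} (σ : LexTriangulation v) {x : E}
    (h : ∀ i, 0 ≤ σ.basis.repr x i) : x ∈ coneOf v := by
  classical
  refine ⟨fun i => if h : i ∈ σ.1 then σ.basis.repr x ⟨i, h⟩ else 0, fun i => ?_, ?_⟩
  · dsimp only
    split_ifs
    · exact h _
    · rfl
  · rw [sum_extend_smul]
    simpa only [σ.basis_apply] using σ.basis.sum_repr x

theorem LexTriangulation.halfOpen_subset {v : Fin N → E} (σ : LexTriangulation v) (z : E) :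
    σ.halfOpen z ⊆ coneOf v := by
  intro x hx
  refine σ.mem_coneOf_of_repr fun i => ?_
  by_cases h : 0 < σ.basis.repr z i
  · exact (hx i).1 h
  · exact ((hx i).2 h).le

theorem LexTriangulation.eventually_mem {v : Fin N → E} (σ : LexTriangulation v) {x z : E}
    (h : x ∈ σ.halfOpen z) :
    ∀ᶠ r : ℝ in nhdsWithin 0 (Set.Ioi 0), x + r • z ∈ coneOf v := by
  filter_upwards [σ.eventually_pos h] with r hr
  exact σ.mem_coneOf_of_repr fun i => (hr i).le

theorem LexTriangulation.halfOpen_disjoint {v : Fin N → E} {σ τ : LexTriangulation v} {x z : E}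
    (hσ : x ∈ σ.halfOpen z) (hτ : x ∈ τ.halfOpen z) : σ = τ := by
  obtain ⟨r, h1, h2⟩ := ((σ.eventually_pos hσ).and (τ.eventually_pos hτ)).exists
  exact σ.ext_of_pos τ h1 h2

theorem IsGenericFor.eventually_add_smul {v : Fin N → E} {z : E} (hz : IsGenericFor v z) (x : E) :
    ∀ᶠ r : ℝ in nhdsWithin 0 (Set.Ioi 0), IsGenericFor v (x + r • z) := by
  simp only [IsGenericFor, Filter.eventually_all]
  intro σ h i
  by_cases hp : (0 < h.basis.repr z i → 0 ≤ h.basis.repr x i) ∧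
      (¬0 < h.basis.repr z i → 0 < h.basis.repr x i)
  · filter_upwards [eventually_add_mul_pos hp] with r hr
    simpa using hr.ne'
  · filter_upwards [eventually_add_mul_neg (hz σ h i) hp] with r hr
    simpa using hr.ne

theorem IsGenericFor.exists_halfOpen {v : Fin N → E} {l : E →ₗ[ℝ] ℝ} (hl : ∀ i, l (v i) = 1)
    (hspan : ⊤ ≤ Submodule.span ℝ (Set.range v)) {z : E} (hz : IsGenericFor v z) {x : E}
    (hx : ∀ᶠ r : ℝ in nhdsWithin 0 (Set.Ioi 0), x + r • z ∈ coneOf v) :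
    ∃ σ : LexTriangulation v, x ∈ σ.halfOpen z := by
  by_contra hcon
  push Not at hcon
  have hneg : ∀ σ : LexTriangulation v, ∀ᶠ r : ℝ in nhdsWithin 0 (Set.Ioi 0),
      ∃ i, σ.basis.repr (x + r • z) i < 0 := by
    intro σ
    have h1 := hcon σ
    simp only [LexTriangulation.halfOpen, halfOpenCone, Set.mem_ofPred_eq] at h1
    rw [not_forall] at h1
    obtain ⟨i, hi⟩ := h1
    filter_upwards [eventually_add_mul_neg (z := σ.basis.repr z i) (hz σ.1 σ.2.1 i) hi] with r hr
    exact ⟨i, by simpa using hr⟩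
  obtain ⟨r, ⟨h1, h2⟩, h3⟩ :=
    ((hx.and (hz.eventually_add_smul x)).and (Filter.eventually_all.2 hneg)).exists
  obtain ⟨σ, hσ⟩ := h2.exists_pos hl hspan h1
  obtain ⟨i, hi⟩ := h3 σ
  exact absurd (hσ i) hi.not_gt

end Triangulation

section Decomposition

variable {E : Type*} [AddCommGroup E] [Module ℝ E] {N : ℕ}

/-- The lattice points at height `n` of the cone over `v`. -/
def coneSlice {ι : Type*} [Fintype ι] (Λ : AddSubgroup E) (l : E →ₗ[ℝ] ℝ) (v : ι → E) (n : ℕ) :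
    Set E :=
  {x | x ∈ Λ ∧ l x = n ∧ x ∈ coneOf v}

/-- The lattice points at height `n` of the cone over `v` which stay in the cone when moved
slightly in the direction `-z`. -/
def interiorSlice {ι : Type*} [Fintype ι] (Λ : AddSubgroup E) (l : E →ₗ[ℝ] ℝ) (v : ι → E) (z : E)
    (n : ℕ) : Set E :=
  {x | x ∈ Λ ∧ l x = n ∧ ∃ r : ℝ, 0 < r ∧ x - r • z ∈ coneOf v}

theorem eq_zero_of_mem_coneOf {ι : Type*} [Fintype ι] {l : E →ₗ[ℝ] ℝ} {v : ι → E}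
    (hl : ∀ i, l (v i) = 1) {x : E} (hx : x ∈ coneOf v) (h0 : l x = 0) : x = 0 := by
  obtain ⟨c, hc, rfl⟩ := hx
  rw [linearMap_sum_smul hl, Finset.sum_eq_zero_iff_of_nonneg fun i _ => hc i] at h0
  exact Finset.sum_eq_zero fun i hi => by rw [h0 i hi, zero_smul]

theorem exists_isGenericFor (v : Fin N → E) : ∃ c : Fin N → ℝ, (∀ i, 0 < c i) ∧
    IsGenericFor v (∑ i, c i • v i) := by
  let bad : Set ℝ := ⋃ σ : Finset (Fin N), ⋃ h : IsBasisIndex v σ, ⋃ i : σ,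
    {t : ℝ | h.basis.repr (∑ j : Fin N, t ^ (j : ℕ) • v j) i = 0}
  have hbad : bad.Finite := by
    refine Set.finite_iUnion fun σ => Set.finite_iUnion fun h => Set.finite_iUnion fun i => ?_
    let p : Polynomial ℝ :=
      ∑ j : Fin N, Polynomial.C (h.basis.repr (v j) i) * Polynomial.X ^ (j : ℕ)
    have hp : p ≠ 0 := by
      intro h0
      have h1 : p.coeff (i : Fin N) = h.basis.repr (v i) i := by
        simp only [p, Polynomial.finsetSum_coeff, Polynomial.coeff_C_mul, Polynomial.coeff_X_pow]
        rw [Finset.sum_eq_single (i : Fin N)]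
        · simp
        · intro j _ hj
          rw [if_neg (fun h => hj (Fin.ext h.symm)), mul_zero]
        · simp
      rw [h0, ← h.basis_apply i] at h1
      simp at h1
    refine (p.rootSet_finite ℝ).subset fun t ht => ?_
    rw [Polynomial.mem_rootSet]
    refine ⟨hp, ?_⟩
    have ht' : h.basis.repr (∑ j : Fin N, t ^ (j : ℕ) • v j) i = 0 := ht
    simp only [map_sum, map_smul, Finsupp.coe_finsetSum, Finsupp.coe_smul, Finset.sum_apply,
      Pi.smul_apply, smul_eq_mul] at ht'
    simp only [p, map_sum, map_mul, Polynomial.aeval_C, map_pow, Polynomial.aeval_X,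
      Algebra.algebraMap_self, RingHom.id_apply]
    rw [← ht']
    exact Finset.sum_congr rfl fun j _ => mul_comm _ _
  obtain ⟨t, ht0, ht⟩ := ((Set.Ioi_infinite (0 : ℝ)).sdiff hbad).nonempty
  refine ⟨fun j => t ^ (j : ℕ), fun j => pow_pos ht0 _, ?_⟩
  intro σ h i h0
  exact ht (Set.mem_iUnion.2 ⟨σ, Set.mem_iUnion.2 ⟨h, Set.mem_iUnion.2 ⟨i, h0⟩⟩⟩)

theorem IsGenericFor.neg {v : Fin N → E} {z : E} (hz : IsGenericFor v z) :
    IsGenericFor v (-z) := by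
  intro σ h i
  simpa using hz σ h i

theorem coneSlice_eq_iUnion {Λ : AddSubgroup E} {l : E →ₗ[ℝ] ℝ} {v : Fin N → E}
    (hl : ∀ i, l (v i) = 1) (hspan : ⊤ ≤ Submodule.span ℝ (Set.range v)) {z : E}
    (hzc : z ∈ coneOf v) (hz : IsGenericFor v z) (n : ℕ) :
    coneSlice Λ l v n = ⋃ σ : LexTriangulation v, {x | x ∈ Λ ∧ l x = n ∧ x ∈ σ.halfOpen z} := by
  ext x
  simp only [coneSlice, Set.mem_iUnion, Set.mem_ofPred_eq]
  constructor
  · rintro ⟨h1, h2, h3⟩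
    obtain ⟨σ, hσ⟩ := hz.exists_halfOpen hl hspan (x := x) (by
      filter_upwards [self_mem_nhdsWithin] with r hr
      exact add_mem_coneOf h3 (smul_mem_coneOf hzc (le_of_lt hr)))
    exact ⟨σ, h1, h2, hσ⟩
  · rintro ⟨σ, h1, h2, h3⟩
    exact ⟨h1, h2, σ.halfOpen_subset z h3⟩

theorem interiorSlice_eq_iUnion {Λ : AddSubgroup E} {l : E →ₗ[ℝ] ℝ} {v : Fin N → E}
    (hl : ∀ i, l (v i) = 1) (hspan : ⊤ ≤ Submodule.span ℝ (Set.range v)) {z : E}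
    (hzc : z ∈ coneOf v) (hz : IsGenericFor v z) (n : ℕ) :
    interiorSlice Λ l v z n =
      ⋃ σ : LexTriangulation v, {x | x ∈ Λ ∧ l x = n ∧ x ∈ σ.halfOpen (-z)} := by
  ext x
  simp only [interiorSlice, Set.mem_iUnion, Set.mem_ofPred_eq]
  constructor
  · rintro ⟨h1, h2, r, hr, h3⟩
    obtain ⟨σ, hσ⟩ := hz.neg.exists_halfOpen hl hspan (x := x) (by
      filter_upwards [Ioo_mem_nhdsGT hr] with s hs
      have : x + s • -z = (x - r • z) + (r - s) • z := by module
      rw [this]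
      exact add_mem_coneOf h3 (smul_mem_coneOf hzc (by linarith [hs.2])))
    exact ⟨σ, h1, h2, hσ⟩
  · rintro ⟨σ, h1, h2, h3⟩
    obtain ⟨r, hr, hr0⟩ := ((σ.eventually_mem h3).and self_mem_nhdsWithin).exists
    exact ⟨h1, h2, r, hr0, by simpa [sub_eq_add_neg] using hr⟩

/-- The box points of a maximal cone determined by a generic direction. -/
def LexTriangulation.box {v : Fin N → E} (σ : LexTriangulation v) (Λ : AddSubgroup E) (z : E) :
    Set E :=
  halfOpenBox Λ σ.basis {i | 0 < σ.basis.repr z i}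

theorem LexTriangulation.box_subset_halfOpen {v : Fin N → E} (σ : LexTriangulation v)
    (Λ : AddSubgroup E) (z : E) : σ.box Λ z ⊆ σ.halfOpen z :=
  fun _ hx i => ⟨fun h => ((hx.2 i).1 h).1, fun h => ((hx.2 i).2 h).1⟩

theorem LexTriangulation.card_index {v : Fin N → E} (σ : LexTriangulation v) :
    Fintype.card σ.1 = Module.finrank ℝ E :=
  (Module.finrank_eq_card_basis σ.basis).symm

theorem LexTriangulation.linearMap_box_le {v : Fin N → E} (σ : LexTriangulation v)
    {Λ : AddSubgroup E} {l : E →ₗ[ℝ] ℝ} (hl : ∀ i, l (v i) = 1) {z x : E} (hx : x ∈ σ.box Λ z) :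
    l x ≤ Module.finrank ℝ E := by
  rw [linearMap_eq_sum_repr σ.basis (fun i => by rw [σ.basis_apply, hl])]
  calc ∑ i, σ.basis.repr x i ≤ ∑ i : σ.1, (1 : ℝ) := by
        refine Finset.sum_le_sum fun i _ => ?_
        by_cases h : i ∈ {i | 0 < σ.basis.repr z i}
        · exact ((hx.2 i).1 h).2.le
        · exact ((hx.2 i).2 h).2
    _ = Module.finrank ℝ E := by rw [← σ.card_index]; simp

theorem LexTriangulation.finite_box {v : Fin N → E} (σ : LexTriangulation v)
    {Λ : AddSubgroup E} {l : E →ₗ[ℝ] ℝ} (hl : ∀ i, l (v i) = 1)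
    (hint : ∀ x ∈ Λ, ∃ m : ℤ, l x = m) (hfin : ∀ n, (coneSlice Λ l v n).Finite) (z : E) :
    (σ.box Λ z).Finite := by
  refine ((Set.finite_Iic (Module.finrank ℝ E)).biUnion fun n _ => hfin n).subset fun x hx => ?_
  have hc := σ.halfOpen_subset z (σ.box_subset_halfOpen Λ z hx)
  have h0 := linearMap_nonneg_of_mem_coneOf hl hc
  have hf := floor_linearMap hint hx.1 h0
  refine Set.mem_biUnion (x := ⌊l x⌋₊) ?_ ⟨hx.1, hf.symm, hc⟩
  have := σ.linearMap_box_le hl hx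
  rw [← hf] at this
  exact_mod_cast this

theorem LexTriangulation.reflect_mem_box {v : Fin N → E} (σ : LexTriangulation v)
    {Λ : AddSubgroup E} (hv : ∀ i, v i ∈ Λ) {z x : E} (hz : IsGenericFor v z)
    (hx : x ∈ σ.box Λ z) : ∑ i, σ.basis i - x ∈ σ.box Λ (-z) := by
  refine ⟨sub_mem (sum_mem fun i _ => by rw [σ.basis_apply]; exact hv _) hx.1, fun i => ?_⟩
  have h1 : σ.basis.repr (∑ i, σ.basis i - x) i = 1 - σ.basis.repr x i := by
    simp [Finsupp.single_apply]
  have h2 : σ.basis.repr z i ≠ 0 := hz σ.1 σ.2.1 i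
  have h3 := hx.2 i
  simp only [Set.mem_ofPred_eq, map_neg, Finsupp.coe_neg, Pi.neg_apply, h1] at h3 ⊢
  constructor
  · intro h
    have := h3.2 (by linarith)
    constructor <;> linarith
  · intro h
    have := h3.1 (lt_of_le_of_ne (by linarith) h2.symm)
    constructor <;> linarith

theorem exists_heights {Λ : AddSubgroup E} {l : E →ₗ[ℝ] ℝ} {v : Fin N → E} {d : ℕ}
    (hd : Module.finrank ℝ E = d + 1) (hv : ∀ i, v i ∈ Λ)
    (hl : ∀ i, l (v i) = 1) (hint : ∀ x ∈ Λ, ∃ m : ℤ, l x = m)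
    (hfin : ∀ n, (coneSlice Λ l v n).Finite)
    (hspan : ⊤ ≤ Submodule.span ℝ (Set.range v)) {z : E}
    (hzc : z ∈ coneOf v) (hz : IsGenericFor v z) :
    ∃ H : Multiset ℕ, (∀ h ∈ H, h ≤ d) ∧
      (∀ n, (coneSlice Λ l v n).ncard = (H.map fun h => binomCount d h n).sum) ∧
      ∀ n, (interiorSlice Λ l v z n).ncard = (H.map fun h => binomCount d (d + 1 - h) n).sum := by
  have hbfin := fun (σ : LexTriangulation v) z => σ.finite_box hl hint hfin z
  have hcount : ∀ (z : E) (n : ℕ), (⋃ σ : LexTriangulation v,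
      {x | x ∈ Λ ∧ l x = n ∧ x ∈ σ.halfOpen z}).ncard =
      ∑ σ : LexTriangulation v, ∑ β ∈ (hbfin σ z).toFinset, binomCount d ⌊l β⌋₊ n := by
    intro z n
    rw [Set.ncard_iUnion_of_finite, finsum_eq_sum_of_fintype]
    · refine Finset.sum_congr rfl fun σ _ => ?_
      exact ncard_halfOpenCone σ.basis (fun i => by rw [σ.basis_apply]; exact hv _)
        (fun i => by rw [σ.basis_apply]; exact hl _) hint (σ.card_index.trans hd) _ (hbfin σ z) n
    · exact fun σ => (hfin n).subset fun x hx => ⟨hx.1, hx.2.1, σ.halfOpen_subset z hx.2.2⟩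
    · intro σ τ hst
      rw [Function.onFun, Set.disjoint_left]
      exact fun x hx hx' => hst (LexTriangulation.halfOpen_disjoint hx.2.2 hx'.2.2)
  have hsum : ∀ f : ℕ → ℕ, ((∑ σ : LexTriangulation v,
      (hbfin σ z).toFinset.val.map fun β => ⌊l β⌋₊).map f).sum =
      ∑ σ : LexTriangulation v, ∑ β ∈ (hbfin σ z).toFinset, f ⌊l β⌋₊ := by
    intro f
    rw [← Multiset.coe_mapAddMonoidHom, map_sum, ← Multiset.coe_sumAddMonoidHom, map_sum]
    refine Finset.sum_congr rfl fun σ _ => ?_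
    simp only [Multiset.coe_mapAddMonoidHom, Multiset.coe_sumAddMonoidHom, Multiset.map_map]
    rfl
  have hl0 : ∀ σ : LexTriangulation v, ∀ z, ∀ β ∈ σ.box Λ z, (⌊l β⌋₊ : ℝ) = l β :=
    fun σ z β hβ => floor_linearMap hint hβ.1
      (linearMap_nonneg_of_mem_coneOf hl (σ.halfOpen_subset z (σ.box_subset_halfOpen Λ z hβ)))
  have hle : ∀ σ : LexTriangulation v, ∀ z, ∀ β ∈ σ.box Λ z, ⌊l β⌋₊ ≤ d + 1 := by
    intro σ z β hβ
    have := σ.linearMap_box_le hl hβ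
    rw [← hl0 σ z β hβ, hd] at this
    exact_mod_cast this
  have hrefl : ∀ n, (interiorSlice Λ l v z n).ncard = ∑ σ : LexTriangulation v,
      ∑ β ∈ (hbfin σ z).toFinset, binomCount d (d + 1 - ⌊l β⌋₊) n := by
    intro n
    rw [interiorSlice_eq_iUnion hl hspan hzc hz, hcount]
    refine Finset.sum_congr rfl fun σ _ => ?_
    symm
    refine Finset.sum_nbij' (fun β => ∑ i, σ.basis i - β) (fun β => ∑ i, σ.basis i - β)
      ?_ ?_ ?_ ?_ ?_
    · intro β hβ
      simp only [Set.Finite.mem_toFinset] at hβ ⊢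
      exact σ.reflect_mem_box hv hz hβ
    · intro β hβ
      simp only [Set.Finite.mem_toFinset] at hβ ⊢
      have := σ.reflect_mem_box hv hz.neg hβ
      rwa [neg_neg] at this
    · simp
    · simp
    · intro β hβ
      simp only [Set.Finite.mem_toFinset] at hβ
      congr 1
      have h1 := hl0 σ z β hβ
      have h2 := hl0 σ (-z) _ (σ.reflect_mem_box hv hz hβ)
      have h3 : l (∑ i, σ.basis i - β) = (d + 1 : ℕ) - l β := by
        rw [map_sub, map_sum, ← hd, ← σ.card_index]
        simp [σ.basis_apply, hl]
      have h4 := hle σ z β hβ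
      have : (⌊l (∑ i, σ.basis i - β)⌋₊ : ℝ) + ⌊l β⌋₊ = (d + 1 : ℕ) := by
        linarith [h1, h2, h3]
      have : ⌊l (∑ i, σ.basis i - β)⌋₊ + ⌊l β⌋₊ = d + 1 := by exact_mod_cast this
      omega
  refine ⟨∑ σ : LexTriangulation v, (hbfin σ z).toFinset.val.map fun β => ⌊l β⌋₊, ?_, ?_, ?_⟩
  · intro h hh
    obtain ⟨σ, -, hh⟩ := Multiset.mem_sum.1 hh
    obtain ⟨β, hβ, rfl⟩ := Multiset.mem_map.1 hh
    rw [Finset.mem_val, Set.Finite.mem_toFinset] at hβ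
    by_contra hcon
    have hn := hle σ z β hβ
    have he : interiorSlice Λ l v z 0 = ∅ := by
      rw [Set.eq_empty_iff_forall_notMem]
      rintro x ⟨-, hx, r, hr, hxr⟩
      have hz0 := linearMap_nonneg_of_mem_coneOf hl hzc
      have hxr0 := linearMap_nonneg_of_mem_coneOf hl hxr
      rw [map_sub, hx, map_smul, smul_eq_mul, Nat.cast_zero, zero_sub] at hxr0
      have hlz : l z = 0 := le_antisymm (by
        by_contra hcon
        push Not at hcon
        linarith [mul_pos hr hcon]) hz0
      have hne : Nonempty σ.1 := Fintype.card_pos_iff.1 (by rw [σ.card_index, hd]; omega)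
      obtain ⟨i⟩ := hne
      exact hz σ.1 σ.2.1 i (by rw [eq_zero_of_mem_coneOf hl hzc hlz]; simp)
    have h0 := hrefl 0
    rw [he, Set.ncard_empty, eq_comm, Finset.sum_eq_zero_iff] at h0
    have h1 := Finset.sum_eq_zero_iff.1 (h0 σ (Finset.mem_univ _)) β
      ((hbfin σ z).mem_toFinset.2 hβ)
    rw [show d + 1 - ⌊l β⌋₊ = 0 by omega] at h1
    simp [binomCount] at h1
  · intro n
    rw [hsum, coneSlice_eq_iUnion hl hspan hzc hz, hcount]
  · intro n
    rw [hsum, hrefl]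

end Decomposition

section Delta

theorem sum_alternating_choose_mul_binomCount (d h m : ℕ) :
    ∑ j ∈ Finset.range (m + 1),
      (-1 : ℤ) ^ (m - j) * (Nat.choose (d + 1) (m - j) : ℤ) * (binomCount d h j : ℤ) =
      if h = m then 1 else 0 := by
  have h1 : ∀ k, PowerSeries.coeff k ((1 - PowerSeries.X : PowerSeries ℤ) ^ (d + 1)) =
      (-1) ^ k * (d + 1).choose k := by
    intro k
    have : (1 - PowerSeries.X : PowerSeries ℤ) ^ (d + 1) = PowerSeries.rescale (-1 : ℤ)
        (((1 + Polynomial.X : Polynomial ℤ) ^ (d + 1) : Polynomial ℤ) : PowerSeries ℤ) := by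
      simp [PowerSeries.rescale_X, sub_eq_add_neg]
    rw [this, PowerSeries.coeff_rescale, Polynomial.coeff_coe, Polynomial.coeff_one_add_X_pow]
  have h2 : (PowerSeries.mk fun n => (binomCount d h n : ℤ)) =
      PowerSeries.X ^ h * PowerSeries.mk fun n => ((d + n).choose d : ℤ) := by
    ext n
    rw [PowerSeries.coeff_X_pow_mul', PowerSeries.coeff_mk, PowerSeries.coeff_mk, binomCount]
    split_ifs
    · rw [add_comm]
    · rfl
  have h3 := congrArg (PowerSeries.coeff m)
    (congrArg (· * (1 - PowerSeries.X : PowerSeries ℤ) ^ (d + 1)) h2)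
  rw [mul_assoc, ← PowerSeries.mk_one_pow_eq_mk_choose_add, ← mul_pow,
    PowerSeries.mk_one_mul_one_sub_eq_one, one_pow, mul_one, PowerSeries.coeff_X_pow,
    PowerSeries.coeff_mul, Finset.Nat.sum_antidiagonal_eq_sum_range_succ_mk] at h3
  simp only [h1, PowerSeries.coeff_mk] at h3
  rw [if_congr (eq_comm (a := h) (b := m)) rfl rfl, ← h3]
  exact Finset.sum_congr rfl fun j _ => mul_comm _ _

theorem deltaVec_eq_count {N : ℕ} {P : Set (Fin N → ℝ)} {d : ℕ} {H : Multiset ℕ}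
    (h : ∀ n, ehr P n = (H.map fun h => binomCount d h n).sum) (m : ℕ) :
    deltaVec P d m = H.count m := by
  have key : ∀ H : Multiset ℕ, ∑ j ∈ Finset.range (m + 1),
      (-1 : ℤ) ^ (m - j) * (Nat.choose (d + 1) (m - j) : ℤ) *
        ((H.map fun h => binomCount d h j).sum : ℕ) = H.count m := by
    intro H
    induction H using Multiset.induction with
    | empty => simp
    | cons a H ih =>
      simp only [Multiset.map_cons, Multiset.sum_cons, Nat.cast_add, mul_add,
        Finset.sum_add_distrib]
      rw [ih, sum_alternating_choose_mul_binomCount, Multiset.count_cons]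
      simp only [eq_comm (a := a)]
      split_ifs <;> simp [add_comm]
  rw [← key H, deltaVec]
  simp only [h]

end Delta

section Lift

/-- The integer points of `ℝ^d × ℝ`. -/
def intPoints (d : ℕ) : AddSubgroup ((Fin d → ℝ) × ℝ) where
  carrier := {x | (∀ i, ∃ m : ℤ, x.1 i = m) ∧ ∃ m : ℤ, x.2 = m}
  zero_mem' := ⟨fun _ => ⟨0, by simp⟩, 0, by simp⟩
  add_mem' := by
    rintro x y ⟨hx, m, hm⟩ ⟨hy, k, hk⟩
    refine ⟨fun i => ?_, m + k, by simp [hm, hk]⟩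
    obtain ⟨a, ha⟩ := hx i
    obtain ⟨b, hb⟩ := hy i
    exact ⟨a + b, by simp [ha, hb]⟩
  neg_mem' := by
    rintro x ⟨hx, m, hm⟩
    refine ⟨fun i => ?_, -m, by simp [hm]⟩
    obtain ⟨a, ha⟩ := hx i
    exact ⟨-a, by simp [ha]⟩

/-- The lifts `(v i, 1)` of integer vectors. -/
def liftVec {ι : Type*} {d : ℕ} (v : ι → Fin d → ℤ) (i : ι) : (Fin d → ℝ) × ℝ :=
  (fun k => (v i k : ℝ), 1)

variable {ι : Type*} {d : ℕ}

theorem liftVec_mem (v : ι → Fin d → ℤ) (i : ι) : liftVec v i ∈ intPoints d :=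
  ⟨fun k => ⟨v i k, rfl⟩, 1, by simp [liftVec]⟩

theorem snd_liftVec (v : ι → Fin d → ℤ) (i : ι) :
    LinearMap.snd ℝ (Fin d → ℝ) ℝ (liftVec v i) = 1 := rfl

theorem exists_int_of_mem_intPoints : ∀ x ∈ intPoints d,
    ∃ m : ℤ, LinearMap.snd ℝ (Fin d → ℝ) ℝ x = m := fun _ hx => hx.2

theorem finrank_lift : Module.finrank ℝ ((Fin d → ℝ) × ℝ) = d + 1 := by simp

theorem mem_convexHull_range [Fintype ι] {E : Type*} [AddCommGroup E] [Module ℝ E] (w : ι → E)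
    {x : E} : x ∈ convexHull ℝ (Set.range w) ↔
      ∃ c : ι → ℝ, (∀ i, 0 ≤ c i) ∧ ∑ i, c i = 1 ∧ ∑ i, c i • w i = x := by
  classical
  constructor
  · intro hx
    refine convexHull_min (t := {x | ∃ c : ι → ℝ, (∀ i, 0 ≤ c i) ∧ ∑ i, c i = 1 ∧
      ∑ i, c i • w i = x}) ?_ ?_ hx
    · rintro _ ⟨i, rfl⟩
      refine ⟨Pi.single i 1, fun j => ?_, by simp, by simp [Pi.single_apply]⟩
      by_cases h : j = i
      · subst h; simp
      · simp [h]
    · rintro _ ⟨c, hc, hc1, rfl⟩ _ ⟨c', hc', hc1', rfl⟩ a b ha hb hab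
      refine ⟨a • c + b • c', fun i => ?_, ?_, ?_⟩
      · exact add_nonneg (mul_nonneg ha (hc i)) (mul_nonneg hb (hc' i))
      · simp [Finset.sum_add_distrib, ← Finset.mul_sum, hc1, hc1', hab]
      · simp [add_smul, Finset.sum_add_distrib, Finset.smul_sum, smul_smul]
  · rintro ⟨c, hc, hc1, rfl⟩
    exact (convex_convexHull ℝ _).sum_mem (fun i _ => hc i) hc1
      fun i _ => subset_convexHull ℝ _ ⟨i, rfl⟩

theorem sum_smul_liftVec [Fintype ι] (v : ι → Fin d → ℤ) (c : ι → ℝ) :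
    ∑ i, c i • liftVec v i = (∑ i, c i • (fun k => (v i k : ℝ)), ∑ i, c i) := by
  ext <;> simp [liftVec, Prod.fst_sum, Prod.snd_sum]

theorem mem_smul_convexHull_iff [Fintype ι] [Nonempty ι] (v : ι → Fin d → ℤ) (n : ℕ)
    (y : Fin d → ℝ) : y ∈ (n : ℝ) • convexHull ℝ (Set.range fun i k => (v i k : ℝ)) ↔
      (y, (n : ℝ)) ∈ coneOf (liftVec v) := by
  rw [Set.mem_smul_set]
  constructor
  · rintro ⟨x, hx, rfl⟩
    obtain ⟨c, hc, hc1, rfl⟩ := (mem_convexHull_range _).1 hx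
    refine ⟨(n : ℝ) • c, fun i => mul_nonneg n.cast_nonneg (hc i), ?_⟩
    rw [sum_smul_liftVec]
    simp [Finset.smul_sum, smul_smul, ← Finset.mul_sum, hc1]
  · rintro ⟨c, hc, hcy⟩
    rw [sum_smul_liftVec, Prod.mk.injEq] at hcy
    obtain ⟨h1, h2⟩ := hcy
    rcases Nat.eq_zero_or_pos n with rfl | hn
    · obtain ⟨i⟩ := ‹Nonempty ι›
      refine ⟨_, subset_convexHull ℝ _ ⟨i, rfl⟩, ?_⟩
      rw [Nat.cast_zero, Finset.sum_eq_zero_iff_of_nonneg fun i _ => hc i] at h2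
      rw [← h1, Nat.cast_zero, zero_smul]
      exact (Finset.sum_eq_zero fun i hi => by rw [h2 i hi, zero_smul]).symm
    · have hn' : (n : ℝ) ≠ 0 := by positivity
      refine ⟨(n : ℝ)⁻¹ • y, (mem_convexHull_range _).2 ⟨(n : ℝ)⁻¹ • c, fun i => ?_, ?_, ?_⟩, ?_⟩
      · exact mul_nonneg (by positivity) (hc i)
      · simp [← Finset.mul_sum, h2, hn']
      · simp [← h1, Finset.smul_sum, smul_smul]
      · rw [smul_smul, mul_inv_cancel₀ hn', one_smul]

/-- The lattice point `(x, n)`. -/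
def liftPoint (n : ℕ) (x : Fin d → ℤ) : (Fin d → ℝ) × ℝ := (fun k => (x k : ℝ), n)

theorem liftPoint_injective (n : ℕ) : Function.Injective (liftPoint (d := d) n) := by
  intro x y h
  funext k
  have : (x k : ℝ) = y k := congrFun (congrArg Prod.fst h) k
  exact_mod_cast this

theorem coneSlice_eq_image [Fintype ι] [Nonempty ι] (v : ι → Fin d → ℤ) (n : ℕ) :
    coneSlice (intPoints d) (LinearMap.snd ℝ _ ℝ) (liftVec v) n = liftPoint n ''
      {x : Fin d → ℤ | (fun i => (x i : ℝ)) ∈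
        (n : ℝ) • convexHull ℝ (Set.range fun i k => (v i k : ℝ))} := by
  ext x
  simp only [mem_smul_convexHull_iff, coneSlice, Set.mem_image, Set.mem_ofPred_eq]
  constructor
  · rintro ⟨⟨h1, -⟩, h2, h3⟩
    choose f hf using h1
    have : x = liftPoint n f := Prod.ext (funext hf) h2
    exact ⟨f, by rw [this] at h3; exact h3, this.symm⟩
  · rintro ⟨f, h3, rfl⟩
    exact ⟨⟨fun k => ⟨f k, rfl⟩, n, by simp [liftPoint]⟩, rfl, h3⟩

theorem ehr_eq_ncard_coneSlice [Fintype ι] [Nonempty ι] (v : ι → Fin d → ℤ) (n : ℕ) :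
    ehr (convexHull ℝ (Set.range fun i k => (v i k : ℝ))) n =
      (coneSlice (intPoints d) (LinearMap.snd ℝ _ ℝ) (liftVec v) n).ncard := by
  rw [coneSlice_eq_image, Set.ncard_image_of_injective _ (liftPoint_injective n), ehr]

theorem finite_coneSlice_liftVec [Fintype ι] [Nonempty ι] (v : ι → Fin d → ℤ) (n : ℕ) :
    (coneSlice (intPoints d) (LinearMap.snd ℝ _ ℝ) (liftVec v) n).Finite := by
  rw [coneSlice_eq_image]
  refine Set.Finite.image _ ((Set.finite_Icc (-fun k => (n : ℤ) * ∑ i, |v i k|)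
    (fun k => (n : ℤ) * ∑ i, |v i k|)).subset fun x hx => ?_)
  obtain ⟨c, hc, hcx⟩ := (mem_smul_convexHull_iff v n _).1 hx
  rw [sum_smul_liftVec, Prod.mk.injEq] at hcx
  have key : ∀ k, |x k| ≤ (n : ℤ) * ∑ i, |v i k| := by
    intro k
    have hk : ∑ i, c i * (v i k : ℝ) = x k := by simpa using congrFun hcx.1 k
    have : |(x k : ℝ)| ≤ (n : ℝ) * ∑ i, |(v i k : ℝ)| := by
      rw [← hk, Finset.mul_sum]
      refine (Finset.abs_sum_le_sum_abs _ _).trans (Finset.sum_le_sum fun i _ => ?_)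
      rw [abs_mul, abs_of_nonneg (hc i)]
      refine mul_le_mul_of_nonneg_right ?_ (abs_nonneg _)
      rw [← hcx.2]
      exact Finset.single_le_sum (fun i _ => hc i) (Finset.mem_univ i)
    exact_mod_cast this
  exact ⟨fun k => (abs_le.1 (key k)).1, fun k => (abs_le.1 (key k)).2⟩

theorem span_liftVec_eq_top [Nonempty ι] (v : ι → Fin d → ℤ)
    (h : Module.finrank ℝ (vectorSpan ℝ (Set.range fun i k => (v i k : ℝ))) = d) :
    ⊤ ≤ Submodule.span ℝ (Set.range (liftVec v)) := by
  have h1 : vectorSpan ℝ (Set.range fun i k => (v i k : ℝ)) = ⊤ :=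
    Submodule.eq_top_of_finrank_eq (by rw [h]; simp)
  have h2 : vectorSpan ℝ (Set.range fun i k => (v i k : ℝ)) ≤
      (Submodule.span ℝ (Set.range (liftVec v))).comap (LinearMap.inl ℝ _ ℝ) := by
    rw [vectorSpan_def, Submodule.span_le]
    rintro _ ⟨_, ⟨i, rfl⟩, _, ⟨j, rfl⟩, rfl⟩
    have := sub_mem (Submodule.subset_span (R := ℝ) (Set.mem_range_self (f := liftVec v) i))
      (Submodule.subset_span (Set.mem_range_self j))
    simpa [liftVec, Prod.mk_sub_mk] using this
  rw [h1] at h2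
  obtain ⟨i⟩ := ‹Nonempty ι›
  intro x _
  have h3 : x = (x.1 - x.2 • (liftVec v i).1, 0) + x.2 • liftVec v i := by
    ext <;> simp [liftVec]
  rw [h3]
  exact add_mem (h2 (Submodule.mem_top (x := x.1 - x.2 • (liftVec v i).1)))
    (Submodule.smul_mem _ _ (Submodule.subset_span ⟨i, rfl⟩))

theorem exists_extremal_vertices {P : Set (Fin d → ℝ)} (V : Finset (Fin d → ℤ)) (hV : V.Nonempty)
    (hP : P = convexHull ℝ ((fun v i => ((v i : ℝ))) '' (V : Set (Fin d → ℤ)))) :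
    ∃ N, ∃ v : Fin N → Fin d → ℤ, Nonempty (Fin N) ∧
      P = convexHull ℝ (Set.range fun i k => (v i k : ℝ)) ∧
      ∀ i, ∀ c : Fin N → ℝ, (∀ j, 0 ≤ c j) → ∑ j, c j • liftVec v j = liftVec v i →
        ∀ j ≠ i, c j = 0 := by
  classical
  have hex : ∃ N, ∃ v : Fin N → Fin d → ℤ,
      P = convexHull ℝ (Set.range fun i k => (v i k : ℝ)) := by
    refine ⟨V.card, fun i => (V.equivFin.symm i : Fin d → ℤ), ?_⟩
    rw [hP]
    congr 1
    ext x
    simp only [Set.mem_image, Finset.mem_coe, Set.mem_range]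
    constructor
    · rintro ⟨y, hy, rfl⟩
      exact ⟨V.equivFin ⟨y, hy⟩, by simp⟩
    · rintro ⟨i, rfl⟩
      exact ⟨_, (V.equivFin.symm i).2, rfl⟩
  obtain ⟨v, hv⟩ := Nat.find_spec hex
  have hmin := fun m => Nat.find_min hex (m := m)
  generalize Nat.find hex = N at v hv hmin
  have hPne : P.Nonempty := by
    rw [hP]
    obtain ⟨x, hx⟩ := hV
    exact ⟨_, subset_convexHull ℝ _ ⟨x, hx, rfl⟩⟩
  have hN : Nonempty (Fin N) := by
    by_contra hcon
    rw [not_nonempty_iff] at hcon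
    rw [hv, Set.range_eq_empty, convexHull_empty] at hPne
    exact Set.not_nonempty_empty hPne
  refine ⟨N, v, hN, hv, fun i c hc hci => ?_⟩
  rw [sum_smul_liftVec, liftVec, Prod.mk.injEq] at hci
  obtain ⟨h1, h2⟩ := hci
  obtain ⟨M, rfl⟩ : ∃ M, N = M + 1 := ⟨N - 1, by have := i.pos; omega⟩
  rw [Fin.sum_univ_succAbove _ i] at h1 h2
  have hs0 : 0 ≤ ∑ j, c (i.succAbove j) := Finset.sum_nonneg fun j _ => hc _
  rcases hs0.eq_or_lt with hs | hs
  · intro j hj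
    obtain ⟨j, rfl⟩ := Fin.exists_succAbove_eq hj
    exact (Finset.sum_eq_zero_iff_of_nonneg fun j _ => hc _).1 hs.symm j (Finset.mem_univ _)
  exfalso
  refine hmin M (Nat.lt_succ_self M) ⟨fun j => v (i.succAbove j), hv.trans ?_⟩
  refine subset_antisymm (convexHull_min ?_ (convex_convexHull ℝ _)) (convexHull_mono ?_)
  · rintro _ ⟨j, rfl⟩
    by_cases hj : j = i
    · subst hj
      rw [mem_convexHull_range]
      refine ⟨(∑ k, c (j.succAbove k))⁻¹ • fun k => c (j.succAbove k), fun k => ?_, ?_, ?_⟩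
      · exact mul_nonneg (inv_nonneg.2 hs.le) (hc _)
      · simp [← Finset.mul_sum, hs.ne']
      · simp only [Pi.smul_apply, smul_assoc, ← Finset.smul_sum]
        rw [inv_smul_eq_iff₀ hs.ne']
        have : ∑ k, c (j.succAbove k) = 1 - c j := by linarith
        rw [this, sub_smul, one_smul, eq_sub_iff_add_eq, add_comm]
        exact h1
    · obtain ⟨k, rfl⟩ := Fin.exists_succAbove_eq hj
      exact subset_convexHull ℝ _ ⟨k, rfl⟩
  · rintro _ ⟨j, rfl⟩
    exact ⟨i.succAbove j, rfl⟩

end Lift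

section Simplex

theorem eq_zero_or_one_of_lt {a : ℝ} {m : ℤ} (h : a = m) (h1 : -1 < a) (h2 : a < 2) :
    a = 0 ∨ a = 1 := by
  rw [h] at h1 h2
  have h1' : -1 < m := by exact_mod_cast h1
  have h2' : m < 2 := by exact_mod_cast h2
  have : m = 0 ∨ m = 1 := by omega
  rcases this with rfl | rfl <;> simp [h]

theorem fractional_klein {f g h : ℝ} (hf : 0 ≤ f ∧ f < 1) (hg : 0 ≤ g ∧ g < 1)
    (hh : 0 ≤ h ∧ h < 1) (h1 : ∃ m : ℤ, f + g - h = m) (h2 : ∃ m : ℤ, f + h - g = m)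
    (h3 : ∃ m : ℤ, g + h - f = m) :
    h ≤ f + g ∧ g ≤ f + h ∧ f ≤ g + h ∧ f + g + h ≤ 1 := by
  obtain ⟨m, h1⟩ := h1
  obtain ⟨n, h2⟩ := h2
  obtain ⟨k, h3⟩ := h3
  rcases eq_zero_or_one_of_lt h1 (by linarith) (by linarith) with h1 | h1 <;>
  rcases eq_zero_or_one_of_lt h2 (by linarith) (by linarith) with h2 | h2 <;>
  rcases eq_zero_or_one_of_lt h3 (by linarith) (by linarith) with h3 | h3 <;>
  refine ⟨?_, ?_, ?_, ?_⟩ <;> linarith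

theorem fractional_cyclic {f g h : ℝ} (hf : 0 ≤ f ∧ f < 1) (hg : 0 ≤ g ∧ g < 1)
    (hh : 0 ≤ h ∧ h < 1) (h1 : ∃ m : ℤ, f + g - 0 = m) (h2 : ∃ m : ℤ, f + h - g = m)
    (h3 : ∃ m : ℤ, g + h - f = m) :
    g ≤ f + h ∧ f ≤ g + h ∧ 2 * h ≤ f + g ∧ f + g ≤ 1 := by
  obtain ⟨m, h1⟩ := h1
  obtain ⟨n, h2⟩ := h2
  obtain ⟨k, h3⟩ := h3
  rcases eq_zero_or_one_of_lt h1 (by linarith) (by linarith) with h1 | h1 <;>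
  rcases eq_zero_or_one_of_lt h2 (by linarith) (by linarith) with h2 | h2 <;>
  rcases eq_zero_or_one_of_lt h3 (by linarith) (by linarith) with h3 | h3 <;>
  refine ⟨?_, ?_, ?_, ?_⟩ <;> linarith

theorem eq_zero_of_fractional_int {κ : Type*} {u : κ → ℝ} (hu : ∀ i, 0 ≤ u i ∧ u i < 1)
    (h : ∀ i, ∃ m : ℤ, u i = m) : u = 0 := by
  funext i
  obtain ⟨m, hm⟩ := h i
  have := hu i
  rcases eq_zero_or_one_of_lt hm (by linarith) (by linarith) with h | h
  · exact h
  · linarith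

theorem eq_of_fractional_int {κ : Type*} {u v : κ → ℝ} (hu : ∀ i, 0 ≤ u i ∧ u i < 1)
    (hv : ∀ i, 0 ≤ v i ∧ v i < 1) (h : ∀ i, ∃ m : ℤ, u i - v i = m) : u = v := by
  funext i
  obtain ⟨m, hm⟩ := h i
  have hm' : v i - u i = (-m : ℤ) := by push_cast; linarith
  have := hu i
  have := hv i
  rcases eq_zero_or_one_of_lt hm (by linarith) (by linarith) with h | h <;>
  rcases eq_zero_or_one_of_lt hm' (by linarith) (by linarith) with h' | h' <;> linarith

theorem mem_halfOpenBox_univ {κ E : Type*} [AddCommGroup E] [Module ℝ E] {Λ : AddSubgroup E} {b : Module.Basis κ ℝ E} {x : E} :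
    x ∈ halfOpenBox Λ b Set.univ ↔ x ∈ Λ ∧ ∀ i, 0 ≤ b.repr x i ∧ b.repr x i < 1 := by
  simp [halfOpenBox]

variable {κ : Type*} [Fintype κ]

theorem sum_klein {u v w : κ → ℝ} (hu : ∀ i, 0 ≤ u i ∧ u i < 1) (hv : ∀ i, 0 ≤ v i ∧ v i < 1)
    (hw : ∀ i, 0 ≤ w i ∧ w i < 1) (h1 : ∀ i, ∃ m : ℤ, u i + v i - w i = m)
    (h2 : ∀ i, ∃ m : ℤ, u i + w i - v i = m) (h3 : ∀ i, ∃ m : ℤ, v i + w i - u i = m)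
    {p q r : ℕ} (hp : ∑ i, u i = p) (hq : ∑ i, v i = q) (hr : ∑ i, w i = r) :
    r ≤ p + q ∧ q ≤ p + r ∧ p ≤ q + r ∧ p + q + r ≤ Fintype.card κ := by
  have key := fun i => fractional_klein (hu i) (hv i) (hw i) (h1 i) (h2 i) (h3 i)
  have k1 := Finset.sum_le_sum fun i (_ : i ∈ Finset.univ) => (key i).1
  have k2 := Finset.sum_le_sum fun i (_ : i ∈ Finset.univ) => (key i).2.1
  have k3 := Finset.sum_le_sum fun i (_ : i ∈ Finset.univ) => (key i).2.2.1
  have k4 := Finset.sum_le_sum fun i (_ : i ∈ Finset.univ) => (key i).2.2.2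
  simp only [Finset.sum_add_distrib, hp, hq, hr, Finset.sum_const, Finset.card_univ, nsmul_eq_mul,
    mul_one] at k1 k2 k3 k4
  exact ⟨by exact_mod_cast k1, by exact_mod_cast k2, by exact_mod_cast k3, by exact_mod_cast k4⟩

theorem sum_cyclic {u v w : κ → ℝ} (hu : ∀ i, 0 ≤ u i ∧ u i < 1) (hv : ∀ i, 0 ≤ v i ∧ v i < 1)
    (hw : ∀ i, 0 ≤ w i ∧ w i < 1) (h1 : ∀ i, ∃ m : ℤ, u i + v i - 0 = m)
    (h2 : ∀ i, ∃ m : ℤ, u i + w i - v i = m) (h3 : ∀ i, ∃ m : ℤ, v i + w i - u i = m)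
    {p q r : ℕ} (hp : ∑ i, u i = p) (hq : ∑ i, v i = q) (hr : ∑ i, w i = r) :
    q ≤ p + r ∧ p ≤ q + r ∧ 2 * r ≤ p + q ∧ p + q ≤ Fintype.card κ := by
  have key := fun i => fractional_cyclic (hu i) (hv i) (hw i) (h1 i) (h2 i) (h3 i)
  have k1 := Finset.sum_le_sum fun i (_ : i ∈ Finset.univ) => (key i).1
  have k2 := Finset.sum_le_sum fun i (_ : i ∈ Finset.univ) => (key i).2.1
  have k3 := Finset.sum_le_sum fun i (_ : i ∈ Finset.univ) => (key i).2.2.1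
  have k4 := Finset.sum_le_sum fun i (_ : i ∈ Finset.univ) => (key i).2.2.2
  simp only [Finset.sum_add_distrib, ← Finset.mul_sum, hp, hq, hr, Finset.sum_const,
    Finset.card_univ, nsmul_eq_mul, mul_one] at k1 k2 k3 k4
  exact ⟨by exact_mod_cast k1, by exact_mod_cast k2, by exact_mod_cast k3, by exact_mod_cast k4⟩

/-- The constraints on the ages of the nonzero elements of a group of order four
acting diagonally. -/
theorem fractional_group_conditions {u v w : κ → ℝ} (hu : ∀ i, 0 ≤ u i ∧ u i < 1)
    (hv : ∀ i, 0 ≤ v i ∧ v i < 1) (hw : ∀ i, 0 ≤ w i ∧ w i < 1) (hu0 : u ≠ 0) (hv0 : v ≠ 0)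
    (hw0 : w ≠ 0) (huv : u ≠ v) (huw : u ≠ w) (hvw : v ≠ w)
    (hadd : ∀ x ∈ ({0, u, v, w} : Set (κ → ℝ)), ∀ y ∈ ({0, u, v, w} : Set (κ → ℝ)),
      ∃ z ∈ ({0, u, v, w} : Set (κ → ℝ)), ∀ i, ∃ m : ℤ, x i + y i - z i = m)
    {p q r : ℕ} (hp : ∑ i, u i = p) (hq : ∑ i, v i = q) (hr : ∑ i, w i = r)
    (hpq : p ≤ q) (hqr : q ≤ r) :
    r ≤ p + q ∧ p + r ≤ Fintype.card κ ∧ q ≤ Fintype.card κ / 2 ∧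
      (2 * q ≤ p + r ∨ q + r ≤ Fintype.card κ) := by
  have hpair : ∀ x y t : κ → ℝ, (∀ i, 0 ≤ x i ∧ x i < 1) → (∀ i, 0 ≤ y i ∧ y i < 1) →
      x ≠ 0 → y ≠ 0 → x ∈ ({0, u, v, w} : Set (κ → ℝ)) → y ∈ ({0, u, v, w} : Set (κ → ℝ)) →
      (∀ z ∈ ({0, u, v, w} : Set (κ → ℝ)), z = 0 ∨ z = x ∨ z = y ∨ z = t) →
      (∀ i, ∃ m : ℤ, x i + y i - 0 = m) ∨ ∀ i, ∃ m : ℤ, x i + y i - t i = m := by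
    intro x y t hx hy hx0 hy0 hxm hym ht
    obtain ⟨z, hz, hz'⟩ := hadd x hxm y hym
    rcases ht z hz with rfl | rfl | rfl | rfl
    · exact Or.inl hz'
    · refine absurd (eq_zero_of_fractional_int hy fun i => ?_) hy0
      obtain ⟨m, hm⟩ := hz' i
      exact ⟨m, by linarith⟩
    · refine absurd (eq_zero_of_fractional_int hx fun i => ?_) hx0
      obtain ⟨m, hm⟩ := hz' i
      exact ⟨m, by linarith⟩
    · exact Or.inr hz'
  have hneg : ∀ x y t : κ → ℝ, (∀ i, 0 ≤ y i ∧ y i < 1) → (∀ i, 0 ≤ t i ∧ t i < 1) → y ≠ t →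
      (∀ i, ∃ m : ℤ, x i + y i - 0 = m) → ¬ ∀ i, ∃ m : ℤ, x i + t i - 0 = m := by
    intro x y t hy ht hyt h h'
    refine hyt (eq_of_fractional_int hy ht fun i => ?_)
    obtain ⟨m, hm⟩ := h i
    obtain ⟨n, hn⟩ := h' i
    exact ⟨m - n, by push_cast; linarith⟩
  have huv' := hpair u v w hu hv hu0 hv0 (by simp) (by simp) (by simp)
  have huw' := hpair u w v hu hw hu0 hw0 (by simp) (by simp)
    (by simp only [Set.mem_insert_iff, Set.mem_singleton_iff]; tauto)
  have hvw' := hpair v w u hv hw hv0 hw0 (by simp) (by simp)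
    (by simp only [Set.mem_insert_iff, Set.mem_singleton_iff]; tauto)
  have hcomm : ∀ x y : κ → ℝ, (∀ i, ∃ m : ℤ, x i + y i - 0 = m) →
      ∀ i, ∃ m : ℤ, y i + x i - 0 = m := by
    intro x y h i
    rw [add_comm]
    exact h i
  have hcomm' : ∀ x y t : κ → ℝ, (∀ i, ∃ m : ℤ, x i + y i - t i = m) →
      ∀ i, ∃ m : ℤ, y i + x i - t i = m := by
    intro x y t h i
    rw [add_comm]
    exact h i
  rcases huv' with a | a
  · have b := huw'.resolve_left (hneg u v w hv hw hvw a)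
    have c := hvw'.resolve_left (hneg v u w hu hw huw (hcomm _ _ a))
    have := sum_cyclic hu hv hw a b c hp hq hr
    omega
  rcases huw' with b | b
  · have c := hvw'.resolve_left fun h => hneg w u v hu hv huv (hcomm _ _ b) (hcomm _ _ h)
    have := sum_cyclic hu hw hv b a (hcomm' _ _ _ c) hp hr hq
    omega
  rcases hvw' with c | c
  · have := sum_cyclic hv hw hu c (hcomm' _ _ _ a) (hcomm' _ _ _ b) hq hr hp
    omega
  · have := sum_klein hu hv hw a b c hp hq hr
    omega

variable {E : Type*} [AddCommGroup E] [Module ℝ E]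

theorem coneSlice_basis (Λ : AddSubgroup E) (l : E →ₗ[ℝ] ℝ) (b : Module.Basis κ ℝ E) (n : ℕ) :
    coneSlice Λ l b n = {x | x ∈ Λ ∧ l x = n ∧ x ∈ halfOpenCone b Set.univ} := by
  ext x
  simp only [coneSlice, halfOpenCone, coneOf, Set.mem_ofPred_eq, Set.mem_univ, true_implies,
    not_true_eq_false, false_implies, and_true]
  refine and_congr_right fun _ => and_congr_right fun _ => ⟨?_, fun h => ⟨_, h, b.sum_repr x⟩⟩
  rintro ⟨c, hc, rfl⟩ i
  rw [b.repr_sum_self]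
  exact hc i

theorem linearMap_nonneg_of_mem_box {Λ : AddSubgroup E} {l : E →ₗ[ℝ] ℝ} {b : Module.Basis κ ℝ E}
    (hl : ∀ i, l (b i) = 1) {x : E} (hx : x ∈ halfOpenBox Λ b Set.univ) : 0 ≤ l x := by
  rw [linearMap_eq_sum_repr b hl]
  exact Finset.sum_nonneg fun i _ => ((mem_halfOpenBox_univ.1 hx).2 i).1

theorem floor_box_le {Λ : AddSubgroup E} {l : E →ₗ[ℝ] ℝ} {b : Module.Basis κ ℝ E}
    (hl : ∀ i, l (b i) = 1) (hint : ∀ x ∈ Λ, ∃ m : ℤ, l x = m) {d : ℕ}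
    (hκ : Fintype.card κ = d + 1) {x : E} (hx : x ∈ halfOpenBox Λ b Set.univ) :
    ⌊l x⌋₊ ≤ d := by
  have h1 := floor_linearMap hint hx.1 (linearMap_nonneg_of_mem_box hl hx)
  have hne : Nonempty κ := Fintype.card_pos_iff.1 (by omega)
  have h2 : l x < (d + 1 : ℕ) := by
    rw [linearMap_eq_sum_repr b hl, ← hκ, ← Finset.card_univ]
    calc ∑ i, b.repr x i < ∑ i : κ, (1 : ℝ) :=
          Finset.sum_lt_sum_of_nonempty Finset.univ_nonempty
            fun i _ => ((mem_halfOpenBox_univ.1 hx).2 i).2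
      _ = _ := by simp
  rw [← h1] at h2
  have : ⌊l x⌋₊ < d + 1 := by exact_mod_cast h2
  omega

theorem finite_halfOpenBox_univ {Λ : AddSubgroup E} {l : E →ₗ[ℝ] ℝ} {b : Module.Basis κ ℝ E}
    (hl : ∀ i, l (b i) = 1) (hint : ∀ x ∈ Λ, ∃ m : ℤ, l x = m)
    (hfin : ∀ n, (coneSlice Λ l b n).Finite) {d : ℕ} (hκ : Fintype.card κ = d + 1) :
    (halfOpenBox Λ b Set.univ).Finite := by
  refine ((Set.finite_Iic d).biUnion fun n _ => hfin n).subset fun x hx => ?_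
  refine Set.mem_biUnion (x := ⌊l x⌋₊) (floor_box_le hl hint hκ hx) ?_
  rw [coneSlice_basis]
  refine ⟨hx.1, (floor_linearMap hint hx.1 (linearMap_nonneg_of_mem_box hl hx)).symm, fun i => ?_⟩
  exact ⟨fun _ => ((mem_halfOpenBox_univ.1 hx).2 i).1, fun h => absurd (Set.mem_univ i) h⟩

theorem exists_add_mem_box {Λ : AddSubgroup E} {b : Module.Basis κ ℝ E} (hb : ∀ i, b i ∈ Λ) {x : E}
    (hx : x ∈ Λ) : ∃ z ∈ halfOpenBox Λ b Set.univ, ∀ i, ∃ m : ℤ, b.repr x i - b.repr z i = m := by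
  classical
  have h : ∀ i, b.repr (x - ∑ i, (⌊b.repr x i⌋ : ℝ) • b i) i = Int.fract (b.repr x i) := by
    intro i
    simp [Finsupp.single_apply]
  refine ⟨x - ∑ i, (⌊b.repr x i⌋ : ℝ) • b i, mem_halfOpenBox_univ.2
    ⟨sub_mem hx (sum_mem fun i _ => ?_), fun i => ?_⟩, fun i => ⟨⌊b.repr x i⌋, ?_⟩⟩
  · rw [Int.cast_smul_eq_zsmul]; exact zsmul_mem (hb i) _
  · rw [h]; exact ⟨Int.fract_nonneg _, Int.fract_lt_one _⟩
  · rw [h]; simp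

theorem simplex_conditions {Λ : AddSubgroup E} {l : E →ₗ[ℝ] ℝ} (b : Module.Basis κ ℝ E)
    (hb : ∀ i, b i ∈ Λ) (hl : ∀ i, l (b i) = 1) (hint : ∀ x ∈ Λ, ∃ m : ℤ, l x = m)
    (hfin : (halfOpenBox Λ b Set.univ).Finite) {p q r : ℕ} (hpq : p ≤ q) (hqr : q ≤ r)
    (hH : (hfin.toFinset.val.map fun β => ⌊l β⌋₊) = {0, p, q, r}) :
    r ≤ p + q ∧ p + r ≤ Fintype.card κ ∧ q ≤ Fintype.card κ / 2 ∧
      (2 * q ≤ p + r ∨ q + r ≤ Fintype.card κ) := by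
  classical
  obtain ⟨y₀, hy₀, hf₀, h1⟩ := (Multiset.map_eq_cons _ _ _ _).2 hH
  obtain ⟨y₁, hy₁, hf₁, h2⟩ := (Multiset.map_eq_cons _ _ _ _).2 h1
  obtain ⟨y₂, hy₂, hf₂, h3⟩ := (Multiset.map_eq_cons _ _ _ _).2 h2
  obtain ⟨y₃, hf₃, hy₃⟩ := Multiset.map_eq_singleton.1 h3
  have hval : hfin.toFinset.val = y₀ ::ₘ y₁ ::ₘ y₂ ::ₘ {y₃} := by
    rw [← hf₃, Multiset.cons_erase hy₂, Multiset.cons_erase hy₁, Multiset.cons_erase hy₀]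
  have hnd := hfin.toFinset.nodup
  rw [hval] at hnd
  have hmem : ∀ x, x ∈ halfOpenBox Λ b Set.univ ↔ x = y₀ ∨ x = y₁ ∨ x = y₂ ∨ x = y₃ := by
    intro x
    rw [← hfin.mem_toFinset, ← Finset.mem_val, hval]
    simp
  have hheight : ∀ x ∈ halfOpenBox Λ b Set.univ, ∑ i, b.repr x i = ⌊l x⌋₊ := by
    intro x hx
    rw [floor_linearMap hint hx.1 (linearMap_nonneg_of_mem_box hl hx), linearMap_eq_sum_repr b hl]
  have m₀ := (hmem y₀).2 (by simp)
  have m₁ := (hmem y₁).2 (by simp)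
  have m₂ := (hmem y₂).2 (by simp)
  have m₃ := (hmem y₃).2 (by simp)
  have hy0 : y₀ = 0 := by
    have h := hheight _ m₀
    rw [hf₀, Nat.cast_zero,
      Finset.sum_eq_zero_iff_of_nonneg fun i _ => ((mem_halfOpenBox_univ.1 m₀).2 i).1] at h
    exact b.ext_elem fun i => by rw [h i (Finset.mem_univ i)]; simp
  subst hy0
  have hinj : ∀ x y : E, (fun i => b.repr x i) = (fun i => b.repr y i) → x = y :=
    fun x y h => b.ext_elem fun i => congrFun h i
  have hmem' : ∀ u : κ → ℝ, u ∈ ({0, fun i => b.repr y₁ i, fun i => b.repr y₂ i,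
      fun i => b.repr y₃ i} : Set (κ → ℝ)) ↔
      ∃ x ∈ halfOpenBox Λ b Set.univ, u = fun i => b.repr x i := by
    intro u
    simp only [hmem, exists_eq_or_imp, exists_eq_left, Set.mem_insert_iff, Set.mem_singleton_iff]
    refine or_congr_left ?_
    simp only [map_zero, Finsupp.coe_zero, Pi.zero_apply]
    rfl
  simp only [Multiset.nodup_cons, Multiset.mem_cons, Multiset.mem_singleton, not_or] at hnd
  obtain ⟨⟨n01, n02, n03⟩, ⟨n12, n13⟩, n23, -⟩ := hnd
  have hne0 : ∀ y : E, 0 ≠ y → (fun i => b.repr y i) ≠ 0 := by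
    intro y hy h
    exact hy (hinj 0 y (by rw [h]; simp; rfl))
  refine fractional_group_conditions (mem_halfOpenBox_univ.1 m₁).2 (mem_halfOpenBox_univ.1 m₂).2
    (mem_halfOpenBox_univ.1 m₃).2 (hne0 _ n01) (hne0 _ n02) (hne0 _ n03)
    (fun h => n12 (hinj _ _ h)) (fun h => n13 (hinj _ _ h)) (fun h => n23 (hinj _ _ h)) ?_
    ((hheight _ m₁).trans (by rw [hf₁])) ((hheight _ m₂).trans (by rw [hf₂]))
    ((hheight _ m₃).trans (by rw [hy₃])) hpq hqr
  intro x hx y hy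
  obtain ⟨x, hx', rfl⟩ := (hmem' x).1 hx
  obtain ⟨y, hy', rfl⟩ := (hmem' y).1 hy
  obtain ⟨z, hz, hz'⟩ := exists_add_mem_box hb (add_mem hx'.1 hy'.1)
  refine ⟨_, (hmem' _).2 ⟨z, hz, rfl⟩, fun i => ?_⟩
  simpa using hz' i

end Simplex

section Circuit

variable {E : Type*} [AddCommGroup E] [Module ℝ E] {N : ℕ}

/-- Every `v i` spans an extreme ray of the cone over `v`, and these rays are distinct. -/
def IsExtremal (v : Fin N → E) : Prop :=
  ∀ i, ∀ c : Fin N → ℝ, (∀ j, 0 ≤ c j) → ∑ j, c j • v j = v i → ∀ j ≠ i, c j = 0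

theorem IsExtremal.injective {v : Fin N → E} (hv : IsExtremal v) : Function.Injective v := by
  classical
  intro i j hij
  by_contra hne
  have := hv i (Pi.single j 1) (fun k => by
    by_cases h : k = j
    · subst h; simp
    · simp [h]) (by simp [Pi.single_apply, hij]) j (Ne.symm hne)
  simp at this

theorem IsExtremal.eq_of_two_smul {v : Fin N → E} (hv : IsExtremal v) {p r s : Fin N}
    (h : v p + v p = v r + v s) : p = r := by
  classical
  by_contra hne
  have := hv p (Pi.single r (1 / 2) + Pi.single s (1 / 2)) (fun k => by
    refine add_nonneg ?_ ?_ <;> rw [Pi.single_apply] <;> split_ifs <;> norm_num) (by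
    simp only [Pi.add_apply, add_smul, Finset.sum_add_distrib, Pi.single_apply, ite_smul, zero_smul,
      Finset.sum_ite_eq', Finset.mem_univ, if_true]
    rw [← smul_add, ← h, ← two_smul ℝ (v p), smul_smul]
    norm_num) r (Ne.symm hne)
  have h2 : (0 : ℝ) ≤ (Pi.single s (1 / 2) : Fin N → ℝ) r := by
    rw [Pi.single_apply]; split_ifs <;> norm_num
  simp only [Pi.add_apply, Pi.single_eq_same] at this
  linarith

/-- The coefficients of the relation `v p + v q = v r + v s`. -/
def circuitVec (p q r s : Fin N) : Fin N → ℝ :=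
  Pi.single p 1 + Pi.single q 1 - Pi.single r 1 - Pi.single s 1

/-- All linear relations between the `v i` are multiples of `v p + v q = v r + v s`. -/
structure IsCircuit (v : Fin N → E) (p q r s : Fin N) : Prop where
  hpq : p ≠ q
  hpr : p ≠ r
  hps : p ≠ s
  hqr : q ≠ r
  hqs : q ≠ s
  hrs : r ≠ s
  rel : v p + v q = v r + v s
  ker : ∀ c : Fin N → ℝ, ∑ i, c i • v i = 0 → ∀ i, c i = c p * circuitVec p q r s i

theorem circuitVec_comm (p q r s : Fin N) : circuitVec p q r s = circuitVec q p r s := by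
  simp [circuitVec, add_comm]

theorem circuitVec_left {p q r s : Fin N} (h1 : p ≠ q) (h2 : p ≠ r) (h3 : p ≠ s) :
    circuitVec p q r s p = 1 := by
  simp [circuitVec, h1, h2, h3]

theorem IsCircuit.symm {v : Fin N → E} {p q r s : Fin N} (h : IsCircuit v p q r s) :
    IsCircuit v q p r s where
  hpq := h.hpq.symm
  hpr := h.hqr
  hps := h.hqs
  hqr := h.hpr
  hqs := h.hps
  hrs := h.hrs
  rel := by rw [add_comm, h.rel]
  ker c hc i := by
    rw [h.ker c hc i, h.ker c hc q, circuitVec_comm,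
      circuitVec_left h.hpq.symm h.hqr h.hqs, mul_one]

theorem sum_circuitVec_smul (v : Fin N → E) (p q r s : Fin N) :
    ∑ i, circuitVec p q r s i • v i = v p + v q - v r - v s := by
  simp [circuitVec, sub_smul, add_smul, Finset.sum_add_distrib, Pi.single_apply]

theorem isCircuit_of_rel {v : Fin N → E} {d : ℕ} (hd : Module.finrank ℝ E = d + 1)
    (hN : N = d + 2) (hspan : ⊤ ≤ Submodule.span ℝ (Set.range v)) (hv : IsExtremal v)
    {p q r s : Fin N} (hrel : v p + v q = v r + v s) (hne : s(p, q) ≠ s(r, s)) :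
    IsCircuit v p q r s := by
  have hpr : p ≠ r := by
    rintro rfl
    exact hne (by rw [hv.injective (add_left_cancel hrel)])
  have hps : p ≠ s := by
    rintro rfl
    rw [add_comm (v r)] at hrel
    exact hne (by rw [hv.injective (add_left_cancel hrel), Sym2.eq_swap])
  have hqr : q ≠ r := by
    rintro rfl
    rw [add_comm (v p)] at hrel
    exact hne (by rw [hv.injective (add_left_cancel hrel), Sym2.eq_swap])
  have hqs : q ≠ s := by
    rintro rfl
    exact hne (by rw [hv.injective (add_right_cancel hrel)])
  have hpq : p ≠ q := by
    rintro rfl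
    exact hpr (hv.eq_of_two_smul hrel)
  have hrs : r ≠ s := by
    rintro rfl
    exact hpr (hv.eq_of_two_smul hrel.symm).symm
  refine ⟨hpq, hpr, hps, hqr, hqs, hrs, hrel, fun c hc i => ?_⟩
  let L : (Fin N → ℝ) →ₗ[ℝ] E := Fintype.linearCombination ℝ v
  have hLapp : ∀ c, L c = ∑ i, c i • v i := fun c => Fintype.linearCombination_apply ℝ v c
  have hsurj : LinearMap.range L = ⊤ := by
    rw [Fintype.range_linearCombination]
    exact top_le_iff.1 hspan
  have hker : Module.finrank ℝ (LinearMap.ker L) = 1 := by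
    have h := LinearMap.finrank_range_add_finrank_ker L
    rw [hsurj, finrank_top, hd, Module.finrank_fin_fun] at h
    omega
  have hw : circuitVec p q r s ∈ LinearMap.ker L := by
    rw [LinearMap.mem_ker, hLapp, sum_circuitVec_smul, hrel]
    abel
  have hw0 : (⟨_, hw⟩ : LinearMap.ker L) ≠ 0 := by
    intro h
    have := congrFun (congrArg Subtype.val h) p
    simp [circuitVec_left hpq hpr hps] at this
  obtain ⟨a, ha⟩ := (finrank_eq_one_iff_of_nonzero' _ hw0).1 hker
    ⟨c, by rw [LinearMap.mem_ker, hLapp, hc]⟩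
  have ha' : ∀ i, a * circuitVec p q r s i = c i := fun i => congrFun (congrArg Subtype.val ha) i
  rw [← ha' i, ← ha' p, circuitVec_left hpq hpr hps, mul_one]

/-- The sums of `n` of the vectors `v i`. -/
def natSlice (v : Fin N → E) (n : ℕ) : Set E :=
  {x | ∃ f : Fin N → ℕ, ∑ i, f i = n ∧ ∑ i, (f i : ℝ) • v i = x}

theorem natSlice_subset {Λ : AddSubgroup E} {l : E →ₗ[ℝ] ℝ} {v : Fin N → E}
    (hv : ∀ i, v i ∈ Λ) (hl : ∀ i, l (v i) = 1) (n : ℕ) : natSlice v n ⊆ coneSlice Λ l v n := by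
  rintro _ ⟨f, hf, rfl⟩
  refine ⟨sum_mem fun i _ => ?_, ?_, _, fun i => Nat.cast_nonneg (f i), rfl⟩
  · rw [Nat.cast_smul_eq_nsmul]; exact nsmul_mem (hv i) _
  · rw [linearMap_sum_smul hl, ← hf, Nat.cast_sum]

theorem add_mem_natSlice {v : Fin N → E} {n : ℕ} {x : E} (hx : x ∈ natSlice v n) (i : Fin N) :
    x + v i ∈ natSlice v (n + 1) := by
  obtain ⟨f, hf, rfl⟩ := hx
  refine ⟨f + Pi.single i 1, ?_, ?_⟩
  · simp [Finset.sum_add_distrib, hf]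
  · simp [Finset.sum_add_distrib, add_smul, Pi.single_apply]

theorem card_filter_piAntidiag {d : ℕ} (hN : N = d + 2) {p q : Fin N} (hpq : p ≠ q) (n : ℕ) :
    binomCount d 0 n + binomCount d 1 n ≤
      ((Finset.piAntidiag (Finset.univ : Finset (Fin N)) n).filter
        fun f => f p = 0 ∨ f q = 0).card := by
  have h1 := card_piAntidiag_univ (κ := Fin N) (d := d + 1) (by simp [hN]) n
  rw [← Finset.card_filter_add_card_filter_not fun f => f p = 0 ∨ f q = 0] at h1
  have h2 : ((Finset.piAntidiag (Finset.univ : Finset (Fin N)) n).filter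
      fun f => ¬(f p = 0 ∨ f q = 0)).card ≤ if 2 ≤ n then (n - 2 + (d + 1)).choose (d + 1) else 0 := by
    have hsub : ∀ f ∈ (Finset.piAntidiag (Finset.univ : Finset (Fin N)) n).filter
        (fun f => ¬(f p = 0 ∨ f q = 0)),
        ∑ i, (f - Pi.single p 1 - Pi.single q 1 : Fin N → ℕ) i + 2 = n ∧
          f - Pi.single p 1 - Pi.single q 1 + Pi.single p 1 + Pi.single q 1 = f := by
      intro f hf
      simp only [Finset.mem_filter, Finset.mem_piAntidiag, Finset.mem_univ, implies_true,
        and_true, not_or] at hf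
      have he : f - Pi.single p 1 - Pi.single q 1 + Pi.single p 1 + Pi.single q 1 = f := by
        funext i
        simp only [Pi.add_apply, Pi.sub_apply, Pi.single_apply]
        split_ifs with a b b
        · exact absurd (a.symm.trans b) hpq
        · subst a; omega
        · subst b; omega
        · omega
      refine ⟨?_, he⟩
      have := congrArg (fun g : Fin N → ℕ => ∑ i, g i) he
      simp only [Pi.add_apply, Finset.sum_add_distrib, Finset.sum_pi_single', Finset.mem_univ,
        if_true] at this
      rw [← hf.1]
      exact (add_assoc _ _ _).symm.trans this
    split_ifs with hn
    · rw [← card_piAntidiag_univ (κ := Fin N) (d := d + 1) (by simp [hN]) (n - 2)]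
      refine Finset.card_le_card_of_injOn (fun f => f - Pi.single p 1 - Pi.single q 1) ?_ ?_
      · intro f hf
        have := (hsub f hf).1
        simp only [Finset.mem_coe, Finset.mem_piAntidiag, Finset.mem_univ, implies_true, and_true]
        exact Nat.eq_sub_of_add_eq this
      · intro f hf g hg hfg
        rw [← (hsub f hf).2, ← (hsub g hg).2]
        simp only at hfg
        rw [hfg]
    · rw [Nat.le_zero, Finset.card_eq_zero, Finset.eq_empty_iff_forall_notMem]
      intro f hf
      have := (hsub f hf).1
      omega
  simp only [binomCount, Nat.zero_le, if_true, Nat.sub_zero]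
  have h3 : (n + (d + 1)).choose (d + 1) = (n + d).choose d + (n + d).choose (d + 1) :=
    Nat.choose_succ_succ _ _
  rcases n with _ | _ | n
  · rw [if_neg (by omega)] at h2 ⊢
    rw [zero_add, Nat.choose_self] at h1 ⊢
    omega
  · rw [if_neg (by omega)] at h2
    rw [if_pos (by omega), Nat.sub_self, zero_add, zero_add, Nat.choose_self]
    rw [zero_add] at h1 h2 h3
    have h4 : (1 + d).choose (d + 1) = 1 := by rw [add_comm, Nat.choose_self]
    omega
  · have h4 : (n + 1 + 1 + d).choose (d + 1) =
        (n + 1 + d).choose d + (n + 1 + d).choose (d + 1) := by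
      rw [show n + 1 + 1 + d = (n + 1 + d) + 1 by ring]
      exact Nat.choose_succ_succ _ _
    rw [if_pos (by omega), show n + 1 + 1 - 2 + (d + 1) = n + 1 + d by omega] at h2
    rw [if_pos (by omega), show n + 1 + 1 - 1 + d = n + 1 + d by omega]
    omega

theorem IsCircuit.le_ncard_natSlice {v : Fin N → E} {p q r s : Fin N} (h : IsCircuit v p q r s)
    {d : ℕ} (hN : N = d + 2) (n : ℕ) (hfin : (natSlice v n).Finite) :
    binomCount d 0 n + binomCount d 1 n ≤ (natSlice v n).ncard := by
  refine (card_filter_piAntidiag hN h.hpq n).trans ?_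
  rw [← Set.ncard_coe_finset, ← Set.InjOn.ncard_image (f := fun f : Fin N → ℕ =>
    ∑ i, (f i : ℝ) • v i)]
  · refine Set.ncard_le_ncard ?_ hfin
    rintro _ ⟨f, hf, rfl⟩
    simp only [Finset.mem_coe, Finset.mem_filter, Finset.mem_piAntidiag] at hf
    exact ⟨f, hf.1.1, rfl⟩
  · intro f hf g hg hfg
    simp only [Finset.coe_filter, Finset.mem_piAntidiag, Set.mem_ofPred_eq] at hf hg hfg
    have hker := h.ker (fun i => (f i : ℝ) - g i) (by
      simp only [sub_smul, Finset.sum_sub_distrib, hfg, sub_self])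
    have hq := hker q
    rw [circuitVec_comm, circuitVec_left h.hpq.symm h.hqr h.hqs, mul_one] at hq
    have hq' : (f q : ℤ) - g q = f p - g p := by exact_mod_cast hq
    have hp : (f p : ℝ) - g p = 0 := by
      have : (f p : ℤ) - g p = 0 := by omega
      exact_mod_cast this
    funext i
    have := hker i
    rw [hp, zero_mul] at this
    have : (f i : ℝ) = g i := by linarith
    exact_mod_cast this

end Circuit

section NonSimplex

variable {E : Type*} [AddCommGroup E] [Module ℝ E] {N : ℕ}

theorem exists_int_circuitVec (p q r s i : Fin N) : ∃ m : ℤ, circuitVec p q r s i = m :=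
  ⟨(Pi.single p 1 + Pi.single q 1 - Pi.single r 1 - Pi.single s 1 : Fin N → ℤ) i, by
    simp [circuitVec, Pi.single_apply]⟩

theorem neg_one_le_circuitVec {p q r s : Fin N} (hrs : r ≠ s) (i : Fin N) :
    -1 ≤ circuitVec p q r s i := by
  have h : ∀ j, (0 : ℝ) ≤ (Pi.single j 1 : Fin N → ℝ) i := by
    intro j
    rw [Pi.single_apply]; split_ifs <;> norm_num
  have h' : (Pi.single r 1 : Fin N → ℝ) i + (Pi.single s 1 : Fin N → ℝ) i ≤ 1 := by
    simp only [Pi.single_apply]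
    split_ifs with a b
    · exact absurd (a.symm.trans b) hrs
    all_goals norm_num
  simp only [circuitVec, Pi.add_apply, Pi.sub_apply]
  linarith [h p, h q]

theorem IsCircuit.bound_of_representation {Λ : AddSubgroup E} {l : E →ₗ[ℝ] ℝ} {v : Fin N → E}
    {p q r s : Fin N} (h : IsCircuit v p q r s) {d k : ℕ} (hN : N = d + 2) (hk : 1 ≤ k)
    (hv : ∀ i, v i ∈ Λ) (hl : ∀ i, l (v i) = 1)
    (hM : ∀ n < k, coneSlice Λ l v n ⊆ natSlice v n) {x : E} (hx : x ∈ Λ) (hxl : l x = k)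
    (hxn : x ∉ natSlice v k) {c : Fin N → ℝ} (hc : ∀ i, 0 ≤ c i) (hcx : ∑ i, c i • v i = x)
    (hcp : c p = 0) :
    2 * k ≤ d + 1 ∧
      ((∀ y ∈ coneSlice Λ l v k, y ∉ natSlice v k → y = x) → 2 * k ≤ d) := by
  classical
  have hlt : ∀ c' : Fin N → ℝ, (∀ i, 0 ≤ c' i) → ∑ i, c' i • v i = x → ∀ i, c' i < 1 := by
    intro c' hc' hcx' i
    by_contra hcon
    push Not at hcon
    have hmem : x - v i ∈ coneSlice Λ l v (k - 1) := by
      refine ⟨sub_mem hx (hv i), by rw [map_sub, hxl, hl]; push_cast [hk]; rfl,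
        c' - Pi.single i 1, fun j => ?_, ?_⟩
      · by_cases hj : j = i
        · subst hj; simpa using hcon
        · simpa [hj] using hc' j
      · simp [sub_smul, hcx', Pi.single_apply]
    have := add_mem_natSlice (hM (k - 1) (by omega) hmem) i
    rw [sub_add_cancel, Nat.sub_add_cancel hk] at this
    exact hxn this
  have hc1 := hlt c hc hcx
  let T : Finset (Fin N) := Finset.univ.filter fun i => 0 < c i
  have hTsub : T ⊆ Finset.univ.erase p := by
    intro i hi
    simp only [T, Finset.mem_filter] at hi
    refine Finset.mem_erase.2 ⟨?_, Finset.mem_univ _⟩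
    rintro rfl
    exact absurd hi.2 (by rw [hcp]; exact lt_irrefl 0)
  have hcard : (Finset.univ.erase p).card = d + 1 := by
    rw [Finset.card_erase_of_mem (Finset.mem_univ p), Finset.card_univ, Fintype.card_fin, hN]
    omega
  have hTp : p ∉ T := fun hp => Finset.notMem_erase p _ (hTsub hp)
  have hTcard : T.card ≤ d + 1 := (Finset.card_le_card hTsub).trans hcard.le
  have hx' : ∑ i, ((if i ∈ T then (1 : ℝ) else 0) - c i) • v i = ∑ i ∈ T, v i - x := by
    simp [sub_smul, hcx, Finset.sum_ite_mem]
  have hcone : ∑ i ∈ T, v i - x ∈ coneOf v := by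
    refine ⟨_, fun i => ?_, hx'⟩
    by_cases hi : i ∈ T
    · rw [if_pos hi]; linarith [hc1 i]
    · rw [if_neg hi]
      have : ¬ 0 < c i := fun h => hi (Finset.mem_filter.2 ⟨Finset.mem_univ i, h⟩)
      linarith
  have hlx' : l (∑ i ∈ T, v i - x) = T.card - k := by simp [hl, hxl]
  have hkT : k ≤ T.card := by
    have := linearMap_nonneg_of_mem_coneOf hl hcone
    rw [hlx', sub_nonneg] at this
    exact_mod_cast this
  have hmem : ∑ i ∈ T, v i - x ∈ coneSlice Λ l v (T.card - k) :=
    ⟨sub_mem (sum_mem fun i _ => hv i) hx, by rw [hlx', Nat.cast_sub hkT], hcone⟩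
  have hnot : ∀ n, ∑ i ∈ T, v i - x ∉ natSlice v n := by
    rintro n ⟨f, -, hf⟩
    have hker := h.ker (fun i => ((if i ∈ T then (1 : ℝ) else 0) - c i) - f i) (by
      simp only [sub_smul _ (Nat.cast _ : ℝ), Finset.sum_sub_distrib, hx', hf, sub_self])
    have hc0 : c = 0 := by
      refine eq_zero_of_fractional_int (fun i => ⟨hc i, hc1 i⟩) fun i => ?_
      obtain ⟨m, hm⟩ := exists_int_circuitVec p q r s i
      have := hker i
      simp only [if_neg hTp, hcp, hm] at this
      refine ⟨(if i ∈ T then 1 else 0) - f i + f p * m, ?_⟩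
      push_cast
      linarith
    have hk0 : (k : ℝ) = 0 := by rw [← hxl, ← hcx, hc0]; simp
    have : k = 0 := by exact_mod_cast hk0
    omega
  have h2k : 2 * k ≤ d + 1 := by
    by_contra hcon
    exact hnot _ (hM (T.card - k) (by omega) hmem)
  refine ⟨h2k, fun huniq => ?_⟩
  by_contra hcon
  have hTeq : T.card = d + 1 := by
    by_contra hne
    exact hnot _ (hM (T.card - k) (by omega) hmem)
  have hTerase : T = Finset.univ.erase p :=
    Finset.eq_of_subset_of_card_le hTsub (by rw [hcard, hTeq])
  rw [show T.card - k = k by omega] at hmem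
  have hxx := huniq _ hmem (hnot k)
  have hker := h.ker (fun i => ((if i ∈ T then (1 : ℝ) else 0) - c i) - c i) (by
    have hsplit : ∀ i, (((if i ∈ T then (1 : ℝ) else 0) - c i) - c i) • v i =
        ((if i ∈ T then (1 : ℝ) else 0) - c i) • v i - c i • v i := fun i => sub_smul _ _ _
    rw [Finset.sum_congr rfl fun i _ => hsplit i, Finset.sum_sub_distrib, hx', hcx, hxx, sub_self])
  simp only [if_neg hTp, hcp, sub_self, zero_mul] at hker
  have hhalf : ∀ i ≠ p, c i = 1 / 2 := by
    intro i hi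
    have := hker i
    rw [if_pos (by rw [hTerase]; exact Finset.mem_erase.2 ⟨hi, Finset.mem_univ _⟩)] at this
    linarith
  have := hlt (fun i => c i + 1 / 2 * circuitVec p q r s i) (fun i => ?_) ?_ q
  · rw [hhalf q h.hpq.symm, circuitVec_comm, circuitVec_left h.hpq.symm h.hqr h.hqs] at this
    norm_num at this
  · by_cases hi : i = p
    · rw [hi, hcp, circuitVec_left h.hpq h.hpr h.hps]; norm_num
    · have := neg_one_le_circuitVec (p := p) (q := q) h.hrs i
      rw [hhalf i hi]
      linarith
  · simp only [add_smul, mul_smul, Finset.sum_add_distrib, ← Finset.smul_sum, hcx,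
      sum_circuitVec_smul, h.rel]
    simp

theorem IsCircuit.bound {Λ : AddSubgroup E} {l : E →ₗ[ℝ] ℝ} {v : Fin N → E}
    {p q r s : Fin N} (h : IsCircuit v p q r s) {d k : ℕ} (hN : N = d + 2) (hk : 1 ≤ k)
    (hv : ∀ i, v i ∈ Λ) (hl : ∀ i, l (v i) = 1)
    (hM : ∀ n < k, coneSlice Λ l v n ⊆ natSlice v n) {x : E} (hx : x ∈ coneSlice Λ l v k)
    (hxn : x ∉ natSlice v k) :
    2 * k ≤ d + 1 ∧
      ((∀ y ∈ coneSlice Λ l v k, y ∉ natSlice v k → y = x) → 2 * k ≤ d) := by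
  obtain ⟨hxΛ, hxl, c, hc, hcx⟩ := hx
  have shift : ∀ {p q : Fin N}, IsCircuit v p q r s → c p ≤ c q →
      ∃ c' : Fin N → ℝ, (∀ i, 0 ≤ c' i) ∧ ∑ i, c' i • v i = x ∧ c' p = 0 := by
    intro p q h hle
    refine ⟨fun i => c i - c p * circuitVec p q r s i, fun i => ?_, ?_, ?_⟩
    · have hcp := hc p
      beta_reduce
      by_cases hp : i = p
      · rw [hp, circuitVec_left h.hpq h.hpr h.hps]; simp
      by_cases hq : i = q
      · rw [hq, circuitVec_comm, circuitVec_left h.hpq.symm h.hqr h.hqs]; linarith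
      have : circuitVec p q r s i ≤ 0 := by
        simp only [circuitVec, Pi.add_apply, Pi.sub_apply, Pi.single_apply, if_neg hp, if_neg hq]
        split_ifs <;> norm_num
      linarith [hc i, mul_nonneg hcp (neg_nonneg.2 this)]
    · simp only [sub_smul, mul_smul, Finset.sum_sub_distrib, ← Finset.smul_sum, hcx,
        sum_circuitVec_smul, h.rel]
      simp
    · simp only [circuitVec_left h.hpq h.hpr h.hps]; ring
  rcases le_total (c p) (c q) with hle | hle
  · obtain ⟨c', h1, h2, h3⟩ := shift h hle
    exact h.bound_of_representation hN hk hv hl hM hxΛ hxl hxn h1 h2 h3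
  · obtain ⟨c', h1, h2, h3⟩ := shift h.symm hle
    exact h.symm.bound_of_representation hN hk hv hl hM hxΛ hxl hxn h1 h2 h3

theorem exists_isCircuit {Λ : AddSubgroup E} {l : E →ₗ[ℝ] ℝ} {v : Fin N → E} {d : ℕ}
    (hd : Module.finrank ℝ E = d + 1) (hN : N = d + 2)
    (hspan : ⊤ ≤ Submodule.span ℝ (Set.range v)) (hext : IsExtremal v)
    (hv : ∀ i, v i ∈ Λ) (hl : ∀ i, l (v i) = 1) (hfin : (coneSlice Λ l v 2).Finite)
    (hcard : (coneSlice Λ l v 2).ncard = binomCount d 0 2 + binomCount d 1 2) :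
    ∃ p q r s, IsCircuit v p q r s := by
  classical
  have : Fintype (coneSlice Λ l v 2) := hfin.fintype
  have hmem : ∀ i j, v i + v j ∈ coneSlice Λ l v 2 := fun i j =>
    ⟨add_mem (hv i) (hv j), by rw [map_add, hl, hl]; norm_num,
      add_mem_coneOf (self_mem_coneOf v i) (self_mem_coneOf v j)⟩
  let f : Sym2 (Fin N) → coneSlice Λ l v 2 :=
    Sym2.lift ⟨fun i j => ⟨v i + v j, hmem i j⟩, fun i j => by simp [add_comm]⟩
  have hlt : Fintype.card (coneSlice Λ l v 2) < Fintype.card (Sym2 (Fin N)) := by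
    rw [Sym2.card, ← Nat.card_eq_fintype_card, Nat.card_coe_set_eq, hcard, Fintype.card_fin, hN]
    simp only [binomCount, Nat.zero_le, if_true, Nat.one_le_ofNat]
    have e1 : (d + 2 + 1).choose 2 = (d + 2) + (d + 2).choose 2 := by
      rw [Nat.choose_succ_succ, Nat.choose_one_right]
    have e2 : (2 - 0 + d).choose d = (d + 2).choose 2 := by
      rw [Nat.sub_zero, add_comm, Nat.choose_symm_add]
    have e3 : (2 - 1 + d).choose d = d + 1 := by
      rw [show 2 - 1 + d = d + 1 by omega, Nat.choose_succ_self_right]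
    omega
  obtain ⟨a, b, hab, hf⟩ := Fintype.exists_ne_map_eq_of_card_lt f hlt
  induction a using Sym2.ind with | _ p q
  induction b using Sym2.ind with | _ r s
  exact ⟨p, q, r, s, isCircuit_of_rel hd hN hspan hext (congrArg Subtype.val hf) hab⟩

end NonSimplex

section NonSimplexConditions

variable {E : Type*} [AddCommGroup E] [Module ℝ E] {N : ℕ}

theorem card_filter_piAntidiag_le {d : ℕ} (hN : N = d + 2) {p q : Fin N} (n : ℕ) :
    ((Finset.piAntidiag (Finset.univ : Finset (Fin N)) n).filter
        fun f => f p = 0 ∨ f q = 0).card ≤ binomCount d 0 n + binomCount d 1 n := by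
  have h1 := card_piAntidiag_univ (κ := Fin N) (d := d + 1) (by simp [hN]) n
  rw [← Finset.card_filter_add_card_filter_not fun f => f p = 0 ∨ f q = 0] at h1
  have h2 : (if 2 ≤ n then (n - 2 + (d + 1)).choose (d + 1) else 0) ≤
      ((Finset.piAntidiag (Finset.univ : Finset (Fin N)) n).filter
        fun f => ¬(f p = 0 ∨ f q = 0)).card := by
    split_ifs with hn
    · rw [← card_piAntidiag_univ (κ := Fin N) (d := d + 1) (by simp [hN]) (n - 2)]
      refine Finset.card_le_card_of_injOn (fun f => f + Pi.single p 1 + Pi.single q 1) ?_ ?_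
      · intro f hf
        simp only [Finset.mem_coe, Finset.mem_piAntidiag, Finset.mem_univ, implies_true,
          and_true] at hf
        simp only [Finset.coe_filter, Set.mem_ofPred_eq, Finset.mem_piAntidiag, Finset.mem_univ,
          implies_true, and_true, Pi.add_apply, Finset.sum_add_distrib, Finset.sum_pi_single',
          if_true, Pi.single_eq_same, hf]
        omega
      · intro f _ g _ hfg
        exact add_right_cancel (add_right_cancel hfg)
    · exact Nat.zero_le _
  simp only [binomCount, Nat.zero_le, if_true, Nat.sub_zero]
  have h3 : (n + (d + 1)).choose (d + 1) = (n + d).choose d + (n + d).choose (d + 1) :=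
    Nat.choose_succ_succ _ _
  rcases n with _ | _ | n
  · rw [if_neg (by omega)]
    rw [zero_add, Nat.choose_self] at h1 ⊢
    omega
  · rw [if_pos (by omega), Nat.sub_self, zero_add, zero_add, Nat.choose_self]
    rw [zero_add] at h1 h2 h3
    have h4 : (1 + d).choose (d + 1) = 1 := by rw [add_comm, Nat.choose_self]
    omega
  · have h4 : (n + 1 + 1 + d).choose (d + 1) =
        (n + 1 + d).choose d + (n + 1 + d).choose (d + 1) := by
      rw [show n + 1 + 1 + d = (n + 1 + d) + 1 by ring]
      exact Nat.choose_succ_succ _ _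
    rw [if_pos (by omega), show n + 1 + 1 - 2 + (d + 1) = n + 1 + d by omega] at h2
    rw [if_pos (by omega), show n + 1 + 1 - 1 + d = n + 1 + d by omega]
    omega

theorem IsCircuit.exists_reduced {v : Fin N → E} {p q r s : Fin N} (h : IsCircuit v p q r s)
    (m : ℕ) : ∀ f : Fin N → ℕ, f p = m → ∃ g : Fin N → ℕ, ∑ i, g i = ∑ i, f i ∧
      ∑ i, (g i : ℝ) • v i = ∑ i, (f i : ℝ) • v i ∧ (g p = 0 ∨ g q = 0) := by
  induction m with
  | zero => exact fun f hf => ⟨f, rfl, rfl, Or.inl hf⟩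
  | succ m ih =>
    intro f hf
    by_cases hq : f q = 0
    · exact ⟨f, rfl, rfl, Or.inr hq⟩
    set f₀ : Fin N → ℕ := f - Pi.single p 1 - Pi.single q 1 with hf₀
    have he : f = f₀ + Pi.single p 1 + Pi.single q 1 := by
      funext i
      simp only [hf₀, Pi.add_apply, Pi.sub_apply, Pi.single_apply]
      split_ifs with a b b
      · exact absurd (a.symm.trans b) h.hpq
      · subst a; omega
      · subst b; omega
      · omega
    obtain ⟨g, h1, h2, h3⟩ := ih (f₀ + Pi.single r 1 + Pi.single s 1) (by
      simp [hf₀, hf, h.hpq, h.hpr, h.hps])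
    refine ⟨g, h1.trans ?_, h2.trans ?_, h3⟩
    · rw [he]
      simp [Finset.sum_add_distrib]
    · rw [he]
      simp only [Pi.add_apply, Nat.cast_add, add_smul, Finset.sum_add_distrib, add_assoc]
      simp [Pi.single_apply, h.rel]

theorem IsCircuit.ncard_natSlice {v : Fin N → E} {p q r s : Fin N} (h : IsCircuit v p q r s)
    {d : ℕ} (hN : N = d + 2) (n : ℕ) :
    (natSlice v n).Finite ∧ (natSlice v n).ncard = binomCount d 0 n + binomCount d 1 n := by
  have hsub : natSlice v n ⊆ (fun f : Fin N → ℕ => ∑ i, (f i : ℝ) • v i) ''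
      ((Finset.piAntidiag (Finset.univ : Finset (Fin N)) n).filter
        fun f => f p = 0 ∨ f q = 0) := by
    rintro _ ⟨f, hf, rfl⟩
    obtain ⟨g, h1, h2, h3⟩ := h.exists_reduced _ f rfl
    exact ⟨g, by simp [h1, hf, h3], h2⟩
  have hfin := (Finset.finite_toSet _).image _ |>.subset hsub
  refine ⟨hfin, le_antisymm ?_ (h.le_ncard_natSlice hN n hfin)⟩
  refine (Set.ncard_le_ncard hsub ((Finset.finite_toSet _).image _)).trans ?_
  refine (Set.ncard_image_le (Finset.finite_toSet _)).trans ?_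
  rw [Set.ncard_coe_finset]
  exact card_filter_piAntidiag_le hN n

theorem binomCount_self (d h : ℕ) : binomCount d h h = 1 := by simp [binomCount]

theorem binomCount_succ_self (d h : ℕ) : binomCount d h (h + 1) = d + 1 := by
  rw [binomCount, if_pos (Nat.le_succ h), Nat.add_sub_cancel_left, add_comm,
    Nat.choose_succ_self_right]

theorem binomCount_of_lt (d : ℕ) {h n : ℕ} (hn : n < h) : binomCount d h n = 0 :=
  if_neg (by omega)

theorem interiorSlice_subset {Λ : AddSubgroup E} {l : E →ₗ[ℝ] ℝ} {v : Fin N → E} {z : E}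
    (hz : z ∈ coneOf v) (n : ℕ) : interiorSlice Λ l v z n ⊆ coneSlice Λ l v n := by
  rintro x ⟨hx, hxl, r, hr, hxr⟩
  refine ⟨hx, hxl, ?_⟩
  have := add_mem_coneOf hxr (smul_mem_coneOf hz hr.le)
  rwa [sub_add_cancel] at this

theorem card_le_ncard_interiorSlice_succ {Λ : AddSubgroup E} {l : E →ₗ[ℝ] ℝ} {v : Fin N → E}
    (hinj : Function.Injective v) (hv : ∀ i, v i ∈ Λ) (hl : ∀ i, l (v i) = 1) {z : E} {n : ℕ}
    (hfin : (interiorSlice Λ l v z (n + 1)).Finite) {u : E} (hu : u ∈ interiorSlice Λ l v z n) :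
    N ≤ (interiorSlice Λ l v z (n + 1)).ncard := by
  obtain ⟨huΛ, hul, r, hr, hur⟩ := hu
  have hcard : (Set.range fun i => u + v i).ncard = N := by
    rw [← Set.image_univ, Set.ncard_image_of_injective _ fun i j hij => hinj (add_left_cancel hij),
      Set.ncard_univ, Nat.card_fin]
  refine hcard.ge.trans (Set.ncard_le_ncard ?_ hfin)
  rintro _ ⟨i, rfl⟩
  refine ⟨add_mem huΛ (hv i), by rw [map_add, hul, hl]; push_cast; rfl, r, hr, ?_⟩
  rw [add_sub_right_comm]
  exact add_mem_coneOf hur (self_mem_coneOf v i)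

theorem interiorSlice_one_eq_empty {Λ : AddSubgroup E} {l : E →ₗ[ℝ] ℝ} {v : Fin N → E}
    (hN : 2 ≤ N) (hext : IsExtremal v) {z : E} {ζ : Fin N → ℝ} (hζ : ∀ i, 0 < ζ i)
    (hz : ∑ i, ζ i • v i = z) (hrange : interiorSlice Λ l v z 1 ⊆ Set.range v) :
    interiorSlice Λ l v z 1 = ∅ := by
  rw [Set.eq_empty_iff_forall_notMem]
  intro x hx
  obtain ⟨i, rfl⟩ := hrange hx
  obtain ⟨-, -, r, hr, c, hc, hcx⟩ := hx
  have := hext i (fun j => c j + r * ζ j) (fun j => by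
    have := mul_pos hr (hζ j)
    linarith [hc j]) (by
    simp only [add_smul, mul_smul, Finset.sum_add_distrib, ← Finset.smul_sum, hz, hcx,
      sub_add_cancel])
  have : Nontrivial (Fin N) := Fin.nontrivial_iff_two_le.2 hN
  obtain ⟨j, hj⟩ := exists_ne i
  have h0 : c j + r * ζ j = 0 := by apply_assumption; exact hj
  have := mul_pos hr (hζ j)
  linarith [hc j]

theorem nonsimplex_conditions {Λ : AddSubgroup E} {l : E →ₗ[ℝ] ℝ} {v : Fin N → E} {d : ℕ}
    (hd : Module.finrank ℝ E = d + 1) (hN : d + 2 ≤ N)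
    (hspan : ⊤ ≤ Submodule.span ℝ (Set.range v)) (hext : IsExtremal v)
    (hv : ∀ i, v i ∈ Λ) (hl : ∀ i, l (v i) = 1) (hfin : ∀ n, (coneSlice Λ l v n).Finite)
    {z : E} {ζ : Fin N → ℝ} (hζ : ∀ i, 0 < ζ i) (hz : ∑ i, ζ i • v i = z)
    {p q r : ℕ} (hp : 1 ≤ p) (hpq : p ≤ q) (hqr : q ≤ r) (hrd : r ≤ d)
    (hM : ∀ n, (coneSlice Λ l v n).ncard =
      binomCount d 0 n + binomCount d p n + binomCount d q n + binomCount d r n)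
    (hI : ∀ n, (interiorSlice Λ l v z n).ncard = binomCount d (d + 1) n +
      binomCount d (d + 1 - p) n + binomCount d (d + 1 - q) n + binomCount d (d + 1 - r) n) :
    r ≤ p + q ∧ p + r ≤ d + 1 ∧ q ≤ (d + 1) / 2 ∧ (2 * q ≤ p + r ∨ q + r ≤ d + 1) := by
  have hzc : z ∈ coneOf v := ⟨ζ, fun i => (hζ i).le, hz⟩
  have hIfin : ∀ n, (interiorSlice Λ l v z n).Finite :=
    fun n => (hfin n).subset (interiorSlice_subset hzc n)
  have hrange : (Set.range v).ncard = N := by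
    rw [← Set.image_univ, Set.ncard_image_of_injective _ hext.injective, Set.ncard_univ,
      Nat.card_fin]
  have hsub : Set.range v ⊆ coneSlice Λ l v 1 := by
    rintro _ ⟨i, rfl⟩
    exact ⟨hv i, by rw [hl]; norm_num, self_mem_coneOf v i⟩
  have hN1 := Set.ncard_le_ncard hsub (hfin 1)
  have hM1 := hM 1
  rw [binomCount_succ_self] at hM1
  have hp1 : p = 1 := by
    by_contra hne
    rw [binomCount_of_lt d (by omega : 1 < p), binomCount_of_lt d (by omega : 1 < q),
      binomCount_of_lt d (by omega : 1 < r)] at hM1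
    omega
  have hA : r ≤ q + 1 := by
    by_contra hcon
    have h1 := hI (d + 1 - r)
    rw [binomCount_self, binomCount_of_lt d (by omega), binomCount_of_lt d (by omega),
      binomCount_of_lt d (by omega)] at h1
    obtain ⟨u, hu⟩ := Set.nonempty_of_ncard_ne_zero (by rw [h1]; norm_num)
    have h2 := card_le_ncard_interiorSlice_succ hext.injective hv hl (hIfin _) hu
    rw [hI, binomCount_succ_self, binomCount_of_lt d (by omega), binomCount_of_lt d (by omega),
      binomCount_of_lt d (by omega)] at h2
    omega
  subst hp1
  rcases Nat.lt_or_ge q 2 with hq2 | hq2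
  · omega
  rw [binomCount_self, binomCount_of_lt d (by omega : 1 < q),
    binomCount_of_lt d (by omega : 1 < r)] at hM1
  have hNd : N = d + 2 := by omega
  have hslice1 : Set.range v = coneSlice Λ l v 1 :=
    Set.eq_of_subset_of_ncard_le hsub (by omega) (hfin 1)
  have hrd' : r < d := by
    have hI1 := hI 1
    rw [interiorSlice_one_eq_empty (by omega) hext hζ hz
      (hslice1 ▸ interiorSlice_subset hzc 1), Set.ncard_empty] at hI1
    by_contra hcon
    rw [show d + 1 - r = 1 by omega, binomCount_self] at hI1
    omega
  rcases Nat.lt_or_ge q 3 with hq3 | hq3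
  · omega
  obtain ⟨a, b, a', b', hcirc⟩ := exists_isCircuit hd hNd hspan hext hv hl (hfin 2) (by
    rw [hM, binomCount_of_lt d (by omega : 2 < q), binomCount_of_lt d (by omega : 2 < r), add_zero, add_zero])
  have hlow : ∀ n < q, coneSlice Λ l v n ⊆ natSlice v n := by
    intro n hn
    refine (Set.eq_of_subset_of_ncard_le (natSlice_subset hv hl n) ?_ (hfin n)).ge
    rw [hM, (hcirc.ncard_natSlice hNd n).2, binomCount_of_lt d (by omega : n < q),
      binomCount_of_lt d (by omega : n < r), add_zero, add_zero]
  have hdiff := Set.ncard_sdiff_add_ncard_of_subset (natSlice_subset (Λ := Λ) hv hl q) (hfin q)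
  rw [hM, (hcirc.ncard_natSlice hNd q).2, binomCount_self] at hdiff
  obtain ⟨x, hx⟩ := Set.nonempty_of_ncard_ne_zero
    (s := coneSlice Λ l v q \ natSlice v q) (by omega)
  obtain ⟨hb1, hb2⟩ := hcirc.bound hNd (by omega) hv hl hlow hx.1 hx.2
  rcases hqr.eq_or_lt with rfl | hlt
  · omega
  · rw [binomCount_of_lt d hlt] at hdiff
    have := hb2 fun y hy hy' =>
      (Set.ncard_le_one ((hfin q).sdiff)).1 (by omega) y ⟨hy, hy'⟩ x hx
    omega

end NonSimplexConditions

theorem Multiset.eq_of_count_le {H : Multiset ℕ} {d p q r : ℕ} (hH : ∀ h ∈ H, h ≤ d)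
    (hp : p ≤ d) (hq : q ≤ d) (hr : r ≤ d)
    (h : ∀ m ≤ d, (H.count m : ℤ) = (if m = 0 then 1 else 0) + (if p = m then 1 else 0) +
      (if q = m then 1 else 0) + (if r = m then 1 else 0)) : H = {0, p, q, r} := by
  ext m
  simp only [Multiset.insert_eq_cons, Multiset.count_cons, Multiset.count_singleton]
  by_cases hm : m ≤ d
  · have := h m hm
    split_ifs at this ⊢ <;> omega
  · rw [Multiset.count_eq_zero_of_notMem fun hmem => hm (hH m hmem), if_neg (by omega),
      if_neg (by omega), if_neg (by omega), if_neg (by omega)]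

section Simplex

variable {κ : Type*} [Fintype κ] [Nonempty κ] {d : ℕ}

theorem finite_halfOpenBox_liftVec {v : κ → Fin d → ℤ}
    (b : Module.Basis κ ℝ ((Fin d → ℝ) × ℝ)) (hb : ∀ i, b i = liftVec v i) :
    (halfOpenBox (intPoints d) b Set.univ).Finite := by
  have hb' : (b : κ → (Fin d → ℝ) × ℝ) = liftVec v := funext hb
  refine finite_halfOpenBox_univ (l := LinearMap.snd ℝ _ ℝ) (d := d) (fun i => ?_) exists_int_of_mem_intPoints
    (fun n => ?_) ?_
  · rw [hb]; rfl
  · rw [hb']; exact finite_coneSlice_liftVec v n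
  · rw [← Module.finrank_eq_card_basis b, finrank_lift]

theorem deltaVec_simplex {v : κ → Fin d → ℤ}
    (b : Module.Basis κ ℝ ((Fin d → ℝ) × ℝ)) (hb : ∀ i, b i = liftVec v i)
    (hfin : (halfOpenBox (intPoints d) b Set.univ).Finite) (m : ℕ) :
    deltaVec (convexHull ℝ (Set.range fun i k => (v i k : ℝ))) d m =
      (hfin.toFinset.val.map fun β => ⌊LinearMap.snd ℝ _ ℝ β⌋₊).count m := by
  refine deltaVec_eq_count (fun n => ?_) m
  rw [ehr_eq_ncard_coneSlice, ← funext hb, coneSlice_basis, ncard_halfOpenCone b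
    (fun i => hb i ▸ liftVec_mem v i) (fun i => by rw [hb]; rfl) exists_int_of_mem_intPoints
    (by rw [← Module.finrank_eq_card_basis b, finrank_lift]) Set.univ hfin, Multiset.map_map]
  rfl

end Simplex

theorem conditions_of_isIntegralPolytope {d i1 i2 i3 : ℕ} (h1 : 1 ≤ i1) (h12 : i1 ≤ i2)
    (h23 : i2 ≤ i3) (h3d : i3 ≤ d) {P : Set (Fin d → ℝ)} (hP : IsIntegralPolytope P d)
    (hδ : ∀ m ≤ d, deltaVec P d m = (if m = 0 then 1 else 0) + (if i1 = m then 1 else 0) +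
      (if i2 = m then 1 else 0) + (if i3 = m then 1 else 0)) :
    i3 ≤ i1 + i2 ∧ i1 + i3 ≤ d + 1 ∧ i2 ≤ (d + 1) / 2 ∧
      (2 * i2 ≤ i1 + i3 ∨ i2 + i3 ≤ d + 1) := by
  obtain ⟨V, hV, hPV, hdim⟩ := hP
  obtain ⟨N, v, hne, hPv, hext⟩ := exists_extremal_vertices V hV hPV
  have hspan : ⊤ ≤ Submodule.span ℝ (Set.range (liftVec v)) := by
    refine span_liftVec_eq_top v ?_
    rwa [hPv, ← direction_affineSpan, affineSpan_convexHull, direction_affineSpan] at hdim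
  have hcard : d + 1 ≤ N := by
    have := finrank_range_le_card (R := ℝ) (liftVec v)
    rwa [Set.finrank, top_le_iff.1 hspan, finrank_top, finrank_lift, Fintype.card_fin] at this
  rcases hcard.eq_or_lt with hN | hN
  · let b := basisOfTopLeSpanOfCardEqFinrank (liftVec v) hspan
      (by rw [Fintype.card_fin, finrank_lift, hN])
    have hb : ∀ i, b i = liftVec v i := fun i => by simp [b]
    have hfin := finite_halfOpenBox_liftVec b hb
    have hl : ∀ i, LinearMap.snd ℝ (Fin d → ℝ) ℝ (b i) = 1 := fun i => by rw [hb]; rfl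
    have hcond := simplex_conditions b (fun i => hb i ▸ liftVec_mem v i) hl
      exists_int_of_mem_intPoints hfin h12 h23 (Multiset.eq_of_count_le (d := d) ?_ (by omega)
        (by omega) h3d fun m hm => by rw [← deltaVec_simplex b hb hfin m, ← hPv, hδ m hm])
    · rwa [Fintype.card_fin, ← hN] at hcond
    · intro h hh
      obtain ⟨β, hβ, rfl⟩ := Multiset.mem_map.1 hh
      exact floor_box_le hl exists_int_of_mem_intPoints (by rw [Fintype.card_fin, hN])
        (hfin.mem_toFinset.1 hβ)
  · obtain ⟨ζ, hζ, hgen⟩ := exists_isGenericFor (liftVec v)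
    obtain ⟨H, hHd, hM, hI⟩ := exists_heights finrank_lift (liftVec_mem v) (snd_liftVec v)
      exists_int_of_mem_intPoints (finite_coneSlice_liftVec v) hspan
      ⟨ζ, fun i => (hζ i).le, rfl⟩ hgen
    have hH : H = {0, i1, i2, i3} := by
      refine Multiset.eq_of_count_le hHd (by omega) (by omega) h3d fun m hm => ?_
      rw [← hδ m hm, deltaVec_eq_count (fun n => ?_) m]
      rw [hPv, ehr_eq_ncard_coneSlice, hM]
    subst hH
    refine nonsimplex_conditions finrank_lift hN hspan hext (liftVec_mem v) (snd_liftVec v)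
      (finite_coneSlice_liftVec v) hζ rfl h1 h12 h23 h3d (fun n => ?_) fun n => ?_
    · rw [hM]; simp [add_assoc]
    · rw [hI]; simp [add_assoc]

section CyclicSimplex

/-- The residues `1`, `2`, `3`, `0`, occurring `a`, `b`, `c` and infinitely many times. -/
def residueBlock (a b c i : ℕ) : ℕ :=
  if i < a then 1 else if i < a + b then 2 else if i < a + b + c then 3 else 0

theorem sum_residueBlock {a b c n : ℕ} (h : a + b + c ≤ n) (F : ℕ → ℕ) (hF : F 0 = 0) :
    ∑ i : Fin n, F (residueBlock a b c i) = a * F 1 + b * F 2 + c * F 3 := by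
  rw [Fin.sum_univ_eq_sum_range fun i => F (residueBlock a b c i)]
  obtain ⟨e, rfl⟩ := Nat.exists_eq_add_of_le h
  rw [Finset.sum_range_add, Finset.sum_range_add, Finset.sum_range_add]
  have h1 : ∀ i ∈ Finset.range a, F (residueBlock a b c i) = F 1 := by
    intro i hi
    rw [Finset.mem_range] at hi
    simp [residueBlock, hi]
  have h2 : ∀ i ∈ Finset.range b, F (residueBlock a b c (a + i)) = F 2 := by
    intro i hi
    rw [Finset.mem_range] at hi
    simp [residueBlock, hi]
  have h3 : ∀ i ∈ Finset.range c, F (residueBlock a b c (a + b + i)) = F 3 := by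
    intro i hi
    rw [Finset.mem_range] at hi
    rw [residueBlock, if_neg (by omega), if_neg (by omega), if_pos (by omega)]
  have h4 : ∀ i ∈ Finset.range e, F (residueBlock a b c (a + b + c + i)) = 0 := by
    intro i _
    rw [residueBlock, if_neg (by omega), if_neg (by omega), if_neg (by omega), hF]
  rw [Finset.sum_congr rfl h1, Finset.sum_congr rfl h2, Finset.sum_congr rfl h3,
    Finset.sum_congr rfl h4]
  simp

variable {d : ℕ}

/-- The vertices of a simplex whose box points form a cyclic group of order four, generated by a
point whose `i`-th barycentric coordinate is congruent to `t i / 4` modulo one. -/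
def cyclicVertex (t : ℕ → ℕ) (i : Fin (d + 1)) (k : Fin d) : ℤ :=
  (if i = k.castSucc then 1 else 0) +
    if i = 0 then (if (k : ℕ) = 0 then 4 else 0) - (t k : ℤ) else 0

theorem fst_sum_smul_cyclicVertex (t : ℕ → ℕ) (c : Fin (d + 1) → ℝ) (k : Fin d) :
    (∑ i, c i • liftVec (cyclicVertex t) i).1 k =
      c k.castSucc + c 0 * ((if (k : ℕ) = 0 then 4 else 0) - t k) := by
  rw [sum_smul_liftVec]
  simp [cyclicVertex, Finset.sum_apply, mul_add, Finset.sum_add_distrib]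

theorem snd_sum_smul_cyclicVertex (t : ℕ → ℕ) (c : Fin (d + 1) → ℝ) :
    (∑ i, c i • liftVec (cyclicVertex (d := d) t) i).2 = ∑ i, c i := by
  rw [sum_smul_liftVec]

theorem linearIndependent_cyclicVertex (hd : 1 ≤ d) {t : ℕ → ℕ} (ht : t 0 = 1) :
    LinearIndependent ℝ (liftVec (cyclicVertex (d := d) t)) := by
  rw [Fintype.linearIndependent_iff]
  intro c hc
  have h1 := fun k => fst_sum_smul_cyclicVertex t c k
  have h2 := snd_sum_smul_cyclicVertex t c
  simp only [hc, Prod.fst_zero, Prod.snd_zero, Pi.zero_apply] at h1 h2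
  have h0 : c 0 = 0 := by
    have := h1 ⟨0, hd⟩
    simp [ht] at this
    linarith
  have h3 : ∀ k : Fin d, c k.castSucc = 0 := fun k => by
    have := h1 k
    rw [h0] at this
    linarith
  intro i
  refine Fin.lastCases ?_ h3 i
  rw [Fin.sum_univ_castSucc, Finset.sum_eq_zero fun k _ => h3 k] at h2
  linarith

theorem sum_mod_four_div {t h : ℕ → ℕ} (hsum : ∀ j < 4, ∑ i : Fin (d + 1), j * t i % 4 = 4 * h j)
    {j : ℕ} (hj : j < 4) : ∑ i : Fin (d + 1), ((j * t i % 4 : ℕ) : ℝ) / 4 = h j := by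
  have : ((∑ i : Fin (d + 1), j * t i % 4 : ℕ) : ℝ) = (4 * h j : ℕ) := by rw [hsum j hj]
  push_cast at this
  rw [← Finset.sum_div]
  linarith

theorem box_cyclicVertex (hd : 1 ≤ d) {t : ℕ → ℕ} (ht : t 0 = 1)
    (b : Module.Basis (Fin (d + 1)) ℝ ((Fin d → ℝ) × ℝ))
    (hb : ∀ i, b i = liftVec (cyclicVertex t) i) {h : ℕ → ℕ}
    (hsum : ∀ j < 4, ∑ i : Fin (d + 1), j * t i % 4 = 4 * h j) :
    halfOpenBox (intPoints d) b Set.univ =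
      (fun j : ℕ => ∑ i : Fin (d + 1), (((j * t i % 4 : ℕ) : ℝ) / 4) • b i) '' Finset.range 4 := by
  have hfrac : ∀ m : ℕ, (0 : ℝ) ≤ ((m % 4 : ℕ) : ℝ) / 4 ∧ ((m % 4 : ℕ) : ℝ) / 4 < 1 := by
    intro m
    have : ((m % 4 : ℕ) : ℝ) < 4 := by exact_mod_cast Nat.mod_lt m (by norm_num)
    constructor
    · positivity
    · linarith
  have hmod : ∀ m : ℕ, ((m % 4 : ℕ) : ℝ) / 4 = (m : ℝ) / 4 - ((m / 4 : ℕ) : ℝ) := by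
    intro m
    have : ((4 * (m / 4) + m % 4 : ℕ) : ℝ) = m := by rw [Nat.div_add_mod]
    push_cast at this
    linarith
  ext x
  rw [mem_halfOpenBox_univ]
  constructor
  · rintro ⟨⟨hx1, M, hM⟩, hx⟩
    set c : Fin (d + 1) → ℝ := fun i => b.repr x i with hc
    have hxc : ∑ i, c i • liftVec (cyclicVertex t) i = x := by
      rw [← b.sum_repr x]
      simp only [hb, hc]
    have h1 := fun k => fst_sum_smul_cyclicVertex t c k
    have h2 := snd_sum_smul_cyclicVertex t c
    simp only [hxc] at h1 h2
    obtain ⟨m, hm⟩ := hx1 ⟨0, hd⟩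
    have h0 : c 0 = (m : ℝ) / 4 := by
      have := h1 ⟨0, hd⟩
      simp [ht, hm] at this
      linarith
    have hm0 : (0 : ℝ) ≤ m ∧ (m : ℝ) < 4 := by
      have : 0 ≤ c 0 ∧ c 0 < 1 := hx 0
      rw [h0] at this
      constructor <;> linarith
    obtain ⟨hm0, hm4⟩ : 0 ≤ m ∧ m < 4 := by exact_mod_cast hm0
    lift m to ℕ using hm0
    have hm4' : m < 4 := by exact_mod_cast hm4
    refine ⟨m, by simpa using hm4', ?_⟩
    suffices c = fun i : Fin (d + 1) => ((m * t i % 4 : ℕ) : ℝ) / 4 by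
      rw [← b.sum_repr x]
      exact Finset.sum_congr rfl fun i _ => by rw [show b.repr x i = _ from congrFun this i]
    have hcast : ∀ k : Fin d, ∃ n : ℤ,
        c k.castSucc - ((m * t k.castSucc % 4 : ℕ) : ℝ) / 4 = n := by
      intro k
      obtain ⟨n, hn⟩ := hx1 k
      have hk := h1 k
      rw [hmod, Fin.val_castSucc]
      generalize m * t k / 4 = e
      refine ⟨n - m * (if (k : ℕ) = 0 then 1 else 0) + e, ?_⟩
      rw [hn, h0] at hk
      push_cast at hk ⊢
      rw [hk]
      split_ifs <;> ring
    refine eq_of_fractional_int hx (fun i => hfrac _) fun i => ?_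
    refine Fin.lastCases ?_ hcast i
    choose n hn using hcast
    refine ⟨M - h m - ∑ k, n k, ?_⟩
    have e1 : ∑ i : Fin (d + 1), (c i - ((m * t i % 4 : ℕ) : ℝ) / 4) = M - h m := by
      rw [Finset.sum_sub_distrib, sum_mod_four_div hsum hm4', ← h2, hM]
    rw [Fin.sum_univ_castSucc, Finset.sum_congr rfl fun k _ => hn k] at e1
    push_cast at e1 ⊢
    linarith
  · rintro ⟨j, hj, rfl⟩
    have hj : j < 4 := by simpa using hj
    refine ⟨⟨fun k => ?_, h j, ?_⟩, fun i => ?_⟩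
    · simp only [hb]
      rw [fst_sum_smul_cyclicVertex, hmod, hmod, Fin.val_zero, ht, mul_one, Nat.div_eq_of_lt hj,
        Fin.val_castSucc]
      generalize j * t k / 4 = e
      refine ⟨j * (if (k : ℕ) = 0 then 1 else 0) - e, ?_⟩
      push_cast
      split_ifs <;> ring
    · simp only [hb]
      rw [snd_sum_smul_cyclicVertex, sum_mod_four_div hsum hj]
      rfl
    · rw [b.repr_sum_self]
      exact hfrac _

end CyclicSimplex

section CyclicDelta

variable {d : ℕ}

theorem LinearIndependent.affineIndependent_of_liftVec {ι : Type*} {v : ι → Fin d → ℤ}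
    (h : LinearIndependent ℝ (liftVec v)) : AffineIndependent ℝ fun i k => (v i k : ℝ) := by
  rw [affineIndependent_iff]
  intro s w hw hwv
  refine linearIndependent_iff'.1 h s w (Prod.ext ?_ ?_)
  · simpa [Prod.fst_sum, liftVec] using hwv
  · simpa [Prod.snd_sum, liftVec] using hw

theorem deltaVec_cyclicVertex (hd : 1 ≤ d) {t : ℕ → ℕ} (ht : t 0 = 1) {p q r : ℕ}
    (h1 : ∑ i : Fin (d + 1), 1 * t i % 4 = 4 * p) (h2 : ∑ i : Fin (d + 1), 2 * t i % 4 = 4 * q)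
    (h3 : ∑ i : Fin (d + 1), 3 * t i % 4 = 4 * r) (m : ℕ) :
    deltaVec (convexHull ℝ (Set.range fun i k => (cyclicVertex (d := d) t i k : ℝ))) d m =
      ({0, p, q, r} : Multiset ℕ).count m := by
  let b := basisOfLinearIndependentOfCardEqFinrank (linearIndependent_cyclicVertex hd ht)
    (by rw [Fintype.card_fin, finrank_lift])
  have hb : ∀ i, b i = liftVec (cyclicVertex t) i := fun i => by simp [b]
  have hfin := finite_halfOpenBox_liftVec b hb
  let h : ℕ → ℕ := fun j => if j = 0 then 0 else if j = 1 then p else if j = 2 then q else r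
  have hsum : ∀ j < 4, ∑ i : Fin (d + 1), j * t i % 4 = 4 * h j := by
    intro j hj
    interval_cases j
    · simp [h]
    · exact h1
    · exact h2
    · exact h3
  let β : ℕ → (Fin d → ℝ) × ℝ := fun j => ∑ i : Fin (d + 1), (((j * t i % 4 : ℕ) : ℝ) / 4) • b i
  have hinj : Set.InjOn β (Finset.range 4) := by
    intro j hj k hk hjk
    have hj : j < 4 := by simpa using hj
    have hk : k < 4 := by simpa using hk
    have := congrArg (fun x => b.repr x 0) hjk
    simp only [β, b.repr_sum_self, Fin.val_zero, ht, mul_one, Nat.mod_eq_of_lt hj,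
      Nat.mod_eq_of_lt hk] at this
    have : (j : ℝ) = k := by linarith
    exact_mod_cast this
  have hbox : hfin.toFinset = (Finset.range 4).image β := by
    rw [← Finset.coe_inj, Set.Finite.coe_toFinset, Finset.coe_image,
      box_cyclicVertex hd ht b hb hsum]
  rw [deltaVec_simplex b hb hfin m, hbox, Finset.image_val_of_injOn hinj, Multiset.map_map,
    Multiset.map_congr rfl (g := h) fun j hj => ?_]
  · rfl
  · have hj : j < 4 := Finset.mem_range.1 hj
    simp only [Function.comp, β, hb, LinearMap.snd_apply]
    rw [snd_sum_smul_cyclicVertex, sum_mod_four_div hsum hj, Nat.floor_natCast]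

theorem exists_cyclic_simplex (hd : 1 ≤ d) {p q r : ℕ} (hpq : p + 1 ≤ q + r) (hr : r ≤ p + q)
    (hq : 2 * q ≤ p + r) (hprd : p + r ≤ d + 1) :
    ∃ v : Fin (d + 1) → Fin d → ℤ, AffineIndependent ℝ (fun i k => (v i k : ℝ)) ∧
      ∀ m, deltaVec (convexHull ℝ (Set.range fun i k => (v i k : ℝ))) d m =
        ({0, p, q, r} : Multiset ℕ).count m := by
  obtain ⟨a, ha⟩ := Nat.exists_eq_add_of_le hpq
  obtain ⟨b, hb⟩ := Nat.exists_eq_add_of_le hq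
  obtain ⟨c, hc⟩ := Nat.exists_eq_add_of_le hr
  have hle : a + 1 + b + c ≤ d + 1 := by omega
  have ht : residueBlock (a + 1) b c 0 = 1 := by simp [residueBlock]
  refine ⟨cyclicVertex (residueBlock (a + 1) b c),
    (linearIndependent_cyclicVertex hd ht).affineIndependent_of_liftVec,
    deltaVec_cyclicVertex hd ht ?_ ?_ ?_⟩
  · rw [sum_residueBlock hle (fun m => 1 * m % 4) rfl]
    omega
  · rw [sum_residueBlock hle (fun m => 2 * m % 4) rfl]
    omega
  · rw [sum_residueBlock hle (fun m => 3 * m % 4) rfl]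
    omega

theorem exists_simplex_of_conditions (hd : 1 ≤ d) {i1 i2 i3 : ℕ} (h1 : 1 ≤ i1) (h12 : i1 ≤ i2)
    (h23 : i2 ≤ i3)
    (h : i3 ≤ i1 + i2 ∧ i1 + i3 ≤ d + 1 ∧ i2 ≤ (d + 1) / 2 ∧
      (2 * i2 ≤ i1 + i3 ∨ i2 + i3 ≤ d + 1)) :
    ∃ v : Fin (d + 1) → Fin d → ℤ, AffineIndependent ℝ (fun i k => (v i k : ℝ)) ∧
      ∀ m ≤ d, deltaVec (convexHull ℝ (Set.range fun i k => (v i k : ℝ))) d m =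
        (if m = 0 then 1 else 0) + (if i1 = m then 1 else 0) +
          (if i2 = m then 1 else 0) + (if i3 = m then 1 else 0) := by
  have hcount : ∀ m, ((({0, i1, i2, i3} : Multiset ℕ).count m : ℕ) : ℤ) =
      (if m = 0 then 1 else 0) + (if i1 = m then 1 else 0) +
        (if i2 = m then 1 else 0) + (if i3 = m then 1 else 0) := by
    intro m
    simp only [Multiset.insert_eq_cons, Multiset.count_cons, Multiset.count_singleton]
    split_ifs <;> omega
  obtain ⟨ha, hb, -, hc⟩ := h
  by_cases hcase : i2 + i3 ≤ d + 1
  · obtain ⟨v, hv, hδ⟩ := exists_cyclic_simplex hd (p := i2) (q := i1) (r := i3) (by omega)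
      (by omega) (by omega) hcase
    refine ⟨v, hv, fun m _ => ?_⟩
    rw [hδ, ← hcount, show ({0, i2, i1, i3} : Multiset ℕ) = {0, i1, i2, i3} by
      simp only [Multiset.insert_eq_cons]; rw [Multiset.cons_swap i2 i1]]
  · obtain ⟨v, hv, hδ⟩ := exists_cyclic_simplex hd (p := i1) (q := i2) (r := i3) (by omega)
      ha (by omega) hb
    exact ⟨v, hv, fun m _ => by rw [hδ, ← hcount]⟩

theorem isIntegralPolytope_simplex {v : Fin (d + 1) → Fin d → ℤ}
    (hv : AffineIndependent ℝ fun i k => (v i k : ℝ)) :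
    IsIntegralPolytope (convexHull ℝ (Set.range fun i k => (v i k : ℝ))) d := by
  classical
  refine ⟨Finset.univ.image v, Finset.univ_nonempty.image v, ?_, ?_⟩
  · rw [Finset.coe_image, Finset.coe_univ, Set.image_univ, ← Set.range_comp]
    rfl
  · rw [← direction_affineSpan, affineSpan_convexHull, direction_affineSpan]
    exact hv.finrank_vectorSpan (by simp)

end CyclicDelta

theorem stmt16 (d : ℕ) (hd : 1 ≤ d) (i1 i2 i3 : ℕ)
    (h1 : 1 ≤ i1) (h12 : i1 ≤ i2) (h23 : i2 ≤ i3) (h3d : i3 ≤ d) :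
    ((∃ P : Set (Fin d → ℝ), IsIntegralPolytope P d ∧
        ∀ m ≤ d, deltaVec P d m =
          (if m = 0 then 1 else 0) + (if i1 = m then 1 else 0) +
          (if i2 = m then 1 else 0) + (if i3 = m then 1 else 0)) ↔
      (i3 ≤ i1 + i2 ∧ i1 + i3 ≤ d + 1 ∧ i2 ≤ (d + 1) / 2 ∧
        (2 * i2 ≤ i1 + i3 ∨ i2 + i3 ≤ d + 1))) ∧
    ((i3 ≤ i1 + i2 ∧ i1 + i3 ≤ d + 1 ∧ i2 ≤ (d + 1) / 2 ∧
        (2 * i2 ≤ i1 + i3 ∨ i2 + i3 ≤ d + 1)) →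
      ∃ v : Fin (d + 1) → Fin d → ℤ,
        AffineIndependent ℝ (fun p i => (v p i : ℝ)) ∧
        ∀ m ≤ d, deltaVec (convexHull ℝ (Set.range fun p i => ((v p i : ℝ)))) d m =
          (if m = 0 then 1 else 0) + (if i1 = m then 1 else 0) +
          (if i2 = m then 1 else 0) + (if i3 = m then 1 else 0)) := by
  refine ⟨⟨?_, fun h => ?_⟩, exists_simplex_of_conditions hd h1 h12 h23⟩
  · rintro ⟨P, hP, hδ⟩
    exact conditions_of_isIntegralPolytope h1 h12 h23 h3d hP hδ
  · obtain ⟨v, hv, hδ⟩ := exists_simplex_of_conditions hd h1 h12 h23 h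
    exact ⟨_, isIntegralPolytope_simplex hv, hδ⟩
end

section
/- There is no integral polytope of dimension 7 in $\mathbb{R}^7$ whose $\delta$-vector is $(1,0,1,0,1,1,0,0)$, even though this sequence satisfies Stanley's inequalities $\delta_0+\cdots+\delta_i \leq \delta_s+\cdots+\delta_{s-i}$ ($s = \max\{i : \delta_i \neq 0\}$, $0 \leq i \leq \lfloor s/2\rfloor$) and Hibi's inequalities $\delta_{d-1}+\cdots+\delta_{d-i} \leq \delta_2+\cdots+\delta_{i+1}$ ($1 \leq i \leq \lfloor(d-1)/2\rfloor$). However, there does exist an integral polytope of dimension 8 with $\delta$-vector $(1,0,1,0,1,1,0,0,0)$. -/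
open Set Pointwise

/-- The sequence `(1,0,1,0,1,1,0,0,…)`. -/
def dv17 : ℕ → ℤ := fun m => if m = 0 ∨ m = 2 ∨ m = 4 ∨ m = 5 then 1 else 0


section Box

variable {N : ℕ} (v : Fin (N + 1) → Fin N → ℤ)

/-- The lattice point `z`, seen in `ℝ^N`. -/
def toReal (z : Fin N → ℤ) : Fin N → ℝ := fun i => (z i : ℝ)

/-- The coefficient vector `c` combines the points `v` to a lattice point. -/
def IsIntegralComb (c : Fin (N + 1) → ℝ) : Prop :=
  ∃ x : Fin N → ℤ, ∀ i, ∑ j, c j * (v j i : ℝ) = x i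

/-- The lattice points of height `k` in the cone over the simplex with vertices `v`,
in coordinates with respect to the rays of the cone. -/
def coneLevel (k : ℕ) : Set (Fin (N + 1) → ℝ) :=
  {c | (∀ j, 0 ≤ c j) ∧ ∑ j, c j = k ∧ IsIntegralComb v c}

/-- The lattice points of height `k` in the half-open fundamental parallelepiped of the cone over
the simplex with vertices `v`, in coordinates with respect to the rays of the cone. -/
def boxLevel (k : ℕ) : Set (Fin (N + 1) → ℝ) :=
  {c | (∀ j, 0 ≤ c j ∧ c j < 1) ∧ ∑ j, c j = k ∧ IsIntegralComb v c}

variable {v}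

lemma IsIntegralComb.add {c c' : Fin (N + 1) → ℝ} (h : IsIntegralComb v c)
    (h' : IsIntegralComb v c') : IsIntegralComb v (c + c') := by
  obtain ⟨x, hx⟩ := h
  obtain ⟨x', hx'⟩ := h'
  refine ⟨x + x', fun i => ?_⟩
  simp [add_mul, Finset.sum_add_distrib, hx, hx']

lemma IsIntegralComb.neg {c : Fin (N + 1) → ℝ} (h : IsIntegralComb v c) :
    IsIntegralComb v (-c) := by
  obtain ⟨x, hx⟩ := h
  refine ⟨-x, fun i => ?_⟩
  simp [Finset.sum_neg_distrib, hx]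

lemma isIntegralComb_intCast (m : Fin (N + 1) → ℤ) :
    IsIntegralComb v (fun j => (m j : ℝ)) :=
  ⟨fun i => ∑ j, m j * v j i, fun i => by push_cast; rfl⟩

lemma IsIntegralComb.fract {c : Fin (N + 1) → ℝ} (h : IsIntegralComb v c) :
    IsIntegralComb v (fun j => Int.fract (c j)) := by
  convert! h.add (isIntegralComb_intCast fun j => -⌊c j⌋) using 1
  ext j
  simp [Int.fract, sub_eq_add_neg]

/-- A lattice combination of integral height reduces modulo `1` into the fundamental
parallelepiped. -/
lemma IsIntegralComb.exists_fract_mem_boxLevel {c : Fin (N + 1) → ℝ} (h : IsIntegralComb v c)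
    {z : ℤ} (hz : ∑ j, c j = z) : ∃ k ≤ N, (fun j => Int.fract (c j)) ∈ boxLevel v k := by
  have hsum : ∑ j, Int.fract (c j) = ((z - ∑ j, ⌊c j⌋ : ℤ) : ℝ) := by
    push_cast
    rw [← hz, ← Finset.sum_sub_distrib]
    rfl
  have h0 : (0 : ℝ) ≤ ((z - ∑ j, ⌊c j⌋ : ℤ) : ℝ) :=
    hsum ▸ Finset.sum_nonneg fun j _ => Int.fract_nonneg _
  have h1 : ((z - ∑ j, ⌊c j⌋ : ℤ) : ℝ) < ((N + 1 : ℕ) : ℤ) := by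
    rw [← hsum]
    calc ∑ j, Int.fract (c j) < ∑ _j : Fin (N + 1), (1 : ℝ) :=
          Finset.sum_lt_sum_of_nonempty Finset.univ_nonempty fun j _ => Int.fract_lt_one _
      _ = _ := by simp
  obtain ⟨k, hk⟩ := Int.eq_ofNat_of_zero_le (by exact_mod_cast h0 : 0 ≤ z - ∑ j, ⌊c j⌋)
  rw [hk] at hsum h1
  refine ⟨k, ?_, fun j => ⟨Int.fract_nonneg _, Int.fract_lt_one _⟩, by simpa using hsum, h.fract⟩
  have : (k : ℤ) < (N + 1 : ℕ) := by exact_mod_cast h1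
  omega

lemma eq_of_sum_eq_of_comb_eq (hv : AffineIndependent ℝ fun j => toReal (v j))
    {c c' : Fin (N + 1) → ℝ} (hs : ∑ j, c j = ∑ j, c' j)
    (hc : ∀ i, ∑ j, c j * (v j i : ℝ) = ∑ j, c' j * (v j i : ℝ)) : c = c' := by
  ext j
  refine hv.eq_of_sum_eq_sum (s := Finset.univ) hs ?_ j (Finset.mem_univ j)
  ext i
  simpa [toReal, Finset.sum_apply] using hc i

lemma finite_boxLevel (hv : AffineIndependent ℝ fun j => toReal (v j)) (k : ℕ) :
    (boxLevel v k).Finite := by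
  choose! f hf using fun (c : Fin (N + 1) → ℝ) (h : IsIntegralComb v c) => h
  refine Set.Finite.of_finite_image (f := f)
    ((Set.finite_Icc (fun i => -∑ j, |v j i|) (fun i => ∑ j, |v j i|)).subset ?_) ?_
  · rintro _ ⟨c, ⟨hc, -, hi⟩, rfl⟩
    have key : ∀ i, |f c i| ≤ ∑ j, |v j i| := fun i => by
      have : |(f c i : ℝ)| ≤ ∑ j, |(v j i : ℝ)| := by
        rw [← hf c hi i]
        refine (Finset.abs_sum_le_sum_abs _ _).trans (Finset.sum_le_sum fun j _ => ?_)
        rw [abs_mul, abs_of_nonneg (hc j).1]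
        exact mul_le_of_le_one_left (abs_nonneg _) (hc j).2.le
      exact_mod_cast this
    exact ⟨fun i => (abs_le.1 (key i)).1, fun i => (abs_le.1 (key i)).2⟩
  · rintro c ⟨-, hs, hi⟩ c' ⟨-, hs', hi'⟩ h
    refine eq_of_sum_eq_of_comb_eq hv (hs.trans hs'.symm) fun i => ?_
    rw [hf c hi, hf c' hi', h]

lemma mem_smul_convexHull_range_iff (n : ℕ) (x : Fin N → ℝ) :
    x ∈ (n : ℝ) • convexHull ℝ (Set.range fun j => toReal (v j)) ↔
      ∃ c : Fin (N + 1) → ℝ, (∀ j, 0 ≤ c j) ∧ ∑ j, c j = n ∧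
        ∀ i, ∑ j, c j * (v j i : ℝ) = x i := by
  have himage : convexHull ℝ (Set.range fun j => toReal (v j)) =
      Fintype.linearCombination ℝ (fun j => toReal (v j)) '' stdSimplex ℝ (Fin (N + 1)) := by
    rw [← convexHull_rangle_single_eq_stdSimplex, LinearMap.image_convexHull, ← Set.range_comp]
    congr 2
    ext j
    simp [Fintype.linearCombination_apply_single]
  rw [himage]
  constructor
  · rintro ⟨_, ⟨w, ⟨hw0, hw1⟩, rfl⟩, rfl⟩
    refine ⟨fun j => n * w j, fun j => mul_nonneg n.cast_nonneg (hw0 j), ?_, fun i => ?_⟩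
    · rw [← Finset.mul_sum, hw1, mul_one]
    · simp [Fintype.linearCombination_apply, toReal, Finset.mul_sum, mul_assoc]
  · rintro ⟨c, hc0, hc1, hx⟩
    rcases Nat.eq_zero_or_pos n with rfl | hn
    · have hc : ∀ j, c j = 0 := fun j => by
        refine (Finset.sum_eq_zero_iff_of_nonneg fun j _ => hc0 j).1 ?_ j (Finset.mem_univ j)
        simpa using hc1
      have hx0 : x = 0 := by
        ext i
        simp [← hx i, hc]
      rw [hx0]
      refine ⟨_, ⟨Pi.single 0 1, single_mem_stdSimplex ℝ 0, rfl⟩, by simp⟩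
    · have hn' : (n : ℝ) ≠ 0 := by positivity
      refine ⟨_, ⟨fun j => c j / n, ⟨fun j => div_nonneg (hc0 j) n.cast_nonneg, ?_⟩, rfl⟩, ?_⟩
      · rw [← Finset.sum_div, hc1, div_self hn']
      · ext i
        simp only [Fintype.linearCombination_apply, toReal, Pi.smul_apply, Finset.sum_apply,
          smul_eq_mul, Finset.mul_sum, ← hx i]
        refine Finset.sum_congr rfl fun j _ => ?_
        field_simp

lemma ehr_eq_ncard_coneLevel (hv : AffineIndependent ℝ fun j => toReal (v j)) (n : ℕ) :
    ehr (convexHull ℝ (Set.range fun j => toReal (v j))) n = (coneLevel v n).ncard := by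
  choose! f hf using fun (c : Fin (N + 1) → ℝ) (h : IsIntegralComb v c) => h
  symm
  refine Set.ncard_congr (fun c _ => f c) ?_ ?_ ?_
  · rintro c ⟨h0, hs, hi⟩
    exact (mem_smul_convexHull_range_iff n _).2 ⟨c, h0, hs, hf c hi⟩
  · rintro c c' ⟨-, hs, hi⟩ ⟨-, hs', hi'⟩ h
    refine eq_of_sum_eq_of_comb_eq hv (hs.trans hs'.symm) fun i => ?_
    rw [hf c hi, hf c' hi', h]
  · intro x hx
    obtain ⟨c, h0, hs, hc⟩ := (mem_smul_convexHull_range_iff n _).1 hx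
    refine ⟨c, ⟨h0, hs, x, hc⟩, ?_⟩
    ext i
    have := (hf c ⟨x, hc⟩ i).symm.trans (hc i)
    exact_mod_cast this

lemma fract_add_natCast_of_mem_boxLevel {k : ℕ} {b : Fin (N + 1) → ℝ} (hb : b ∈ boxLevel v k)
    (m : ℕ) (j : Fin (N + 1)) : Int.fract (b j + m) = b j := by
  rw [Int.fract_add_natCast, Int.fract_eq_self.2 (hb.1 j)]

/-- Every lattice point of the cone is uniquely the sum of a lattice point of the fundamental
parallelepiped and a nonnegative integral combination of the rays. -/
lemma ncard_coneLevel (hv : AffineIndependent ℝ fun j => toReal (v j)) (n : ℕ) :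
    (coneLevel v n).ncard =
      ∑ k ∈ Finset.range (n + 1), (boxLevel v k).ncard * (N + (n - k)).choose N := by
  classical
  let shift : (Fin (N + 1) → ℝ) × (Fin (N + 1) →₀ ℕ) → Fin (N + 1) → ℝ :=
    fun p j => p.1 j + p.2 j
  have hfract : ∀ {k p}, p.1 ∈ boxLevel v k → (fun j => Int.fract (shift p j)) = p.1 :=
    fun hp => funext fun j => fract_add_natCast_of_mem_boxLevel hp _ _
  let F : ℕ → Finset (Fin (N + 1) → ℝ) := fun k =>
    ((finite_boxLevel hv k).toFinset ×ˢ Finset.univ.finsuppAntidiag (n - k)).image shift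
  have hF : coneLevel v n = ((Finset.range (n + 1)).biUnion F : Finset _) := by
    ext c
    simp only [Finset.coe_biUnion, Set.mem_iUnion, Finset.mem_coe, Finset.mem_range, F,
      Finset.mem_image, Finset.mem_product, Set.Finite.mem_toFinset, Finset.mem_finsuppAntidiag,
      Finset.subset_univ, and_true, exists_prop, Prod.exists]
    constructor
    · rintro ⟨h0, hs, hi⟩
      obtain ⟨k, -, hk⟩ := hi.exists_fract_mem_boxLevel (z := n) (by simpa using hs)
      have hdecomp : ∀ j, Int.fract (c j) + (⌊c j⌋₊ : ℝ) = c j := fun j => by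
        rw [natCast_floor_eq_intCast_floor (h0 j), Int.fract_add_floor]
      have hkn : k + ∑ j, ⌊c j⌋₊ = n := by
        have : (k : ℝ) + ∑ j, (⌊c j⌋₊ : ℝ) = n := by
          rw [← hk.2.1, ← hs, ← Finset.sum_add_distrib]
          exact Finset.sum_congr rfl fun j _ => hdecomp j
        exact_mod_cast this
      refine ⟨k, by omega, _, Finsupp.equivFunOnFinite.symm fun j => ⌊c j⌋₊, ⟨hk, ?_⟩, ?_⟩
      · simp only [Finsupp.equivFunOnFinite_symm_apply_apply]
        omega
      · ext j
        exact hdecomp j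
    · rintro ⟨k, hk, b, m, ⟨hb, hm⟩, rfl⟩
      refine ⟨fun j => add_nonneg (hb.1 j).1 (Nat.cast_nonneg _), ?_,
        hb.2.2.add (isIntegralComb_intCast fun j => (m j : ℤ))⟩
      have : (∑ j, (m j : ℝ)) = (n - k : ℕ) := by exact_mod_cast hm
      simp only [shift, Finset.sum_add_distrib, hb.2.1, this]
      push_cast [Nat.lt_succ_iff.1 hk]
      ring
  rw [hF, Set.ncard_coe_finset, Finset.card_biUnion]
  · refine Finset.sum_congr rfl fun k _ => ?_
    rw [Finset.card_image_of_injOn, Finset.card_product, ← Set.ncard_eq_toFinset_card _ (finite_boxLevel hv k),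
      Finset.card_finsuppAntidiag_nat_eq_choose, Finset.card_univ, Fintype.card_fin]
    · congr 1
      rw [← Nat.choose_symm_of_eq_add (a := N) (b := n - k) (by omega)]
      congr 1
      omega
    · rintro ⟨b, m⟩ hp ⟨b', m'⟩ hp' h
      simp only [Finset.coe_product, Set.mem_prod, Finset.mem_coe, Set.Finite.mem_toFinset]
        at hp hp'
      have hb : b = b' :=
        (hfract (p := (b, m)) hp.1).symm.trans (h ▸ hfract (p := (b', m')) hp'.1)
      subst hb
      refine Prod.ext rfl (Finsupp.ext fun j => ?_)
      have := congrFun h j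
      simpa [shift] using this
  · intro k _ k' _ hkk'
    rw [Function.onFun, Finset.disjoint_left]
    intro c hc hc'
    simp only [F, Finset.mem_image, Finset.mem_product, Set.Finite.mem_toFinset] at hc hc'
    obtain ⟨p, ⟨hp, -⟩, rfl⟩ := hc
    obtain ⟨p', ⟨hp', -⟩, h⟩ := hc'
    have hb : p.1 = p'.1 := by rw [← hfract hp, ← hfract hp', h]
    rw [← hb] at hp'
    exact hkk' (by exact_mod_cast hp.2.1.symm.trans hp'.2.1)

open PowerSeries in
lemma coeff_one_sub_X_pow (d m : ℕ) :
    coeff m ((1 - X : ℤ⟦X⟧) ^ d) = (-1) ^ m * (d.choose m : ℤ) := by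
  have h : (1 - X : ℤ⟦X⟧) ^ d = rescale (-1) (((1 + Polynomial.X) ^ d : Polynomial ℤ) : ℤ⟦X⟧) := by
    simp [sub_eq_add_neg]
  rw [h, coeff_rescale, Polynomial.coeff_coe, Polynomial.coeff_one_add_X_pow]

open PowerSeries in
/-- The `δ`-vector of a lattice simplex counts the lattice points of each height in the fundamental
parallelepiped. -/
lemma deltaVec_eq_ncard_boxLevel (hv : AffineIndependent ℝ fun j => toReal (v j)) (i : ℕ) :
    deltaVec (convexHull ℝ (Set.range fun j => toReal (v j))) N i = (boxLevel v i).ncard := by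
  set P := convexHull ℝ (Set.range fun j => toReal (v j))
  have hE : (mk fun n => (ehr P n : ℤ)) =
      (mk fun k => ((boxLevel v k).ncard : ℤ)) * mk fun n => ((N + n).choose N : ℤ) := by
    ext n
    rw [coeff_mul, Finset.Nat.sum_antidiagonal_eq_sum_range_succ_mk]
    simp only [coeff_mk]
    rw [ehr_eq_ncard_coneLevel hv, ncard_coneLevel hv]
    push_cast
    rfl
  have hH : (mk fun n => (ehr P n : ℤ)) * (1 - X) ^ (N + 1) =
      mk fun k => ((boxLevel v k).ncard : ℤ) := by
    rw [hE, mul_assoc, mk_add_choose_mul_one_sub_pow_eq_one, mul_one]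
  have hi := congrArg (coeff i) hH
  rw [coeff_mul, Finset.Nat.sum_antidiagonal_eq_sum_range_succ_mk] at hi
  simp only [coeff_mk, coeff_one_sub_X_pow] at hi
  rw [← hi, deltaVec]
  exact Finset.sum_congr rfl fun j _ => by ring

end Box

lemma toReal_injective {N : ℕ} : Function.Injective (toReal (N := N)) := fun x y h => by
  ext i
  exact Int.cast_injective (congrFun h i)

/-- A full-dimensional lattice polytope with `δ₀ = 1` and `δ₁ = 0` is a simplex. -/
lemma IsIntegralPolytope.exists_simplex {N : ℕ} {P : Set (Fin N → ℝ)}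
    (hP : IsIntegralPolytope P N) (h0 : deltaVec P N 0 = 1) (h1 : deltaVec P N 1 = 0) :
    ∃ v : Fin (N + 1) → Fin N → ℤ, AffineIndependent ℝ (fun j => toReal (v j)) ∧
      P = convexHull ℝ (Set.range fun j => toReal (v j)) := by
  obtain ⟨V, hV, hPV, hdim⟩ := hP
  have hlattice : ehr P 1 = N + 1 := by
    simp only [deltaVec, Finset.sum_range_succ, Finset.sum_range_zero] at h0 h1
    norm_num at h0 h1
    rw [h0] at h1
    zify
    push_cast at h1
    linarith
  have hrange : P = convexHull ℝ (Set.range fun z : V => toReal (z : Fin N → ℤ)) := by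
    rw [hPV]
    congr 1
    exact (Set.image_eq_range _ _).trans rfl
  have hle : V.card ≤ N + 1 := by
    rw [← hlattice, ehr, ← Set.ncard_coe_finset]
    refine Set.ncard_le_ncard (fun z hz => ?_)
      (Set.finite_of_ncard_ne_zero (by rw [← ehr, hlattice]; omega))
    simp only [Nat.cast_one, one_smul, Set.mem_ofPred_eq]
    rw [hPV]
    exact subset_convexHull ℝ _ ⟨z, hz, rfl⟩
  rw [hrange, ← direction_affineSpan, affineSpan_convexHull, direction_affineSpan] at hdim
  have hne : Nonempty V := hV.to_subtype
  have hge : N + 1 ≤ V.card := by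
    have := finrank_vectorSpan_range_add_one_le ℝ fun z : V => toReal (z : Fin N → ℤ)
    rwa [hdim, Fintype.card_coe] at this
  let e : Fin (N + 1) ≃ V := (V.equivFinOfCardEq (hle.antisymm hge)).symm
  have he : (Set.range fun j => toReal (e j : Fin N → ℤ)) =
      Set.range fun z : V => toReal (z : Fin N → ℤ) :=
    e.surjective.range_comp fun z : V => toReal (z : Fin N → ℤ)
  refine ⟨fun j => e j, ?_, by rw [he, hrange]⟩
  rw [affineIndependent_iff_finrank_vectorSpan_eq ℝ _ (by simp : Fintype.card (Fin (N + 1)) = N + 1),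
    he, hdim]

lemma fract_neg_add_self {x : ℝ} (hx : 0 ≤ x ∧ x < 1) :
    Int.fract (-x) + x = if x = 0 then 0 else 1 := by
  split_ifs with h
  · simp [h]
  · rw [Int.fract_neg (by rwa [Int.fract_eq_self.2 hx]), Int.fract_eq_self.2 hx]
    ring

/-- The heights of a box point and of its inverse add up to the size of its support. -/
lemma exists_fract_neg_mem_boxLevel {N : ℕ} {v : Fin (N + 1) → Fin N → ℤ} {k : ℕ}
    {c : Fin (N + 1) → ℝ} (hc : c ∈ boxLevel v k) :
    ∃ l ≤ N, (fun j => Int.fract (-c j)) ∈ boxLevel v l ∧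
      l + k = (Finset.univ.filter fun j => c j ≠ 0).card := by
  obtain ⟨l, hl, hmem⟩ := hc.2.2.neg.exists_fract_mem_boxLevel (z := -k) (by simp [hc.2.1])
  refine ⟨l, hl, hmem, ?_⟩
  have : (l : ℝ) + k = ((Finset.univ.filter fun j => c j ≠ 0).card : ℕ) := by
    rw [← hmem.2.1, ← hc.2.1, ← Finset.sum_add_distrib, Finset.card_filter]
    push_cast
    refine Finset.sum_congr rfl fun j _ => ?_
    rw [Pi.neg_apply, fract_neg_add_self (hc.1 j)]
    split_ifs <;> simp_all
  exact_mod_cast this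

lemma zero_of_mem_boxLevel_zero {N : ℕ} {v : Fin (N + 1) → Fin N → ℤ}
    {c : Fin (N + 1) → ℝ} (hc : c ∈ boxLevel v 0) (j : Fin (N + 1)) : c j = 0 :=
  (Finset.sum_eq_zero_iff_of_nonneg fun j _ => (hc.1 j).1).1 (by simpa using hc.2.1) j
    (Finset.mem_univ j)

lemma not_forall_ncard_boxLevel_eq_dv17 (v : Fin 8 → Fin 7 → ℤ)
    (hv : AffineIndependent ℝ fun j => toReal (v j)) :
    ¬ ∀ m ≤ 7, ((boxLevel v m).ncard : ℤ) = dv17 m := by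
  intro h
  have hempty : ∀ m ≤ 7, m ≠ 0 → m ≠ 2 → m ≠ 4 → m ≠ 5 → ∀ c, c ∉ boxLevel v m := by
    intro m hm h0 h2 h4 h5 c hc
    have := h m hm
    simp only [dv17, h0, h2, h4, h5, or_self, if_false, Nat.cast_eq_zero,
      Set.ncard_eq_zero (finite_boxLevel hv m)] at this
    simp [this] at hc
  have hsingle : ∀ m, m = 2 ∨ m = 4 ∨ m = 5 → ∃ c, boxLevel v m = {c} := by
    intro m hm
    rw [← Set.ncard_eq_one]
    have := h m (by omega)
    rw [dv17, if_pos (by omega)] at this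
    exact_mod_cast this
  obtain ⟨x, hx⟩ := hsingle 2 (by simp)
  obtain ⟨y, hy⟩ := hsingle 4 (by simp)
  obtain ⟨z, hz⟩ := hsingle 5 (by simp)
  have hymem : y ∈ boxLevel v 4 := by simp [hy]
  have hzmem : z ∈ boxLevel v 5 := by simp [hz]
  -- the inverse of `z` is `x`, and `z` has a vanishing coordinate
  obtain ⟨l, hl, hlz, hsz⟩ := exists_fract_neg_mem_boxLevel hzmem
  have hl2 : l = 2 := by
    have := hsz.le.trans (card_finset_fin_le _)
    by_contra hl2
    refine hempty l hl ?_ hl2 (by omega) (by omega) _ hlz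
    rintro rfl
    have hz0 : ∀ j, z j = 0 := fun j => by
      have h1 := zero_of_mem_boxLevel_zero hlz j
      have h2 := fract_neg_add_self (hzmem.1 j)
      beta_reduce at h1
      split_ifs at h2 with h3
      · exact h3
      · linarith [(hzmem.1 j).2]
    simp [hz0] at hsz
  subst hl2
  rw [hx] at hlz
  obtain ⟨j, hj⟩ : ∃ j, z j = 0 := by
    by_contra! hne
    simp [hne] at hsz
  have hxz : ∀ i, Int.fract (-z i) = x i := congrFun hlz
  have hxj : x j = 0 := by simp [← hxz j, hj]
  -- `y` is its own inverse and has full support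
  obtain ⟨l, hl, hly, hsy⟩ := exists_fract_neg_mem_boxLevel hymem
  have hl4 : l = 4 := by
    have := hsy.le.trans (card_finset_fin_le _)
    by_contra hl4
    by_cases hl2 : l = 2
    · subst hl2
      rw [hx] at hly
      have hyz : y = z := by
        ext i
        have h1 := (hxz i).trans (congrFun hly i).symm
        obtain ⟨t, ht⟩ := Int.fract_eq_fract.1 h1
        rw [← Int.fract_eq_self.2 (hymem.1 i), ← Int.fract_eq_self.2 (hzmem.1 i)]
        exact Int.fract_eq_fract.2 ⟨t, by linarith⟩
      have h4 := hymem.2.1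
      rw [hyz, hzmem.2.1] at h4
      norm_num at h4
    · refine hempty l hl ?_ hl2 hl4 (by omega) _ hly
      rintro rfl
      have hy0 : ∀ j, y j = 0 := fun j => by
        have h1 := zero_of_mem_boxLevel_zero hly j
        have h2 := fract_neg_add_self (hymem.1 j)
        beta_reduce at h1
        split_ifs at h2 with h3
        · exact h3
        · linarith [(hymem.1 j).2]
      simp [hy0] at hsy
  subst hl4
  have hyj : y j ≠ 0 := by
    have hsupp := Finset.eq_univ_of_card _ (hsy.symm.trans (Fintype.card_fin 8).symm)
    simpa using Finset.ext_iff.1 hsupp j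
  -- so `z + y` must be `y`
  obtain ⟨k, hk, hkmem⟩ := (hzmem.2.2.add hymem.2.2).exists_fract_mem_boxLevel (z := 9) (by
    simp only [Pi.add_apply, Finset.sum_add_distrib, hzmem.2.1, hymem.2.1]
    norm_num)
  have huj : Int.fract ((z + y) j) = y j := by
    rw [Pi.add_apply, hj, zero_add, Int.fract_eq_self.2 (hymem.1 j)]
  by_cases hk4 : k = 4
  · subst hk4
    rw [hy] at hkmem
    have hz0 : ∀ i, z i = 0 := fun i => by
      have h1 : Int.fract (z i + y i) = Int.fract (y i) :=
        (congrFun hkmem i).trans (Int.fract_eq_self.2 (hymem.1 i)).symm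
      obtain ⟨t, ht⟩ := Int.fract_eq_fract.1 h1
      rw [← Int.fract_eq_self.2 (hzmem.1 i), show z i = t by linarith, Int.fract_intCast]
    simp [hz0] at hsz
  · refine hempty k hk ?_ ?_ hk4 ?_ _ hkmem
    · rintro rfl
      exact hyj (huj.symm.trans (zero_of_mem_boxLevel_zero hkmem j))
    · rintro rfl
      rw [hx] at hkmem
      exact hyj (huj.symm.trans ((congrFun hkmem j).trans hxj))
    · rintro rfl
      rw [hz] at hkmem
      exact hyj (huj.symm.trans ((congrFun hkmem j).trans hj))

/-- The vertices of an `8`-dimensional lattice simplex of normalized volume `4`. -/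
def simplexVertex : Fin 9 → Fin 8 → ℤ :=
  ![![0, 0, 0, 0, 0, 0, 0, 0],
    ![1, 0, 0, 0, 0, 0, 0, 0],
    ![0, 1, 0, 0, 0, 0, 0, 0],
    ![0, 0, 1, 0, 0, 0, 0, 0],
    ![0, 0, 0, 1, 0, 0, 0, 0],
    ![0, 0, 0, 0, 1, 0, 0, 0],
    ![0, 0, 0, 0, 0, 1, 0, 0],
    ![0, 0, 0, 0, 0, 0, 1, 0],
    ![3, 3, 1, 2, 2, 2, 2, 4]]

/-- Four times the coordinates of the box points of `simplexVertex`. -/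
def boxNumerator : Fin 4 → Fin 9 → ℤ :=
  ![![0, 0, 0, 0, 0, 0, 0, 0, 0],
    ![2, 1, 1, 3, 2, 2, 2, 2, 1],
    ![0, 2, 2, 2, 0, 0, 0, 0, 2],
    ![2, 3, 3, 1, 2, 2, 2, 2, 3]]

lemma affineIndependent_simplexVertex :
    AffineIndependent ℝ fun j => toReal (simplexVertex j) := by
  rw [affineIndependent_iff_of_fintype]
  intro w hw h
  rw [Finset.weightedVSub_eq_linear_combination _ hw] at h
  have hi : ∀ i, ∑ j, w j * (simplexVertex j i : ℝ) = 0 := fun i => by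
    simpa [toReal, Finset.sum_apply] using congrFun h i
  simp only [Fin.forall_fin_succ, Fin.sum_univ_succ, simplexVertex] at hi hw ⊢
  simp at hi hw ⊢
  obtain ⟨h0, h1, h2, h3, h4, h5, h6, h7⟩ := hi
  simp [h7] at h0 h1 h2 h3 h4 h5 h6
  simp_all

lemma boxLevel_simplexVertex (k : ℕ) :
    boxLevel simplexVertex k =
      (fun m j => (boxNumerator m j : ℝ) / 4) '' {m | ∑ j, boxNumerator m j = 4 * k} := by
  ext c
  constructor
  · rintro ⟨hc, hs, x, hx⟩
    have ha : ∃ a : Fin 9 → ℤ, ∀ j, c j = a j / 4 := by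
      refine ⟨![4 * k - (4 * (x 0 + x 1 + x 2 + x 3 + x 4 + x 5 + x 6) - 14 * x 7),
        4 * x 0 - 3 * x 7, 4 * x 1 - 3 * x 7, 4 * x 2 - x 7, 4 * x 3 - 2 * x 7,
        4 * x 4 - 2 * x 7, 4 * x 5 - 2 * x 7, 4 * x 6 - 2 * x 7, x 7], ?_⟩
      simp only [Fin.forall_fin_succ, Fin.sum_univ_succ, simplexVertex] at hx hs ⊢
      simp at hx hs ⊢
      refine ⟨?_, ?_, ?_, ?_, ?_, ?_, ?_, ?_, ?_⟩ <;> linarith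
    obtain ⟨a, ha⟩ := ha
    have hb : ∀ j, 0 ≤ a j ∧ a j < 4 := fun j => by
      obtain ⟨h0, h1⟩ := hc j
      rw [ha j] at h0 h1
      constructor
      · exact_mod_cast (by linarith : (0 : ℝ) ≤ a j)
      · exact_mod_cast (by linarith : (a j : ℝ) < 4)
    have hs' : ∑ j, a j = 4 * k := by
      simp only [ha, ← Finset.sum_div] at hs
      exact_mod_cast (by linarith : ∑ j, (a j : ℝ) = 4 * k)
    have hx' : ∀ i, ∑ j, a j * simplexVertex j i = 4 * x i := fun i => by
      have := hx i
      simp only [ha, div_mul_eq_mul_div, ← Finset.sum_div] at this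
      exact_mod_cast (by linarith : ∑ j, (a j : ℝ) * (simplexVertex j i : ℝ) = 4 * x i)
    suffices h : ∃ m, a = boxNumerator m by
      obtain ⟨m, rfl⟩ := h
      exact ⟨m, hs', funext fun j => (ha j).symm⟩
    simp only [funext_iff, Fin.forall_fin_succ, Fin.sum_univ_succ, simplexVertex] at hx' hs' hb ⊢
    simp at hx' hs' hb ⊢
    obtain h | h | h | h : a 8 = 0 ∨ a 8 = 1 ∨ a 8 = 2 ∨ a 8 = 3 := by omega
    · refine ⟨0, ?_⟩
      simp [boxNumerator]
      omega
    · refine ⟨1, ?_⟩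
      simp [boxNumerator]
      omega
    · refine ⟨2, ?_⟩
      simp [boxNumerator]
      omega
    · refine ⟨3, ?_⟩
      simp [boxNumerator]
      omega
  · rintro ⟨m, hm, rfl⟩
    refine ⟨fun j => ?_, ?_, ?_⟩
    · have h : ∀ m j, 0 ≤ boxNumerator m j ∧ boxNumerator m j < 4 := by decide
      have h0 : (0 : ℝ) ≤ boxNumerator m j := by exact_mod_cast (h m j).1
      have h4 : (boxNumerator m j : ℝ) < 4 := by exact_mod_cast (h m j).2
      constructor <;> linarith
    · have h : ∑ j, (boxNumerator m j : ℝ) = 4 * k := by exact_mod_cast hm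
      rw [← Finset.sum_div, h]
      ring
    · have h : ∀ m i, (4 : ℤ) ∣ ∑ j, boxNumerator m j * simplexVertex j i := by decide
      choose x hx using h m
      refine ⟨x, fun i => ?_⟩
      have hi : ∑ j, (boxNumerator m j : ℝ) * (simplexVertex j i : ℝ) = 4 * x i := by
        exact_mod_cast hx i
      simp only [div_mul_eq_mul_div]
      rw [← Finset.sum_div, hi]
      ring

lemma ncard_boxLevel_simplexVertex {k : ℕ} (hk : k ≤ 8) :
    ((boxLevel simplexVertex k).ncard : ℤ) = dv17 k := by
  rw [boxLevel_simplexVertex, Set.ncard_image_of_injective]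
  · rw [Set.ncard_eq_toFinset_card']
    interval_cases k <;> decide
  · intro m m' h
    have h8 : boxNumerator m 8 = boxNumerator m' 8 := by
      have := congrFun h 8
      simp only at this
      exact_mod_cast (div_left_inj' (by norm_num : (4 : ℝ) ≠ 0)).1 this
    revert h8
    clear h
    revert m m'
    decide

theorem stmt17 :
    -- the sequence satisfies Stanley's inequalities (with s = 5)
    (∀ i ≤ 5 / 2, ∑ j ∈ Finset.range (i + 1), dv17 j ≤
      ∑ j ∈ Finset.range (i + 1), dv17 (5 - j)) ∧
    -- the sequence satisfies Hibi's inequalities (with d = 7)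
    (∀ i, 1 ≤ i → i ≤ (7 - 1) / 2 →
      ∑ j ∈ Finset.range i, dv17 (7 - 1 - j) ≤ ∑ j ∈ Finset.range i, dv17 (2 + j)) ∧
    -- yet (1,0,1,0,1,1,0,0) is not the δ-vector of a 7-dimensional integral polytope
    (¬ ∃ P : Set (Fin 7 → ℝ), IsIntegralPolytope P 7 ∧
        ∀ m ≤ 7, deltaVec P 7 m = dv17 m) ∧
    -- while (1,0,1,0,1,1,0,0,0) is the δ-vector of an 8-dimensional integral polytope
    (∃ P : Set (Fin 8 → ℝ), IsIntegralPolytope P 8 ∧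
        ∀ m ≤ 8, deltaVec P 8 m = dv17 m) := by
  refine ⟨by decide, by decide, ?_, ?_⟩
  · rintro ⟨P, hP, hδ⟩
    obtain ⟨v, hv, rfl⟩ := hP.exists_simplex (hδ 0 (by omega)) (hδ 1 (by omega))
    refine not_forall_ncard_boxLevel_eq_dv17 v hv fun m hm => ?_
    rw [← deltaVec_eq_ncard_boxLevel hv, hδ m hm]
  · have hv := affineIndependent_simplexVertex
    refine ⟨_, ⟨Finset.univ.image simplexVertex, by simp, rfl, ?_⟩, fun m hm => ?_⟩
    · rw [← direction_affineSpan, affineSpan_convexHull, direction_affineSpan, Finset.coe_image,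
        Finset.coe_univ, Set.image_univ, ← Set.range_comp]
      exact hv.finrank_vectorSpan (by simp)
    · rw [Finset.coe_image, Finset.coe_univ, Set.image_univ, ← Set.range_comp]
      exact (deltaVec_eq_ncard_boxLevel hv m).trans (ncard_boxLevel_simplexVertex hm)
end

section
/- There is no integral simplex $\mathcal{P} \subset \mathbb{R}^2$ of dimension 2 whose $\delta$-vector is $(1,3,1)$, although there exists an integral (non-simplex) polygon with this $\delta$-vector. -/
open Set Pointwise

/-- The elements of `L` with nonnegative coordinates and coordinate sum `n`. -/
def nonnegSlice (L : AddSubgroup (Fin 3 → ℝ)) (n : ℝ) : Set (Fin 3 → ℝ) :=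
  {c | c ∈ L ∧ (∀ i, 0 ≤ c i) ∧ ∑ i, c i = n}

/-- The elements of `L` in the half-open unit cube with coordinate sum `n`. -/
def cubeSlice (L : AddSubgroup (Fin 3 → ℝ)) (n : ℝ) : Set (Fin 3 → ℝ) :=
  {c | c ∈ L ∧ (∀ i, 0 ≤ c i ∧ c i < 1) ∧ ∑ i, c i = n}

lemma eq_single_of_mem_nonnegSlice {L : AddSubgroup (Fin 3 → ℝ)} {c : Fin 3 → ℝ}
    (hc : c ∈ nonnegSlice L 1) {i : Fin 3} (hi : 1 ≤ c i) : c = Pi.single i 1 := by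
  obtain ⟨-, h0, hs⟩ := hc
  rw [Fin.sum_univ_three] at hs
  have h00 := h0 0
  have h01 := h0 1
  have h02 := h0 2
  ext j
  fin_cases i <;> fin_cases j <;> simp at hi ⊢ <;> linarith

lemma single_mem_nonnegSlice {L : AddSubgroup (Fin 3 → ℝ)}
    (he : ∀ i, Pi.single i (1 : ℝ) ∈ L) (i : Fin 3) :
    Pi.single i (1 : ℝ) ∈ nonnegSlice L 1 := by
  refine ⟨he i, fun j => ?_, by simp⟩
  by_cases h : j = i
  · subst h; simp
  · simp [h]

lemma cubeSlice_one_eq {L : AddSubgroup (Fin 3 → ℝ)} :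
    cubeSlice L 1 = nonnegSlice L 1 \ range fun i => Pi.single i (1 : ℝ) := by
  ext c
  constructor
  · rintro ⟨hL, h, hs⟩
    refine ⟨⟨hL, fun i => (h i).1, hs⟩, ?_⟩
    rintro ⟨i, rfl⟩
    simpa using (h i).2
  · rintro ⟨hc, hr⟩
    refine ⟨hc.1, fun i => ⟨hc.2.1 i, ?_⟩, hc.2.2⟩
    by_contra! h
    exact hr ⟨i, (eq_single_of_mem_nonnegSlice hc h).symm⟩

lemma ncard_cubeSlice_one {L : AddSubgroup (Fin 3 → ℝ)}
    (he : ∀ i, Pi.single i (1 : ℝ) ∈ L) :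
    (cubeSlice L 1).ncard = (nonnegSlice L 1).ncard - 3 := by
  rw [cubeSlice_one_eq, ncard_sdiff, ← image_univ, ncard_image_of_injective, ncard_univ]
  · simp
  · intro i j h
    by_contra hij
    have := congrFun h i
    simp [hij] at this
  · rintro _ ⟨i, rfl⟩
    exact single_mem_nonnegSlice he i

lemma nonnegSlice_two_eq {L : AddSubgroup (Fin 3 → ℝ)}
    (he : ∀ i, Pi.single i (1 : ℝ) ∈ L) :
    nonnegSlice L 2 =
      (fun c => c + Pi.single 0 1) '' nonnegSlice L 1 ∪
      (fun c => c + Pi.single 1 1) '' (nonnegSlice L 1 \ {Pi.single 0 1}) ∪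
      (fun c => c + Pi.single 2 1) '' (nonnegSlice L 1 \ {Pi.single 0 1, Pi.single 1 1}) ∪
      cubeSlice L 2 := by
  have hadd : ∀ i, ∀ c ∈ nonnegSlice L 1, c + Pi.single i 1 ∈ nonnegSlice L 2 := by
    rintro i c ⟨hL, h0, hs⟩
    refine ⟨L.add_mem hL (he i), fun j => ?_, ?_⟩
    · exact add_nonneg (h0 j) ((single_mem_nonnegSlice he i).2.1 j)
    · simp only [Pi.add_apply, Finset.sum_add_distrib, hs]
      simp
      norm_num
  have hsub : ∀ i, ∀ c ∈ nonnegSlice L 2, 1 ≤ c i → c - Pi.single i 1 ∈ nonnegSlice L 1 := by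
    rintro i c ⟨hL, h0, hs⟩ hi
    refine ⟨L.sub_mem hL (he i), fun j => ?_, ?_⟩
    · by_cases h : j = i
      · subst h; simpa using hi
      · simpa [h] using h0 j
    · simp only [Pi.sub_apply, Finset.sum_sub_distrib, hs]
      simp
      norm_num
  ext c
  constructor
  · intro hc
    by_cases h0 : 1 ≤ c 0
    · exact .inl (.inl (.inl ⟨_, hsub 0 c hc h0, by simp⟩))
    by_cases h1 : 1 ≤ c 1
    · refine .inl (.inl (.inr ⟨_, ⟨hsub 1 c hc h1, ?_⟩, by simp⟩))
      intro h
      have := congrFun h 0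
      simp at this
      exact h0 this.ge
    by_cases h2 : 1 ≤ c 2
    · refine .inl (.inr ⟨_, ⟨hsub 2 c hc h2, ?_⟩, by simp⟩)
      rintro (h | h)
      · have := congrFun h 0
        simp at this
        exact h0 this.ge
      · have := congrFun h 1
        simp at this
        exact h1 this.ge
    · refine .inr ⟨hc.1, fun i => ⟨hc.2.1 i, ?_⟩, hc.2.2⟩
      push Not at h0 h1 h2
      fin_cases i <;> assumption
  · rintro (((⟨c, hc, rfl⟩ | ⟨c, hc, rfl⟩) | ⟨c, hc, rfl⟩) | hc)
    · exact hadd _ c hc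
    · exact hadd _ c hc.1
    · exact hadd _ c hc.1
    · exact ⟨hc.1, fun i => (hc.2.1 i).1, hc.2.2⟩

lemma ncard_nonnegSlice_two {L : AddSubgroup (Fin 3 → ℝ)}
    (he : ∀ i, Pi.single i (1 : ℝ) ∈ L) (hfin : (nonnegSlice L 2).Finite) :
    (nonnegSlice L 2).ncard = (nonnegSlice L 1).ncard + ((nonnegSlice L 1).ncard - 1) +
      ((nonnegSlice L 1).ncard - 2) + (cubeSlice L 2).ncard := by
  have heq := nonnegSlice_two_eq he
  have hf := hfin
  rw [heq] at hf
  have hinj : ∀ i : Fin 3,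
      Function.Injective (fun c : Fin 3 → ℝ => c + Pi.single i 1) :=
    fun i => add_left_injective _
  have hlt : ∀ i, ∀ c ∈ nonnegSlice L 1, c ∉ ({Pi.single i 1} : Set (Fin 3 → ℝ)) → c i < 1 := by
    intro i c hc h
    by_contra! hi
    exact h (eq_single_of_mem_nonnegSlice hc hi)
  rw [finite_union, finite_union, finite_union] at hf
  obtain ⟨⟨⟨f0, f1⟩, f2⟩, f3⟩ := hf
  rw [heq, ncard_union_eq _ ((f0.union f1).union f2) f3, ncard_union_eq _ (f0.union f1) f2,
    ncard_union_eq _ f0 f1]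
  · simp only [ncard_image_of_injective _ (hinj _)]
    rw [ncard_sdiff, ncard_sdiff, ncard_singleton, ncard_pair]
    · intro h
      have := congrFun h 0
      simp at this
    · rintro c (rfl | rfl) <;> exact single_mem_nonnegSlice he _
    · rintro c rfl
      exact single_mem_nonnegSlice he _
  · rw [Set.disjoint_left]
    rintro _ ⟨c, hc, rfl⟩ ⟨d, ⟨hd, hd0⟩, h⟩
    have h1 := hlt 0 d hd hd0
    have h2 := hc.2.1 0
    have h3 := congrFun h 0
    simp at h3
    linarith
  · rw [Set.disjoint_left]
    rintro _ (⟨c, hc, rfl⟩ | ⟨c, hc, rfl⟩) ⟨d, ⟨hd, hd0⟩, h⟩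
    · have h1 := hlt 0 d hd (fun h => hd0 (.inl h))
      have h2 := hc.2.1 0
      have h3 := congrFun h 0
      simp at h3
      linarith
    · have h1 := hlt 1 d hd (fun h => hd0 (.inr h))
      have h2 := hc.1.2.1 1
      have h3 := congrFun h 1
      simp at h3
      linarith
  · rw [Set.disjoint_left]
    rintro _ ((⟨c, hc, rfl⟩ | ⟨c, ⟨hc, -⟩, rfl⟩) | ⟨c, ⟨hc, -⟩, rfl⟩) ⟨-, h, -⟩
    · have h1 := (h 0).2
      have h2 := hc.2.1 0
      simp at h1
      linarith
    · have h1 := (h 1).2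
      have h2 := hc.2.1 1
      simp at h1
      linarith
    · have h1 := (h 2).2
      have h2 := hc.2.1 2
      simp at h1
      linarith

/-- Coordinatewise reduction modulo `ℤ`. -/
noncomputable def reduceModOne : (Fin 3 → ℝ) →+ (Fin 3 → AddCircle (1 : ℝ)) where
  toFun c i := (c i : AddCircle (1 : ℝ))
  map_zero' := by ext; simp
  map_add' _ _ := by ext; simp

lemma injOn_reduceModOne :
    InjOn reduceModOne {c | ∀ i, 0 ≤ c i ∧ c i < 1} := by
  intro c hc d hd h
  ext i
  have := congrFun h i
  have hp : Fact (0 < (1 : ℝ)) := ⟨one_pos⟩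
  exact (AddCircle.coe_eq_coe_iff_of_mem_Ico (a := 0) (p := (1 : ℝ))
    (by simpa using hc i) (by simpa using hd i)).1 this

lemma fract_mem {L : AddSubgroup (Fin 3 → ℝ)}
    (he : ∀ i, Pi.single i (1 : ℝ) ∈ L) {c : Fin 3 → ℝ} (hc : c ∈ L) :
    (fun i => Int.fract (c i)) ∈ L := by
  have : (fun i => Int.fract (c i)) = c - ∑ i, ⌊c i⌋ • Pi.single i (1 : ℝ) := by
    ext j
    simp [Finset.sum_apply, Pi.single_apply]
  rw [this]
  exact L.sub_mem hc (L.sum_mem fun i _ => L.zsmul_mem (he i) _)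

lemma map_reduceModOne_eq {L : AddSubgroup (Fin 3 → ℝ)}
    (hS : ∀ c ∈ L, ∃ n : ℤ, ∑ i, c i = n) (he : ∀ i, Pi.single i (1 : ℝ) ∈ L) :
    (L.map reduceModOne : Set (Fin 3 → AddCircle (1 : ℝ))) =
      reduceModOne '' ({0} ∪ cubeSlice L 1 ∪ cubeSlice L 2) := by
  apply Subset.antisymm
  · rintro _ ⟨c, hc, rfl⟩
    refine ⟨fun i => Int.fract (c i), ?_, ?_⟩
    · have hf := fract_mem he hc
      have h0 : ∀ i, 0 ≤ Int.fract (c i) ∧ Int.fract (c i) < 1 :=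
        fun i => ⟨Int.fract_nonneg _, Int.fract_lt_one _⟩
      obtain ⟨n, hn⟩ := hS _ hf
      have hn' := hn
      rw [Fin.sum_univ_three] at hn
      have h00 := h0 0
      have h01 := h0 1
      have h02 := h0 2
      have hn0 : (-1 : ℤ) < n := by
        have : ((-1 : ℤ) : ℝ) < n := by push_cast; linarith
        exact_mod_cast this
      have hn3 : n < 3 := by
        have : (n : ℝ) < (3 : ℤ) := by push_cast; linarith
        exact_mod_cast this
      interval_cases n
      · refine .inl (.inl ?_)
        simp only [Int.cast_zero] at hn
        ext i
        fin_cases i <;> simp <;> linarith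
      · exact .inl (.inr ⟨hf, h0, by simpa using hn'⟩)
      · exact .inr ⟨hf, h0, by simpa using hn'⟩
    · ext i
      change ((Int.fract (c i) : ℝ) : AddCircle (1 : ℝ)) = (c i : AddCircle (1 : ℝ))
      refine QuotientAddGroup.eq.2 (AddSubgroup.mem_zmultiples_iff.2 ⟨⌊c i⌋, ?_⟩)
      simp only [zsmul_eq_mul, mul_one]
      linarith [Int.fract_add_floor (c i)]
  · rintro _ ⟨c, (rfl | hc) | hc, rfl⟩
    · exact ⟨0, L.zero_mem, rfl⟩
    · exact ⟨c, hc.1, rfl⟩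
    · exact ⟨c, hc.1, rfl⟩

lemma not_ncard_cubeSlice {L : AddSubgroup (Fin 3 → ℝ)}
    (hS : ∀ c ∈ L, ∃ n : ℤ, ∑ i, c i = n) (he : ∀ i, Pi.single i (1 : ℝ) ∈ L)
    (h1 : (cubeSlice L 1).ncard = 3) (h2 : (cubeSlice L 2).ncard = 1) : False := by
  have f1 : (cubeSlice L 1).Finite := finite_of_ncard_pos (by omega)
  have f2 : (cubeSlice L 2).Finite := finite_of_ncard_pos (by omega)
  have hcard : Nat.card (L.map reduceModOne) = 5 := by
    rw [← SetLike.coe_sort_coe, Nat.card_coe_set_eq, map_reduceModOne_eq hS he,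
      InjOn.ncard_image, ncard_union_eq _ ((finite_singleton _).union f1) f2,
      ncard_union_eq _ (finite_singleton _) f1, h1, h2, ncard_singleton]
    · rw [Set.disjoint_left]
      rintro c rfl ⟨-, -, h⟩
      simp at h
    · rw [Set.disjoint_left]
      rintro c (rfl | ⟨-, -, h⟩) ⟨-, -, h'⟩
      · simp at h'
      · rw [h] at h'; norm_num at h'
    · refine injOn_reduceModOne.mono ?_
      rintro c ((rfl | hc) | hc)
      · simp
      · exact hc.2.1
      · exact hc.2.1
  obtain ⟨a, ha, i, hai⟩ : ∃ a ∈ cubeSlice L 1, ∃ i, a i = 0 := by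
    by_contra! h
    have : (cubeSlice L 1).ncard ≤ (cubeSlice L 2).ncard := by
      refine ncard_le_ncard_of_injOn (fun c => 1 - c) ?_ (sub_right_injective.injOn) f2
      intro c hc
      have hone : (1 : Fin 3 → ℝ) ∈ L := by
        rw [← Finset.univ_sum_single (1 : Fin 3 → ℝ)]
        exact L.sum_mem fun i _ => he i
      refine ⟨L.sub_mem hone hc.1, fun i => ?_, ?_⟩
      · have := h c hc i
        have h0 := lt_of_le_of_ne (hc.2.1 i).1 this.symm
        have := (hc.2.1 i).2
        simp only [Pi.sub_apply, Pi.one_apply]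
        constructor <;> linarith
      · simp only [Pi.sub_apply, Pi.one_apply, Finset.sum_sub_distrib, hc.2.2]
        simp
        norm_num
    omega
  obtain ⟨q, hq⟩ := nonempty_of_ncard_ne_zero (s := cubeSlice L 2) (by omega)
  have hqi : 0 < q i := by
    have hs := hq.2.2
    rw [Fin.sum_univ_three] at hs
    have h0 := (hq.2.1 0).2
    have h1 := (hq.2.1 1).2
    have h2 := (hq.2.1 2).2
    fin_cases i <;> simp <;> linarith
  have zmem : (0 : Fin 3 → ℝ) ∈ {c : Fin 3 → ℝ | ∀ i, 0 ≤ c i ∧ c i < 1} := by simp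
  let K : AddSubgroup (Fin 3 → AddCircle (1 : ℝ)) :=
    L.map reduceModOne ⊓ (Pi.evalAddMonoidHom (fun _ : Fin 3 => AddCircle (1 : ℝ)) i).ker
  have hdvd : Nat.card K ∣ 5 := hcard ▸ AddSubgroup.card_dvd_of_le inf_le_left
  have haK : reduceModOne a ∈ K := by
    refine ⟨⟨a, ha.1, rfl⟩, ?_⟩
    change ((a i : ℝ) : AddCircle (1 : ℝ)) = 0
    simp [hai]
  rcases (Nat.dvd_prime (by norm_num)).1 hdvd with hK | hK
  · have hbot := AddSubgroup.card_eq_one.1 hK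
    rw [hbot, AddSubgroup.mem_bot, ← map_zero reduceModOne] at haK
    have := injOn_reduceModOne ha.2.1 zmem haK
    have hs := ha.2.2
    simp [this] at hs
  · have hfin : Finite (L.map reduceModOne) := Nat.finite_of_card_ne_zero (by omega)
    have heq : K = L.map reduceModOne :=
      AddSubgroup.eq_of_le_of_card_ge inf_le_left (by omega)
    have hqK : reduceModOne q ∈ K := heq ▸ ⟨q, hq.1, rfl⟩
    have h0 : ((q i : ℝ) : AddCircle (1 : ℝ)) = ((0 : ℝ) : AddCircle (1 : ℝ)) := hqK.2
    have hp : Fact (0 < (1 : ℝ)) := ⟨one_pos⟩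
    have := (AddCircle.coe_eq_coe_iff_of_mem_Ico (a := 0) (p := (1 : ℝ))
      (by simpa using hq.2.1 i) (by simp)).1 h0
    linarith

/-- The lattice of coefficient vectors whose sum and whose combination of the points `v i`
are integral. -/
def coeffLattice (v : Fin 3 → Fin 2 → ℤ) : AddSubgroup (Fin 3 → ℝ) where
  carrier := {c | (∃ n : ℤ, ∑ i, c i = n) ∧
    ∃ x : Fin 2 → ℤ, ∑ i, c i • (fun j => (v i j : ℝ)) = fun j => (x j : ℝ)}
  zero_mem' := ⟨⟨0, by simp⟩, 0, by ext; simp⟩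
  add_mem' := by
    rintro c d ⟨⟨n, hn⟩, x, hx⟩ ⟨⟨m, hm⟩, y, hy⟩
    refine ⟨⟨n + m, by simp [Finset.sum_add_distrib, hn, hm]⟩, x + y, ?_⟩
    simp only [Pi.add_apply, add_smul, Finset.sum_add_distrib, hx, hy]
    ext; simp
  neg_mem' := by
    rintro c ⟨⟨n, hn⟩, x, hx⟩
    refine ⟨⟨-n, by simp [hn]⟩, -x, ?_⟩
    simp only [Pi.neg_apply, neg_smul, Finset.sum_neg_distrib, hx]
    ext; simp

lemma single_mem_coeffLattice (v : Fin 3 → Fin 2 → ℤ) (i : Fin 3) :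
    Pi.single i (1 : ℝ) ∈ coeffLattice v := by
  refine ⟨⟨1, by simp⟩, v i, ?_⟩
  simp [Pi.single_apply, ite_smul]

lemma ncard_nonnegSlice_coeffLattice {v : Fin 3 → Fin 2 → ℤ}
    (hv : AffineIndependent ℝ (fun p i => (v p i : ℝ))) {n : ℕ} (hn : n ≠ 0) :
    (nonnegSlice (coeffLattice v) n).ncard =
      ehr (convexHull ℝ (range fun p i => (v p i : ℝ))) n := by
  have hn0 : (0 : ℝ) < n := by positivity
  have hcast : Function.Injective (fun (x : Fin 2 → ℤ) (j : Fin 2) => (x j : ℝ)) := by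
    intro x y h
    ext j
    have := congrFun h j
    exact Int.cast_injective this
  rw [ehr, ← ncard_image_of_injective _ hcast]
  have hinj : InjOn (fun c : Fin 3 → ℝ => ∑ i, c i • (fun j => (v i j : ℝ)))
      (nonnegSlice (coeffLattice v) n) := by
    intro c hc d hd h
    have := affineIndependent_iff.1 hv Finset.univ (c - d)
      (by simp [Finset.sum_sub_distrib, hc.2.2, hd.2.2])
      (by
        simp only [Pi.sub_apply, sub_smul, Finset.sum_sub_distrib]
        exact sub_eq_zero.2 h)
    ext i
    exact sub_eq_zero.1 (this i (Finset.mem_univ i))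
  rw [← hinj.ncard_image]
  congr 1
  apply Subset.antisymm
  · rintro _ ⟨c, ⟨⟨-, x, hx⟩, h0, hs⟩, rfl⟩
    refine ⟨x, ?_, hx.symm⟩
    rw [mem_ofPred_eq, ← hx]
    refine ⟨∑ i, (c i / n) • (fun j => (v i j : ℝ)), ?_, ?_⟩
    · refine (convex_convexHull ℝ _).sum_mem (fun i _ => div_nonneg (h0 i) hn0.le) ?_
        fun i _ => subset_convexHull ℝ _ ⟨i, rfl⟩
      rw [← Finset.sum_div, hs, div_self hn0.ne']
    · simp only [Finset.smul_sum, smul_smul]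
      congr! 2 with i
      field_simp
  · rintro _ ⟨x, ⟨y, hy, hyx⟩, rfl⟩
    have hle : convexHull ℝ (range fun p i => (v p i : ℝ)) ⊆
        Fintype.linearCombination ℝ (fun p i => (v p i : ℝ)) '' stdSimplex ℝ (Fin 3) := by
      refine convexHull_min ?_ ((convex_stdSimplex ℝ _).linear_image _)
      rintro _ ⟨p, rfl⟩
      exact ⟨Pi.single p 1, single_mem_stdSimplex ℝ p, by simp⟩
    obtain ⟨r, ⟨hr0, hr1⟩, rfl⟩ := hle hy
    have hsum : ∑ i, ((n : ℝ) • r) i = n := by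
      simp [← Finset.mul_sum, hr1]
    have hcomb : ∑ i, ((n : ℝ) • r) i • (fun j => (v i j : ℝ)) = fun j => (x j : ℝ) := by
      rw [← hyx]
      simp [Fintype.linearCombination_apply, Finset.smul_sum, smul_smul]
    exact ⟨(n : ℝ) • r, ⟨⟨⟨n, by simpa using hsum⟩, x, hcomb⟩,
      fun i => mul_nonneg hn0.le (hr0 i), hsum⟩, hcomb⟩

/-- The origin and the five boundary lattice points of a lattice quadrilateral around it. -/
def sixPoints : Finset (Fin 2 → ℤ) :=
  {![0, 0], ![-1, 1], ![0, 1], ![1, 1], ![1, 0], ![0, -1]}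

/-- The real points of `sixPoints`. -/
def sixPointsReal : Set (Fin 2 → ℝ) :=
  (fun (v : Fin 2 → ℤ) (i : Fin 2) => (v i : ℝ)) '' (sixPoints : Set (Fin 2 → ℤ))

lemma mem_convexHull_sixPoints_le {y : Fin 2 → ℝ} (hy : y ∈ convexHull ℝ sixPointsReal) :
    y 1 ≤ 1 ∧ y 0 ≤ 1 ∧ y 0 - y 1 ≤ 1 ∧ -1 ≤ 2 * y 0 + y 1 := by
  have hconv : Convex ℝ {y : Fin 2 → ℝ |
      y 1 ≤ 1 ∧ y 0 ≤ 1 ∧ y 0 - y 1 ≤ 1 ∧ -1 ≤ 2 * y 0 + y 1} := by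
    rintro x ⟨h1, h2, h3, h4⟩ y ⟨k1, k2, k3, k4⟩ a b ha hb hab
    simp only [mem_ofPred_eq, Pi.add_apply, Pi.smul_apply, smul_eq_mul]
    obtain rfl : b = 1 - a := by linarith
    refine ⟨?_, ?_, ?_, ?_⟩ <;> nlinarith
  refine convexHull_min ?_ hconv hy
  rintro _ ⟨v, hv, rfl⟩
  simp only [sixPoints, Finset.coe_insert, Finset.coe_singleton, mem_insert_iff,
    mem_singleton_iff] at hv
  rcases hv with rfl | rfl | rfl | rfl | rfl | rfl <;> norm_num

lemma ehr_sixPoints_one : ehr (convexHull ℝ sixPointsReal) 1 = 6 := by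
  have : {x : Fin 2 → ℤ | (fun i => (x i : ℝ)) ∈ ((1 : ℕ) : ℝ) • convexHull ℝ sixPointsReal} =
      (sixPoints : Set (Fin 2 → ℤ)) := by
    ext x
    rw [mem_ofPred_eq, Nat.cast_one, one_smul]
    constructor
    · intro h
      obtain ⟨h1, h2, h3, h4⟩ := mem_convexHull_sixPoints_le h
      norm_cast at h1 h2 h3 h4
      have hx : x = ![x 0, x 1] := by ext i; fin_cases i <;> rfl
      generalize x 0 = a at *
      generalize x 1 = b at *
      subst hx
      have : -1 ≤ a := by omega
      have : -1 ≤ b := by omega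
      rw [Finset.mem_coe]
      interval_cases a <;> interval_cases b <;> first | omega | decide
    · intro h
      exact subset_convexHull ℝ _ ⟨x, h, rfl⟩
  rw [ehr, this, ncard_coe_finset]
  decide

lemma ehr_sixPoints_two : ehr (convexHull ℝ sixPointsReal) 2 = 16 := by
  have : {x : Fin 2 → ℤ | (fun i => (x i : ℝ)) ∈ ((2 : ℕ) : ℝ) • convexHull ℝ sixPointsReal} =
      ((sixPoints + sixPoints : Finset (Fin 2 → ℤ)) : Set (Fin 2 → ℤ)) := by
    ext x
    constructor
    · rintro ⟨y, hy, hyx⟩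
      obtain ⟨h1, h2, h3, h4⟩ := mem_convexHull_sixPoints_le hy
      have e0 : 2 * y 0 = x 0 := by simpa using congrFun hyx 0
      have e1 : 2 * y 1 = x 1 := by simpa using congrFun hyx 1
      replace h1 : (x 1 : ℝ) ≤ 2 := by linarith
      replace h2 : (x 0 : ℝ) ≤ 2 := by linarith
      replace h3 : (x 0 : ℝ) - x 1 ≤ 2 := by linarith
      replace h4 : -2 ≤ 2 * (x 0 : ℝ) + x 1 := by linarith
      clear e0 e1 hyx
      norm_cast at h1 h2 h3 h4
      have hx : x = ![x 0, x 1] := by ext i; fin_cases i <;> rfl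
      generalize x 0 = a at *
      generalize x 1 = b at *
      subst hx
      have : -2 ≤ a := by omega
      have : -2 ≤ b := by omega
      rw [Finset.mem_coe]
      interval_cases a <;> interval_cases b <;> first | omega | decide
    · intro h
      obtain ⟨p, hp, q, hq, rfl⟩ := Finset.mem_add.1 (Finset.mem_coe.1 h)
      have hp' : (fun i => (p i : ℝ)) ∈ convexHull ℝ sixPointsReal :=
        subset_convexHull ℝ _ ⟨p, hp, rfl⟩
      have hq' : (fun i => (q i : ℝ)) ∈ convexHull ℝ sixPointsReal :=
        subset_convexHull ℝ _ ⟨q, hq, rfl⟩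
      refine ⟨_, convex_convexHull ℝ _ hp' hq' (a := 1 / 2) (b := 1 / 2)
        (by norm_num) (by norm_num) (by norm_num), ?_⟩
      ext i
      simp
      ring
  rw [ehr, this, ncard_coe_finset]
  decide

lemma ehr_zero {N : ℕ} {P : Set (Fin N → ℝ)} (hP : P.Nonempty) : ehr P 0 = 1 := by
  rw [ehr, Nat.cast_zero, zero_smul_set hP, ncard_eq_one]
  refine ⟨0, ?_⟩
  ext x
  simp [funext_iff]

lemma finrank_vectorSpan_sixPoints :
    Module.finrank ℝ (vectorSpan ℝ (convexHull ℝ sixPointsReal)) = 2 := by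
  have hmem : ∀ v ∈ sixPoints,
      (fun i => (v i : ℝ)) ∈ vectorSpan ℝ (convexHull ℝ sixPointsReal) := by
    intro v hv
    have h := vsub_mem_vectorSpan ℝ
      (subset_convexHull ℝ sixPointsReal ⟨v, hv, rfl⟩)
      (subset_convexHull ℝ sixPointsReal ⟨![0, 0], by simp [sixPoints], rfl⟩)
    convert h using 1
    ext i
    fin_cases i <;> simp
  have htop : vectorSpan ℝ (convexHull ℝ sixPointsReal) = ⊤ := by
    rw [eq_top_iff]
    intro y _
    have h := Submodule.add_mem _
      (Submodule.smul_mem _ (y 0) (hmem ![1, 0] (by decide)))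
      (Submodule.smul_mem _ (y 1) (hmem ![0, 1] (by decide)))
    convert h using 1
    ext i
    fin_cases i <;> simp
  rw [htop, finrank_top]
  simp

lemma deltaVec_two_one {N : ℕ} {P : Set (Fin N → ℝ)} (hP : P.Nonempty) :
    deltaVec P 2 1 = ehr P 1 - 3 := by
  simp [deltaVec, Finset.sum_range_succ, ehr_zero hP]
  ring

lemma deltaVec_two_two {N : ℕ} {P : Set (Fin N → ℝ)} (hP : P.Nonempty) :
    deltaVec P 2 2 = ehr P 2 - 3 * ehr P 1 + 3 := by
  simp [deltaVec, Finset.sum_range_succ, ehr_zero hP]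
  ring

theorem stmt19 :
    -- no integral triangle in ℝ² has δ-vector (1,3,1)
    (¬ ∃ v : Fin 3 → Fin 2 → ℤ,
        AffineIndependent ℝ (fun p i => (v p i : ℝ)) ∧
        ∀ m ≤ 2, deltaVec (convexHull ℝ (Set.range fun p i => ((v p i : ℝ)))) 2 m =
          (if m = 0 then 1 else if m = 1 then 3 else 1)) ∧
    -- but some 2-dimensional integral polytope does
    (∃ P : Set (Fin 2 → ℝ), IsIntegralPolytope P 2 ∧
        ∀ m ≤ 2, deltaVec P 2 m =
          (if m = 0 then 1 else if m = 1 then 3 else 1)) := by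
  constructor
  · rintro ⟨v, hv, h⟩
    have hne : (convexHull ℝ (range fun p i => (v p i : ℝ))).Nonempty :=
      (range_nonempty _).convexHull
    have h1 := h 1 (by norm_num)
    have h2 := h 2 (by norm_num)
    rw [deltaVec_two_one hne] at h1
    rw [deltaVec_two_two hne] at h2
    norm_num at h1 h2
    have n1 := ncard_nonnegSlice_coeffLattice hv one_ne_zero
    have n2 := ncard_nonnegSlice_coeffLattice hv two_ne_zero
    rw [Nat.cast_one] at n1
    rw [Nat.cast_ofNat] at n2
    have he := single_mem_coeffLattice v
    have c1 := ncard_cubeSlice_one he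
    have c2 := ncard_nonnegSlice_two he (finite_of_ncard_pos (by omega))
    exact not_ncard_cubeSlice (L := coeffLattice v) (fun c hc => hc.1) he (by omega) (by omega)
  · have hne : (convexHull ℝ sixPointsReal).Nonempty :=
      Nonempty.convexHull ⟨_, ![0, 0], by simp [sixPoints], rfl⟩
    refine ⟨convexHull ℝ sixPointsReal,
      ⟨sixPoints, ⟨![0, 0], by decide⟩, rfl, finrank_vectorSpan_sixPoints⟩, ?_⟩
    intro m hm
    interval_cases m
    · simp [deltaVec, ehr_zero hne]
    · rw [deltaVec_two_one hne, ehr_sixPoints_one]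
      norm_num
    · rw [deltaVec_two_two hne, ehr_sixPoints_one, ehr_sixPoints_two]
      norm_num
end
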